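/- Let d ≥ 2, κ > 0, μ > 0, and let b : [0,∞) → ℝ be smooth with b(0) > 0, satisfying κ y b''(y) + b'(y) + (μ − κ y) b(y) = 0 for y > 0, and such that b and all its derivatives are rapidly decreasing. Let ψ ∈ C_c^∞(ℝ^{d−1}) be supported in {η : 0 < c₀ ≤ |η| ≤ c₁}, and let q > 2, r ≥ 2 with 1/q = ((d−1)/2)(1/2 − 1/r). Then there is C > 0, depending only on d, κ, μ, b, ψ, q, r, such that for every j ≥ 0 and every φ₀ ∈ 𝒮(ℝ^{d−1}), the gallery wave solution u(t, x_d, x′) = (2π)^{1−d} ∫ e^{i x′·ξ′} b(|ξ′| x_d) cos(t μ^{1/2}|ξ′|^{1/2}) ψ(2^{−2j}ξ′) φ̂₀(ξ′) dξ′ of (∂_t² − κ x_d Δ − ∂_d)u = 0 with data (u(0), ∂_t u(0)) = (u₀, 0) satisfies ‖u‖_{L^q([0,1]; L^r(Ω))} ≤ C (2^{2j})^{((3d+1)/4)(1/2 − 1/r) + 1/(2κ) − 1} ‖(0, ∇_x u₀)‖_ℋ, where u₀(x) = (2π)^{1−d} ∫ e^{i x′·ξ′} b(|ξ′| x_d)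 ψ(2^{−2j}ξ′) φ̂₀(ξ′) dξ′. -/

import Mathlib

open Real MeasureTheory
open scoped RealInnerProductSpace

noncomputable section

/-- The Fourier transform `φ̂(ξ) = ∫ e^{−ix·ξ} φ(x) dx`. -/
def fhat {n : ℕ} (φ : EuclideanSpace ℝ (Fin n) → ℂ)
    (ξ : EuclideanSpace ℝ (Fin n)) : ℂ :=
  ∫ x : EuclideanSpace ℝ (Fin n), Complex.exp (-Complex.I * (⟪x, ξ⟫ : ℝ)) * φ x

/-- The gallery wave
`u(t,x_d,x′) = (2π)^{1−d}∫ e^{ix′·ξ} b(|ξ|x_d) cos(tμ^{1/2}|ξ|^{1/2}) ψ(2^{−2j}ξ) φ̂₀(ξ) dξ`. -/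
def gw (d : ℕ) (μ : ℝ) (b : ℝ → ℝ) (ψ : EuclideanSpace ℝ (Fin (d - 1)) → ℝ)
    (j : ℕ) (φ₀ : EuclideanSpace ℝ (Fin (d - 1)) → ℂ)
    (t xd : ℝ) (x' : EuclideanSpace ℝ (Fin (d - 1))) : ℂ :=
  (((2 * π) ^ ((1 : ℤ) - (d : ℤ)) : ℝ) : ℂ) *
    ∫ ξ : EuclideanSpace ℝ (Fin (d - 1)),
      Complex.exp (Complex.I * (⟪x', ξ⟫ : ℝ)) * (b (‖ξ‖ * xd) : ℂ) *
        (Real.cos (t * Real.sqrt μ * Real.sqrt ‖ξ‖) : ℂ) *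
        (ψ (((2 : ℝ) ^ (2 * j))⁻¹ • ξ) : ℂ) * fhat φ₀ ξ

/-- Squared norm `∑ᵢ |∂ᵢ u₀|² + |∂_{x_d} u₀|²` of the spatial gradient. -/
def gradSq (d : ℕ) (u₀ : ℝ → EuclideanSpace ℝ (Fin (d - 1)) → ℂ)
    (xd : ℝ) (x' : EuclideanSpace ℝ (Fin (d - 1))) : ℝ :=
  (∑ i : Fin (d - 1),
      ‖fderiv ℝ (fun y => u₀ xd y) x' (EuclideanSpace.single i 1)‖ ^ 2)
    + ‖deriv (fun s => u₀ s x') xd‖ ^ 2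

open FourierTransform SchwartzMap in
theorem fInv_ae {n : ℕ} (f : EuclideanSpace ℝ (Fin n) → ℂ) (h1 : Integrable f) (h2 : MemLp f 2 volume) :
    (fun x => (𝓕⁻ f) x) =ᵐ[volume] ((𝓕⁻ (h2.toLp f) : Lp ℂ 2 volume) : EuclideanSpace ℝ (Fin n) → ℂ) := by
  have hc : Continuous (fun p : EuclideanSpace ℝ (Fin n) × EuclideanSpace ℝ (Fin n) =>
      (-innerₗ (EuclideanSpace ℝ (Fin n))) p.1 p.2) := by
    have := (continuous_inner (𝕜 := ℝ) (E := EuclideanSpace ℝ (Fin n))).neg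
    exact this
  have hF : (fun x => (𝓕⁻ f) x) = VectorFourier.fourierIntegral Real.fourierChar volume
      (-innerₗ (EuclideanSpace ℝ (Fin n))) f := by
    ext x
    rw [Real.fourierInv_eq]
    simp [VectorFourier.fourierIntegral]
  have hL : ∀ g : 𝓢(EuclideanSpace ℝ (Fin n), ℂ), ∫ x, g x • (𝓕⁻ f) x = ∫ x, (𝓕⁻ g) x • f x := by
    intro g
    have := VectorFourier.integral_fourierIntegral_smul_eq_flip (μ := volume) (ν := volume)
      (L := -innerₗ (EuclideanSpace ℝ (Fin n)))
      Real.continuous_fourierChar hc h1 g.integrable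
    rw [← hF] at this
    simp only [smul_eq_mul] at this ⊢
    simp_rw [mul_comm (g _)]
    rw [this]
    congr 1; ext x
    rw [mul_comm, SchwartzMap.fourierInv_coe, Real.fourierInv_eq]
    simp [VectorFourier.fourierIntegral, real_inner_comm]
  have hcont : Continuous (fun x => (𝓕⁻ f) x) := by
    rw [hF]
    exact VectorFourier.fourierIntegral_continuous Real.continuous_fourierChar hc h1
  refine ae_eq_of_integral_contDiff_smul_eq hcont.locallyIntegrable
    ((Lp.memLp _).locallyIntegrable (by norm_num)) ?_
  intro g hg hgc
  have a1 : HasCompactSupport (fun x => (g x : ℂ)) := hgc.comp_left (g := fun x : ℝ => (x:ℂ)) (by simp)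
  have a2 : ContDiff ℝ (⊤ : ℕ∞) (fun x => (g x : ℂ)) := Complex.ofRealCLM.contDiff.comp hg
  let g' : 𝓢(EuclideanSpace ℝ (Fin n), ℂ) := HasCompactSupport.toSchwartzMap a1 a2
  have e1 := hL g'
  have e2 := congrArg (fun T => T g') (Lp.fourierInv_toTemperedDistribution_eq (h2.toLp f))
  simp only [TemperedDistribution.fourierInv_apply, Lp.toTemperedDistribution_apply] at e2
  have e3 : ∫ x, (𝓕⁻ g') x • f x = ∫ x, (𝓕⁻ g') x • (h2.toLp f) x := by
    apply integral_congr_ae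
    filter_upwards [h2.coeFn_toLp] with x hx
    rw [hx]
  rw [← e3, ← e1] at e2
  exact e2

theorem planch {n : ℕ} (f : EuclideanSpace ℝ (Fin n) → ℂ) (h1 : Integrable f) (h2 : MemLp f 2 volume) :
    ∫⁻ x : EuclideanSpace ℝ (Fin n), ‖∫ ξ, Complex.exp (Complex.I * (⟪x, ξ⟫ : ℝ)) * f ξ‖ₑ ^ 2
      = ENNReal.ofReal ((2 * π) ^ n) * ∫⁻ ξ, ‖f ξ‖ₑ ^ 2 := by
  have key : ∫⁻ x, ‖FourierTransformInv.fourierInv f x‖ₑ ^ 2 = ∫⁻ ξ, ‖f ξ‖ₑ ^ 2 := by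
    have hn : ‖(FourierTransformInv.fourierInv (h2.toLp f) : Lp ℂ 2 volume)‖ₑ = ‖h2.toLp f‖ₑ := by
      have : ‖(FourierTransformInv.fourierInv (h2.toLp f) : Lp ℂ 2 volume)‖ = ‖h2.toLp f‖ :=
        (Lp.fourierTransformₗᵢ (EuclideanSpace ℝ (Fin n)) ℂ).symm.norm_map _
      simp only [enorm, nnnorm, this]
    have sq : ∀ g : Lp ℂ 2 (volume : Measure (EuclideanSpace ℝ (Fin n))), ∫⁻ x, ‖g x‖ₑ ^ 2 = ‖g‖ₑ ^ 2 := by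
      intro g
      rw [Lp.enorm_def, eLpNorm_eq_lintegral_rpow_enorm_toReal (by norm_num) (by norm_num)]
      rw [← ENNReal.rpow_natCast (n := 2), ← ENNReal.rpow_mul]
      norm_num
    calc _ = ∫⁻ x, ‖(FourierTransformInv.fourierInv (h2.toLp f) : Lp ℂ 2 volume) x‖ₑ ^ 2 := by
          apply lintegral_congr_ae
          filter_upwards [fInv_ae f h1 h2] with x hx
          rw [hx]
      _ = ∫⁻ x, ‖h2.toLp f x‖ₑ ^ 2 := by rw [sq, sq, hn]
      _ = _ := by
          apply lintegral_congr_ae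
          filter_upwards [h2.coeFn_toLp] with x hx
          rw [hx]
  have e : ∀ x : EuclideanSpace ℝ (Fin n), ∫ ξ, Complex.exp (Complex.I * (⟪x, ξ⟫ : ℝ)) * f ξ =
      FourierTransformInv.fourierInv f ((2 * π)⁻¹ • x) := by
    intro x
    rw [Real.fourierInv_eq]
    congr 1; ext ξ
    rw [Circle.smul_def, Real.fourierChar_apply, smul_eq_mul, inner_smul_right, real_inner_comm]
    congr 2
    push_cast
    have : (π : ℂ) ≠ 0 := by exact_mod_cast Real.pi_ne_zero
    field_simp
  simp_rw [e]
  have hne : (2 * π)⁻¹ ≠ 0 := by positivity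
  have := (Homeomorph.smulOfNeZero _ hne).measurableEmbedding.lintegral_map (μ := (volume : Measure (EuclideanSpace ℝ (Fin n)))) (fun x => ‖FourierTransformInv.fourierInv f x‖ₑ ^ 2)
  simp only [Homeomorph.smulOfNeZero_apply] at this
  rw [← this]
  have h3 := Measure.map_addHaar_smul (volume : Measure (EuclideanSpace ℝ (Fin n))) hne
  rw [h3, lintegral_smul_measure, key]
  congr 2
  rw [abs_of_pos (by positivity)]
  simp only [finrank_euclideanSpace, Fintype.card_fin, inv_pow, inv_inv]

theorem lint_abs (f : ℝ → ENNReal) (t : ℝ) :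
    ∫⁻ s, f |t - s| = 2 * ∫⁻ s in Set.Ioi 0, f s := by
  rw [lintegral_sub_left_eq_self (fun s => f |s|) t]
  rw [← lintegral_add_compl _ (measurableSet_Ioi (a := (0:ℝ))), two_mul]
  congr 1
  · apply setLIntegral_congr_fun measurableSet_Ioi
    intro x hx
    simp only [abs_of_pos (Set.mem_Ioi.1 hx)]
  · have : ∫⁻ s in Set.Ioi 0, f s = ∫⁻ s in Set.Ioi 0, f (- (- s)) := by simp
    rw [this, Set.compl_Ioi, setLIntegral_congr (Iio_ae_eq_Iic (a := (0:ℝ))).symm]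
    have h := (Measure.measurePreserving_neg (volume : Measure ℝ)).setLIntegral_comp_preimage_emb
      (Homeomorph.neg ℝ).measurableEmbedding (fun s => f (-s)) (Set.Iio 0)
    have h2 : (fun x : ℝ => -x) ⁻¹' (Set.Iio 0) = Set.Ioi 0 := by ext; simp
    have h3 : (Neg.neg : ℝ → ℝ) ⁻¹' (Set.Iio 0) = Set.Ioi 0 := by ext; simp
    rw [h3] at h
    rw [h]
    apply setLIntegral_congr_fun measurableSet_Iio
    intro x hx
    simp only [abs_of_neg (Set.mem_Iio.1 hx)]

theorem hls_inner {α : ℝ} (h0 : 0 < α) (h1 : α < 1) (g : ℝ → ℝ) (hg : Measurable g) (hg0 : ∀ t, 0 ≤ g t)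
    (S : ℝ) (hS : 0 < S) (hgS : ∫⁻ t, ENNReal.ofReal (g t ^ (2 / (2 - α))) ≤ ENNReal.ofReal S) (t : ℝ) :
    ∫⁻ s, (if g s ≤ g t then ENNReal.ofReal (|t - s| ^ (-α) * g s) else 0) ≤
      ENNReal.ofReal ((2 / (1 - α) + 2) * S ^ (1 - α) * g t ^ (α / (2 - α))) := by
  set a := g t with ha
  have h2a : 0 < 2 - α := by linarith
  rcases (hg0 t).eq_or_lt with hz | hpos
  · rw [← ha] at hz
    rw [← hz, Real.zero_rpow (by positivity)]
    simp only [mul_zero, ENNReal.ofReal_zero, nonpos_iff_eq_zero]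
    refine (lintegral_congr (g := fun _ => 0) fun s => ?_).trans lintegral_zero
    split_ifs with h
    · have : g s = 0 := le_antisymm h (hg0 s)
      simp [this]
    · rfl
  rw [← ha] at hpos
  set p := 2 / (2 - α) with hp
  set R := S * a ^ (-p) with hR
  have hRp : 0 < R := by positivity
  set k1 : ℝ → ENNReal := fun x => (Set.Ioo 0 R).indicator (fun x => ENNReal.ofReal (x ^ (-α))) x with hk1
  set k2 : ℝ → ENNReal := fun x => (Set.Ici R).indicator (fun x => ENNReal.ofReal (x ^ (-α))) x with hk2
  have mk1 : Measurable k1 := Measurable.indicator (by fun_prop) measurableSet_Ioo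
  have mk2 : Measurable k2 := Measurable.indicator (by fun_prop) measurableSet_Ici
  have hb : ∀ s, (if g s ≤ a then ENNReal.ofReal (|t - s| ^ (-α) * g s) else 0) ≤
      k1 |t - s| * ENNReal.ofReal a + k2 |t - s| * ENNReal.ofReal (g s) := by
    intro s
    split_ifs with h
    · rcases (abs_nonneg (t - s)).eq_or_lt with h' | h'
      · rw [← h', Real.zero_rpow (by linarith)]; simp
      · rw [ENNReal.ofReal_mul (by positivity)]
        by_cases hR' : |t - s| < R
        · refine le_trans ?_ le_self_add
          rw [hk1]; dsimp only
          rw [Set.indicator_of_mem (Set.mem_Ioo.2 ⟨h', hR'⟩)]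
          gcongr
        · refine le_trans ?_ le_add_self
          rw [hk2]; dsimp only
          rw [Set.indicator_of_mem (by simpa using hR')]
    · exact zero_le
  have i1 : ∫⁻ s, k1 |t - s| = ENNReal.ofReal (2 / (1 - α) * R ^ (1 - α)) := by
    rw [lint_abs]
    have : ∫⁻ s in Set.Ioi 0, k1 s = ∫⁻ s in Set.Ioo 0 R, ENNReal.ofReal (s ^ (-α)) := by
      rw [hk1, setLIntegral_indicator measurableSet_Ioo]
      congr 2
      ext x; simp; tauto
    rw [this, ← ofReal_integral_eq_lintegral_ofReal, ← integral_Ioc_eq_integral_Ioo,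
      ← intervalIntegral.integral_of_le hRp.le, integral_rpow (Or.inl (by linarith)),
      Real.zero_rpow (by linarith)]
    · rw [show (2 : ENNReal) = ENNReal.ofReal 2 by simp, ← ENNReal.ofReal_mul (by norm_num)]
      congr 1
      rw [show -α + 1 = 1 - α by ring]; ring
    · have := (intervalIntegral.intervalIntegrable_rpow' (a := 0) (b := R) (r := -α) (by linarith))
      rw [intervalIntegrable_iff_integrableOn_Ioo_of_le hRp.le] at this
      exact this
    · filter_upwards [ae_restrict_mem measurableSet_Ioo] with x hx
      exact Real.rpow_nonneg hx.1.le _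
  have i2 : ∫⁻ s, k2 |t - s| ^ (2 / α) = ENNReal.ofReal (2 * R ^ (-1:ℝ)) := by
    rw [lint_abs (fun x => k2 x ^ (2 / α))]
    have : ∫⁻ s in Set.Ioi 0, k2 s ^ (2 / α) = ∫⁻ s in Set.Ioi R, ENNReal.ofReal (s ^ (-2:ℝ)) := by
      have e : (fun s => k2 s ^ (2/α)) = (Set.Ici R).indicator (fun s => ENNReal.ofReal (s ^ (-2:ℝ))) := by
        ext s
        rw [hk2]; dsimp only
        by_cases hs : s ∈ Set.Ici R
        · rw [Set.indicator_of_mem hs, Set.indicator_of_mem hs]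
          have hs0 : 0 < s := lt_of_lt_of_le hRp hs
          rw [ENNReal.ofReal_rpow_of_pos (by positivity), ← Real.rpow_mul hs0.le]
          congr 2; field_simp
        · rw [Set.indicator_of_notMem hs, Set.indicator_of_notMem hs, ENNReal.zero_rpow_of_pos (by positivity)]
      rw [e, setLIntegral_indicator measurableSet_Ici, setLIntegral_congr (Ioi_ae_eq_Ici (a := R))]
      congr 2
      ext x; simp; intro h; linarith
    rw [this, ← ofReal_integral_eq_lintegral_ofReal, integral_Ioi_rpow_of_lt (by norm_num) hRp]
    · rw [show (2 : ENNReal) = ENNReal.ofReal 2 by simp, ← ENNReal.ofReal_mul (by norm_num)]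
      congr 1
      norm_num
    · exact integrableOn_Ioi_rpow_of_lt (by norm_num) hRp
    · filter_upwards [ae_restrict_mem measurableSet_Ioi] with x hx
      exact Real.rpow_nonneg (hRp.le.trans (Set.mem_Ioi.1 hx).le) _
  have hconj : (2 / α).HolderConjugate p := by
    rw [Real.holderConjugate_iff]
    constructor
    · rw [lt_div_iff₀ h0]; linarith
    · rw [hp]; field_simp; ring
  have i3 : ∫⁻ s, k2 |t - s| * ENNReal.ofReal (g s) ≤
      ENNReal.ofReal ((2 * R ^ (-1:ℝ)) ^ (α / 2) * S ^ (1/p)) := by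
    refine (ENNReal.lintegral_mul_le_Lp_mul_Lq volume hconj (by fun_prop) (by fun_prop)).trans ?_
    rw [i2, ENNReal.ofReal_mul (q := S ^ (1/p)) (by positivity)]
    rw [← ENNReal.ofReal_rpow_of_pos (x := 2 * R ^ (-1:ℝ)) (by positivity), ← ENNReal.ofReal_rpow_of_pos hS, one_div_div]
    gcongr
    refine le_trans (le_of_eq ?_) hgS
    congr 1; ext s
    rw [ENNReal.ofReal_rpow_of_nonneg (hg0 s) (by positivity)]
  calc _ ≤ ∫⁻ s, (k1 |t - s| * ENNReal.ofReal a + k2 |t - s| * ENNReal.ofReal (g s)) := lintegral_mono hb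
    _ = (∫⁻ s, k1 |t - s|) * ENNReal.ofReal a + ∫⁻ s, k2 |t - s| * ENNReal.ofReal (g s) := by
      rw [lintegral_add_left (by fun_prop), lintegral_mul_const _ (by fun_prop)]
    _ ≤ ENNReal.ofReal (2 / (1 - α) * R ^ (1 - α)) * ENNReal.ofReal a +
        ENNReal.ofReal ((2 * R ^ (-1:ℝ)) ^ (α / 2) * S ^ (1/p)) := by
      rw [i1]; gcongr
    _ ≤ _ := by
      have : 0 < 1 - α := by linarith
      rw [← ENNReal.ofReal_mul (by positivity), ← ENNReal.ofReal_add (by positivity) (by positivity)]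
      apply ENNReal.ofReal_le_ofReal
      have e1 : R ^ (1 - α) * a = S ^ (1 - α) * a ^ (α / (2 - α)) := by
        rw [hR, Real.mul_rpow hS.le (by positivity), ← Real.rpow_mul hpos.le, mul_assoc]
        nth_rewrite 2 [← Real.rpow_one a]
        rw [← Real.rpow_add hpos]
        congr 2
        rw [hp]; field_simp; ring
      have e2 : (R ^ (-1:ℝ)) ^ (α / 2) * S ^ (1/p) = S ^ (1 - α) * a ^ (α / (2 - α)) := by
        rw [hR, ← Real.rpow_mul (by positivity), Real.mul_rpow hS.le (by positivity), ← Real.rpow_mul hpos.le,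
          mul_right_comm, ← Real.rpow_add hS]
        congr 2
        · rw [hp]; field_simp; ring
        · rw [hp]; field_simp
      have e3 : (2:ℝ) ^ (α / 2) ≤ 2 := by
        calc (2:ℝ) ^ (α / 2) ≤ 2 ^ (1:ℝ) := Real.rpow_le_rpow_of_exponent_le (by norm_num) (by linarith)
          _ = 2 := by simp
      rw [Real.mul_rpow (x := 2) (y := R ^ (-1:ℝ)) (by norm_num) (by positivity), mul_assoc (2 ^ (α/2)), e2, mul_assoc (2 / (1 - α)), e1]
      have : 0 ≤ S ^ (1 - α) * a ^ (α / (2 - α)) := by positivity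
      nlinarith

theorem hls {α : ℝ} (h0 : 0 < α) (h1 : α < 1) (g : ℝ → ℝ) (hg : Measurable g) (hg0 : ∀ t, 0 ≤ g t)
    (S : ℝ) (hS : 0 < S) (hgS : ∫⁻ t, ENNReal.ofReal (g t ^ (2 / (2 - α))) ≤ ENNReal.ofReal S) :
    ∫⁻ t, ∫⁻ s, ENNReal.ofReal (|t - s| ^ (-α) * g s * g t) ≤
      ENNReal.ofReal (2 * (2 / (1 - α) + 2) * S ^ (2 - α)) := by
  set c := (2 / (1 - α) + 2) with hc
  have h1a : 0 < 1 - α := by linarith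
  have h2a : 0 < 2 - α := by linarith
  have hc0 : 0 < c := by positivity
  set J : ℝ → ℝ → ENNReal := fun t s => (if g s ≤ g t then ENNReal.ofReal (|t - s| ^ (-α) * g s) else 0) * ENNReal.ofReal (g t) with hJ
  have mJ : Measurable (Function.uncurry J) := by
    rw [hJ]
    apply Measurable.mul _ (by fun_prop)
    refine Measurable.ite ?_ (by fun_prop) measurable_const
    exact measurableSet_le (by fun_prop) (by fun_prop)
  have hJi : ∫⁻ t, ∫⁻ s, J t s ≤ ENNReal.ofReal (c * S ^ (2 - α)) := by
    calc _ ≤ ∫⁻ t, ENNReal.ofReal (c * S ^ (1 - α)) * ENNReal.ofReal (g t ^ (2 / (2 - α))) := by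
          apply lintegral_mono; intro t
          dsimp only
          rw [hJ]; dsimp only
          rw [lintegral_mul_const']
          · refine (mul_le_mul_left (hls_inner h0 h1 g hg hg0 S hS hgS t) _).trans ?_
            rw [← ENNReal.ofReal_mul (by have := hg0 t; positivity), ← ENNReal.ofReal_mul (by positivity)]
            apply ENNReal.ofReal_le_ofReal
            apply le_of_eq
            rw [mul_assoc]; congr 1
            rcases (hg0 t).eq_or_lt with h | h
            · rw [← h, Real.zero_rpow (by positivity), Real.zero_rpow (by positivity)]; simp
            · nth_rewrite 2 [← Real.rpow_one (g t)]
              rw [← Real.rpow_add h]; congr 1; field_simp; ring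
          · exact ENNReal.ofReal_ne_top
      _ ≤ ENNReal.ofReal (c * S ^ (1 - α)) * ENNReal.ofReal S := by
          rw [lintegral_const_mul' _ _ ENNReal.ofReal_ne_top]; gcongr
      _ = _ := by
          rw [← ENNReal.ofReal_mul (by positivity), mul_assoc]
          nth_rewrite 2 [← Real.rpow_one S]
          rw [← Real.rpow_add hS]; congr 3; ring
  calc _ ≤ ∫⁻ t, ∫⁻ s, (J t s + J s t) := by
        apply lintegral_mono; intro t
        apply lintegral_mono; intro s
        dsimp only
        rw [hJ]; dsimp only
        have n1 := hg0 s
        have n2 := hg0 t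
        rcases le_total (g s) (g t) with h | h
        · refine le_trans ?_ le_self_add
          rw [if_pos h, ENNReal.ofReal_mul (by positivity)]
        · refine le_trans ?_ le_add_self
          rw [if_pos h, ← ENNReal.ofReal_mul (by positivity), abs_sub_comm]
          apply le_of_eq; congr 1; ring
    _ = (∫⁻ t, ∫⁻ s, J t s) + ∫⁻ t, ∫⁻ s, J s t := by
        rw [← lintegral_add_left]
        · congr 1; ext t
          exact lintegral_add_left (mJ.comp measurable_prodMk_left) _
        · exact mJ.lintegral_prod_right'
    _ = (∫⁻ t, ∫⁻ s, J t s) + ∫⁻ t, ∫⁻ s, J t s := by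
        congr 1
        rw [lintegral_lintegral_swap]
        exact (mJ.comp measurable_swap).aemeasurable
    _ ≤ ENNReal.ofReal (c * S ^ (2 - α)) + ENNReal.ofReal (c * S ^ (2 - α)) := by gcongr
    _ = _ := by
        rw [← ENNReal.ofReal_add (by positivity) (by positivity)]; congr 1; ring

lemma marc_level {X : Type*} [MeasurableSpace X] (m : Measure X) {r : ℝ} (hr : 2 < r)
    (h w : X → ℝ) (hwm : Measurable w) (hw0 : ∀ x, 0 ≤ w x)
    (A B S : ℝ) (hA : 0 < A) (hS : 0 < S)
    (hwS : ∫⁻ x, ENNReal.ofReal (w x ^ (r/(r-1))) ∂m ≤ ENNReal.ofReal S)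
    (H : ∀ a : ℝ, 0 < a → ∃ h₂ : X → ENNReal, Measurable h₂ ∧
      (∀ x, ENNReal.ofReal (h x) ≤
        ENNReal.ofReal A * ∫⁻ y in {y | a < w y}, ENNReal.ofReal (w y) ∂m + h₂ x) ∧
      ∫⁻ x, h₂ x ^ 2 ∂m ≤ ENNReal.ofReal B * ∫⁻ y in {y | w y ≤ a}, ENNReal.ofReal (w y ^ 2) ∂m)
    (τ : ℝ) (hτ : 0 < τ) :
    m {x | τ < h x} ≤ ENNReal.ofReal (4 * τ ^ (-2 : ℝ)) * (ENNReal.ofReal B *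
      ∫⁻ y in {y | w y ≤ (2*A*S/τ)^(r-1)}, ENNReal.ofReal (w y ^ 2) ∂m) := by
  set a := (2*A*S/τ)^(r-1) with ha
  have hb : 0 < 2*A*S/τ := by positivity
  have ha0 : 0 < a := by positivity
  obtain ⟨h₂, hm, h1, h2⟩ := H a ha0
  have e1 : ∫⁻ y in {y | a < w y}, ENNReal.ofReal (w y) ∂m ≤
      ENNReal.ofReal (τ/(2*A*S)) * ENNReal.ofReal S := by
    calc _ ≤ ∫⁻ y in {y | a < w y}, ENNReal.ofReal (τ/(2*A*S)) * ENNReal.ofReal (w y ^ (r/(r-1))) ∂m := by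
          apply setLIntegral_mono' (measurableSet_lt measurable_const hwm)
          intro y hy
          rw [← ENNReal.ofReal_mul (by positivity)]
          apply ENNReal.ofReal_le_ofReal
          have hy0 : 0 < w y := ha0.trans hy
          have : r/(r-1) = 1/(r-1) + 1 := by
            have : r - 1 ≠ 0 := by linarith
            field_simp; ring
          rw [this, rpow_add hy0, rpow_one, ← mul_assoc]
          have h3 : 2*A*S/τ ≤ w y ^ (1/(r-1)) := by
            have h4 : 2*A*S/τ = a ^ (1/(r-1)) := by
              rw [ha, ← rpow_mul hb.le, mul_one_div_cancel (by linarith), rpow_one]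
            rw [h4]
            exact rpow_le_rpow ha0.le (le_of_lt hy) (by apply div_nonneg <;> linarith)
          have h5 : 1 ≤ τ/(2*A*S) * w y ^ (1/(r-1)) := by
            calc 1 = τ/(2*A*S) * (2*A*S/τ) := by field_simp
              _ ≤ _ := by gcongr
          nlinarith
      _ ≤ ∫⁻ y, ENNReal.ofReal (τ/(2*A*S)) * ENNReal.ofReal (w y ^ (r/(r-1))) ∂m :=
          setLIntegral_le_lintegral _ _
      _ = ENNReal.ofReal (τ/(2*A*S)) * ∫⁻ y, ENNReal.ofReal (w y ^ (r/(r-1))) ∂m := by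
          rw [lintegral_const_mul]
          exact (hwm.pow_const _).ennreal_ofReal
      _ ≤ _ := by gcongr
  have e2 : ENNReal.ofReal A * ∫⁻ y in {y | a < w y}, ENNReal.ofReal (w y) ∂m ≤ ENNReal.ofReal (τ/2) := by
    calc _ ≤ ENNReal.ofReal A * (ENNReal.ofReal (τ/(2*A*S)) * ENNReal.ofReal S) := by gcongr
      _ = ENNReal.ofReal (τ/2) := by
        rw [← ENNReal.ofReal_mul (by positivity), ← ENNReal.ofReal_mul (by positivity)]
        congr 1; field_simp
  have e3 : m {x | τ < h x} ≤ m {x | ENNReal.ofReal ((τ/2)^2) ≤ h₂ x ^ 2} := by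
    apply measure_mono
    intro x hx
    simp only [Set.mem_ofPred_eq] at hx ⊢
    have h3 := (h1 x).trans (add_le_add_left e2 _)
    have h4 : ENNReal.ofReal τ ≤ ENNReal.ofReal (τ/2) + h₂ x :=
      (ENNReal.ofReal_le_ofReal hx.le).trans h3
    have h5 : ENNReal.ofReal (τ/2) ≤ h₂ x := by
      have : ENNReal.ofReal τ = ENNReal.ofReal (τ/2) + ENNReal.ofReal (τ/2) := by
        rw [← ENNReal.ofReal_add (by positivity) (by positivity)]; congr 1; ring
      rw [this] at h4
      exact (ENNReal.add_le_add_iff_left ENNReal.ofReal_ne_top).1 h4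
    rw [ENNReal.ofReal_pow (by positivity)]
    gcongr
  refine e3.trans ?_
  refine (meas_ge_le_lintegral_div (hm.pow_const 2).aemeasurable (by simp; positivity) ENNReal.ofReal_ne_top).trans ?_
  rw [ENNReal.div_eq_inv_mul, ← ENNReal.ofReal_inv_of_pos (by positivity)]
  have : ((τ/2)^2)⁻¹ = 4 * τ^(-2:ℝ) := by
    rw [rpow_neg hτ.le]; norm_num; field_simp; norm_num
  rw [this]
  gcongr

lemma marc {X : Type*} [MeasurableSpace X] (m : Measure X) [SFinite m] {r : ℝ} (hr : 2 < r)
    (h w : X → ℝ) (hhm : Measurable h) (hh0 : ∀ x, 0 ≤ h x) (hwm : Measurable w) (hw0 : ∀ x, 0 ≤ w x)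
    (A B S : ℝ) (hA : 0 < A) (hB : 0 ≤ B) (hS : 0 < S)
    (hwS : ∫⁻ x, ENNReal.ofReal (w x ^ (r/(r-1))) ∂m ≤ ENNReal.ofReal S)
    (H : ∀ a : ℝ, 0 < a → ∃ h₂ : X → ENNReal, Measurable h₂ ∧
      (∀ x, ENNReal.ofReal (h x) ≤
        ENNReal.ofReal A * ∫⁻ y in {y | a < w y}, ENNReal.ofReal (w y) ∂m + h₂ x) ∧
      ∫⁻ x, h₂ x ^ 2 ∂m ≤ ENNReal.ofReal B * ∫⁻ y in {y | w y ≤ a}, ENNReal.ofReal (w y ^ 2) ∂m) :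
    ∫⁻ x, ENNReal.ofReal (h x ^ r) ∂m ≤
      ENNReal.ofReal (4*r/(r-2) * B * (2*A)^(r-2) * S^(r-1)) := by
  rw [lintegral_rpow_eq_lintegral_meas_lt_mul m (Filter.Eventually.of_forall hh0) hhm.aemeasurable (by linarith)]
  have hr2 : 0 < r - 2 := by linarith
  have hr1 : 0 < r - 1 := by linarith
  have s1 : ∫⁻ τ in Set.Ioi (0:ℝ), m {x | τ < h x} * ENNReal.ofReal (τ^(r-1)) ≤
      ∫⁻ τ in Set.Ioi (0:ℝ), ∫⁻ y, ENNReal.ofReal (4*B) * (ENNReal.ofReal (τ^(r-3)) *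
        ({y | w y ≤ (2*A*S/τ)^(r-1)}.indicator (fun y => ENNReal.ofReal (w y ^ 2)) y)) ∂m := by
    apply setLIntegral_mono' measurableSet_Ioi
    intro τ hτ
    have hτ : 0 < τ := hτ
    calc _ ≤ _ := mul_le_mul_left (marc_level m hr h w hwm hw0 A B S hA hS hwS H τ hτ) _
      _ = _ := by
        rw [lintegral_const_mul', lintegral_const_mul', lintegral_indicator (measurableSet_le hwm measurable_const)]
        · rw [ENNReal.ofReal_mul (by norm_num), ENNReal.ofReal_mul (by norm_num)]
          have : τ^(r-3) = τ^(-2:ℝ) * τ^(r-1) := by rw [← rpow_add hτ]; congr 1; ring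
          rw [this, ENNReal.ofReal_mul (by positivity)]
          ring
        · exact ENNReal.ofReal_ne_top
        · exact ENNReal.ofReal_ne_top
  have s2 : ∀ y, ∫⁻ τ in Set.Ioi (0:ℝ), ENNReal.ofReal (4*B) * (ENNReal.ofReal (τ^(r-3)) *
        ({y | w y ≤ (2*A*S/τ)^(r-1)}.indicator (fun y => ENNReal.ofReal (w y ^ 2)) y)) ≤
        ENNReal.ofReal (4*B* (2*A*S)^(r-2)/(r-2)) * ENNReal.ofReal (w y ^ (r/(r-1))) := by
    intro y
    rcases (hw0 y).eq_or_lt with hy | hy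
    · have : ∀ τ : ℝ, ({y | w y ≤ (2*A*S/τ)^(r-1)}.indicator (fun y => ENNReal.ofReal (w y ^ 2)) y) = 0 := by
        intro τ; simp [Set.indicator, ← hy]
      simp [this]
    · set T := 2*A*S * w y ^ (-(1/(r-1))) with hT
      have hT0 : 0 < T := by positivity
      calc _ ≤ ∫⁻ τ in Set.Ioi (0:ℝ), (Set.Ioc 0 T).indicator (fun τ => ENNReal.ofReal (4*B*w y ^2) * ENNReal.ofReal (τ^(r-3))) τ := by
            apply setLIntegral_mono' measurableSet_Ioi
            intro τ hτ
            have hτ : 0 < τ := hτ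
            by_cases hc : w y ≤ (2*A*S/τ)^(r-1)
            · have : τ ∈ Set.Ioc 0 T := by
                refine ⟨hτ, ?_⟩
                have h1 : w y ^ (1/(r-1)) ≤ 2*A*S/τ := by
                  calc _ ≤ ((2*A*S/τ)^(r-1)) ^ (1/(r-1)) := rpow_le_rpow hy.le hc (by positivity)
                    _ = _ := by rw [← rpow_mul (by positivity), mul_one_div_cancel hr1.ne', rpow_one]
                rw [hT, rpow_neg hy.le, ← div_eq_mul_inv]
                rw [le_div_iff₀ (by positivity)] at h1 ⊢
                linarith
              rw [Set.indicator_of_mem this, Set.indicator_of_mem (by exact hc)]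
              rw [ENNReal.ofReal_mul (p := 4*B) (by positivity)]
              apply le_of_eq; ring
            · rw [Set.indicator_of_notMem (by exact hc)]; simp
        _ = ENNReal.ofReal (4*B*w y ^2) * ∫⁻ τ in Set.Ioc 0 T, ENNReal.ofReal (τ^(r-3)) := by
            rw [setLIntegral_indicator measurableSet_Ioc, Set.inter_eq_left.2 Set.Ioc_subset_Ioi_self, lintegral_const_mul' _ _ ENNReal.ofReal_ne_top]
        _ = ENNReal.ofReal (4*B*w y ^2) * ENNReal.ofReal (T^(r-2)/(r-2)) := by
            congr 1
            rw [← ofReal_integral_eq_lintegral_ofReal]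
            · rw [← intervalIntegral.integral_of_le hT0.le, integral_rpow (Or.inl (by linarith))]
              rw [zero_rpow (by linarith)]; congr 1; rw [sub_zero]; congr 1 <;> ring_nf
            · have := intervalIntegral.intervalIntegrable_rpow' (a := 0) (b := T) (r := r-3) (by linarith)
              exact (intervalIntegrable_iff_integrableOn_Ioc_of_le hT0.le).1 this
            · filter_upwards [ae_restrict_mem measurableSet_Ioc] with τ hτ
              exact rpow_nonneg hτ.1.le _
        _ ≤ _ := by
            rw [← ENNReal.ofReal_mul (by positivity), ← ENNReal.ofReal_mul (by positivity)]
            apply ENNReal.ofReal_le_ofReal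
            apply le_of_eq
            rw [hT, mul_rpow (by positivity) (by positivity), ← rpow_mul hy.le]
            have : w y ^ (r/(r-1)) = w y ^ 2 * w y ^ (-(1 / (r - 1)) * (r - 2)) := by
              rw [← rpow_natCast (w y) 2, ← rpow_add hy]; congr 1; push_cast; field_simp; ring
            rw [this]; ring
  calc _ ≤ ENNReal.ofReal r * ∫⁻ y, ENNReal.ofReal (4*B* (2*A*S)^(r-2)/(r-2)) * ENNReal.ofReal (w y ^ (r/(r-1))) ∂m := by
        gcongr
        refine s1.trans ?_
        rw [lintegral_lintegral_swap]
        · exact lintegral_mono s2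
        · apply Measurable.aemeasurable
          have : (Function.uncurry fun (τ : ℝ) y => ENNReal.ofReal (4*B) * (ENNReal.ofReal (τ^(r-3)) *
        ({y | w y ≤ (2*A*S/τ)^(r-1)}.indicator (fun y => ENNReal.ofReal (w y ^ 2)) y))) =
            fun p : ℝ × X => ENNReal.ofReal (4*B) * (ENNReal.ofReal (p.1^(r-3)) *
              ({p : ℝ × X | w p.2 ≤ (2*A*S/p.1)^(r-1)}.indicator (fun p => ENNReal.ofReal (w p.2 ^ 2)) p)) := by
            ext p; simp [Function.uncurry, Set.indicator]
          rw [this]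
          apply Measurable.const_mul
          apply Measurable.mul
          · fun_prop
          · apply Measurable.indicator
            · fun_prop
            · exact measurableSet_le (by fun_prop) (by fun_prop)
    _ ≤ ENNReal.ofReal r * (ENNReal.ofReal (4*B* (2*A*S)^(r-2)/(r-2)) * ENNReal.ofReal S) := by
        rw [lintegral_const_mul' _ _ ENNReal.ofReal_ne_top]; gcongr
    _ = _ := by
        rw [← ENNReal.ofReal_mul (by positivity), ← ENNReal.ofReal_mul (by linarith)]
        congr 1
        have : S^(r-1) = S^(r-2) * S := by
          rw [← rpow_add_one hS.ne']; congr 1; ring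
        rw [this, mul_rpow (by positivity) hS.le]
        ring

section abstractS
variable {Ω H : Type*} [MeasurableSpace Ω] [NormedAddCommGroup H] [InnerProductSpace ℂ H] [CompleteSpace H]

lemma integ_fv (m : Measure Ω) [IsFiniteMeasure m] (v : Ω → H) (hv : StronglyMeasurable v)
    (M : ℝ) (hM : ∀ x, ‖v x‖ ≤ M) (f : Ω → ℂ) (hf : Measurable f) (L : ℝ) (hL : ∀ x, ‖f x‖ ≤ L) :
    Integrable (fun x => f x • v x) m := by
  refine Integrable.of_bound (hf.stronglyMeasurable.smul hv).aestronglyMeasurable (L*M) ?_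
  refine Filter.Eventually.of_forall fun x => ?_
  rw [norm_smul]
  have := (norm_nonneg _).trans (hL x)
  exact mul_le_mul (hL x) (hM x) (norm_nonneg _) this

lemma inner_int (m : Measure Ω) [IsFiniteMeasure m] (v : Ω → H) (hv : StronglyMeasurable v)
    (M : ℝ) (hM : ∀ x, ‖v x‖ ≤ M) (f : Ω → ℂ) (hf : Measurable f) (L : ℝ) (hL : ∀ x, ‖f x‖ ≤ L)
    (h : H) : inner ℂ h (∫ x, f x • v x ∂m) = ∫ x, f x * inner ℂ h (v x) ∂m := by
  rw [← integral_inner (integ_fv m v hv M hM f hf L hL)]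
  simp_rw [inner_smul_right]

lemma dualb (m : Measure Ω) [IsFiniteMeasure m] (v : Ω → H) (hv : StronglyMeasurable v)
    (M : ℝ) (hM : ∀ x, ‖v x‖ ≤ M) (f : Ω → ℂ) (hf : Measurable f) (L : ℝ) (hL : ∀ x, ‖f x‖ ≤ L)
    (B : ℝ) (hB0 : 0 ≤ B)
    (hB : ∀ h : H, ∫⁻ x, ‖inner ℂ (v x) h‖ₑ ^ 2 ∂m ≤ ENNReal.ofReal (B * ‖h‖^2)) :
    ‖∫ x, f x • v x ∂m‖ₑ ^ 2 ≤ ENNReal.ofReal B * ∫⁻ x, ‖f x‖ₑ ^ 2 ∂m := by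
  set F := ∫ x, f x • v x ∂m with hF
  have h1 : ‖F‖ₑ^2 ≤ (∫⁻ x, ‖f x‖ₑ ^ 2 ∂m)^(1/2:ℝ) * (ENNReal.ofReal (B * ‖F‖^2))^(1/2:ℝ) := by
    calc ‖F‖ₑ^2 = ‖inner ℂ F F‖ₑ := by
          rw [inner_self_eq_norm_sq_to_K, enorm_pow, ← ofReal_norm, ← ofReal_norm]; simp
      _ = ‖∫ x, f x * inner ℂ F (v x) ∂m‖ₑ := by
          conv_lhs => rw [hF]
          rw [← hF, inner_int m v hv M hM f hf L hL]
      _ ≤ ∫⁻ x, ‖f x‖ₑ * ‖inner ℂ (v x) F‖ₑ ∂m := by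
          refine (enorm_integral_le_lintegral_enorm _).trans (le_of_eq ?_)
          congr 1; ext x
          rw [enorm_mul, ← ofReal_norm (inner ℂ F (v x)), norm_inner_symm, ofReal_norm]
      _ ≤ (∫⁻ x, ‖f x‖ₑ ^ (2:ℝ) ∂m)^(1/2:ℝ) * (∫⁻ x, ‖inner ℂ (v x) F‖ₑ ^ (2:ℝ) ∂m)^(1/2:ℝ) := by
          apply ENNReal.lintegral_mul_le_Lp_mul_Lq m Real.HolderConjugate.two_two hf.enorm.aemeasurable
          exact (hv.inner stronglyMeasurable_const).enorm.aemeasurable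
      _ ≤ _ := by
          simp only [ENNReal.rpow_two]
          gcongr
          exact hB F
  by_cases hF0 : F = 0
  · simp [hF0]
  have hFp : 0 < ‖F‖ := norm_pos_iff.2 hF0
  have h2 := pow_le_pow_left₀ (by simp) h1 2
  rw [mul_pow, ← ENNReal.rpow_natCast (_ ^ (1/2:ℝ)), ← ENNReal.rpow_mul, ← ENNReal.rpow_natCast (_ ^ (1/2:ℝ)), ← ENNReal.rpow_mul] at h2
  norm_num at h2
  rw [ENNReal.ofReal_mul hB0, ENNReal.ofReal_pow (norm_nonneg _), ofReal_norm, pow_two (‖F‖ₑ^2), ← mul_assoc] at h2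
  rw [mul_comm (ENNReal.ofReal B)]
  exact (ENNReal.mul_le_mul_iff_left (by simp [hF0]) (by simp)).1 h2

lemma twot (m : Measure Ω) [IsFiniteMeasure m] (v v' : Ω → H) (hv : StronglyMeasurable v)
    (hv' : StronglyMeasurable v')
    (M : ℝ) (hM : ∀ x, ‖v x‖ ≤ M)
    (f : Ω → ℂ) (hf : Measurable f) (L : ℝ) (hL : ∀ x, ‖f x‖ ≤ L)
    (A B S r : ℝ) (hr : 2 < r) (hA : 0 < A) (hB0 : 0 ≤ B) (hS : 0 < S)
    (hB : ∀ h : H, ∫⁻ x, ‖inner ℂ (v x) h‖ₑ ^ 2 ∂m ≤ ENNReal.ofReal (B * ‖h‖^2))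
    (hB' : ∀ h : H, ∫⁻ x, ‖inner ℂ (v' x) h‖ₑ ^ 2 ∂m ≤ ENNReal.ofReal (B * ‖h‖^2))
    (hK : ∀ x y, ‖inner ℂ (v' x) (v y)‖ ≤ A)
    (hfS : ∫⁻ x, ENNReal.ofReal (‖f x‖ ^ (r/(r-1))) ∂m ≤ ENNReal.ofReal S) :
    ∫⁻ x, ENNReal.ofReal (‖inner ℂ (v' x) (∫ y, f y • v y ∂m)‖ ^ r) ∂m ≤
      ENNReal.ofReal (4*r/(r-2) * B^2 * (2*A)^(r-2) * S^(r-1)) := by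
  refine marc m hr _ (fun x => ‖f x‖) ?_ (fun x => norm_nonneg _) hf.norm (fun x => norm_nonneg _)
    A (B^2) S hA (by positivity) hS hfS ?_
  · exact (hv'.inner stronglyMeasurable_const).norm.measurable
  intro a ha
  have hD : MeasurableSet {x | ‖f x‖ ≤ a} := measurableSet_le hf.norm measurable_const
  have hDc : {x | a < ‖f x‖} = {x | ‖f x‖ ≤ a}ᶜ := by ext x; simp
  set D := {x | ‖f x‖ ≤ a}
  rw [hDc]
  refine ⟨fun x => ‖inner ℂ (v' x) (∫ y in D, f y • v y ∂m)‖ₑ, ?_, ?_, ?_⟩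
  · exact (hv'.inner stronglyMeasurable_const).enorm
  · intro x
    have hi := integ_fv m v hv M hM f hf L hL
    rw [← integral_add_compl hD hi, inner_add_right, ofReal_norm, add_comm]
    refine (enorm_add_le _ _).trans ?_
    gcongr
    rw [inner_int (m.restrict Dᶜ) v hv M hM f hf L hL]
    refine (enorm_integral_le_lintegral_enorm _).trans ?_
    rw [← lintegral_const_mul' _ _ ENNReal.ofReal_ne_top]
    refine lintegral_mono fun y => ?_
    simp only
    rw [enorm_mul, mul_comm, ofReal_norm, ← ofReal_norm (inner ℂ _ _)]
    gcongr
    exact hK x y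
  · refine (hB' _).trans ?_
    rw [ENNReal.ofReal_mul hB0, ENNReal.ofReal_pow (norm_nonneg _), ofReal_norm, pow_two B, ENNReal.ofReal_mul hB0, mul_assoc]
    gcongr
    have := dualb (m.restrict D) v hv M hM f hf L hL B hB0 (fun h => (setLIntegral_le_lintegral _ _).trans (hB h))
    refine this.trans (le_of_eq ?_)
    congr 2; ext x
    rw [ENNReal.ofReal_pow (norm_nonneg _), ofReal_norm]


lemma pairb (m : Measure Ω) [IsFiniteMeasure m] (v v' : Ω → H) (hv : StronglyMeasurable v)
    (hv' : StronglyMeasurable v')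
    (M : ℝ) (hM : ∀ x, ‖v x‖ ≤ M) (hM' : ∀ x, ‖v' x‖ ≤ M)
    (f g : Ω → ℂ) (hf : Measurable f) (L : ℝ) (hL : ∀ x, ‖f x‖ ≤ L)
    (hg : Measurable g) (hL' : ∀ x, ‖g x‖ ≤ L)
    (A B S S' r : ℝ) (hr : 2 < r) (hA : 0 < A) (hB0 : 0 ≤ B) (hS : 0 ≤ S) (hS' : 0 ≤ S')
    (hB : ∀ h : H, ∫⁻ x, ‖inner ℂ (v x) h‖ₑ ^ 2 ∂m ≤ ENNReal.ofReal (B * ‖h‖^2))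
    (hB' : ∀ h : H, ∫⁻ x, ‖inner ℂ (v' x) h‖ₑ ^ 2 ∂m ≤ ENNReal.ofReal (B * ‖h‖^2))
    (hK : ∀ x y, ‖inner ℂ (v' x) (v y)‖ ≤ A)
    (hfS : ∫⁻ x, ENNReal.ofReal (‖f x‖ ^ (r/(r-1))) ∂m ≤ ENNReal.ofReal S)
    (hgS : ∫⁻ x, ENNReal.ofReal (‖g x‖ ^ (r/(r-1))) ∂m ≤ ENNReal.ofReal S') :
    ‖inner ℂ (∫ y, g y • v' y ∂m) (∫ y, f y • v y ∂m)‖ ≤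
      (4*r/(r-2))^(1/r) * B^(2/r) * (2*A)^(1-2/r) * S^((r-1)/r) * S'^((r-1)/r) := by
  have hr2 : 0 < r - 2 := by linarith
  have hr1 : 0 < r - 1 := by linarith
  have hr0 : 0 < r := by linarith
  rcases hS.eq_or_lt with h0 | hS
  · rw [← h0, ENNReal.ofReal_zero, nonpos_iff_eq_zero, lintegral_eq_zero_iff (by fun_prop)] at hfS
    have : ∫ y, f y • v y ∂m = 0 := by
      rw [← integral_zero Ω H (μ := m)]
      apply integral_congr_ae
      filter_upwards [hfS] with x hx
      have hx : ENNReal.ofReal (‖f x‖ ^ (r/(r-1))) = 0 := hx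
      rw [ENNReal.ofReal_eq_zero] at hx
      have : f x = 0 := by
        by_contra hne
        have : 0 < ‖f x‖ := norm_pos_iff.2 hne
        have : 0 < ‖f x‖ ^ (r/(r-1)) := by positivity
        linarith
      simp [this]
    rw [this, inner_zero_right, norm_zero]
    positivity
  set F := ∫ y, f y • v y ∂m with hF
  have key := twot m v v' hv hv' M hM f hf L hL A B S r hr hA hB0 hS hB hB' hK hfS
  rw [← hF] at key
  have h1 : ‖inner ℂ (∫ y, g y • v' y ∂m) F‖ₑ ≤ (ENNReal.ofReal S')^((r-1)/r) *
      (ENNReal.ofReal (4*r/(r-2) * B^2 * (2*A)^(r-2) * S^(r-1)))^(1/r) := by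
    calc _ = ‖∫ x, g x * inner ℂ F (v' x) ∂m‖ₑ := by
          rw [← inner_int m v' hv' M hM' g hg L hL', ← ofReal_norm, norm_inner_symm, ofReal_norm]
      _ ≤ ∫⁻ x, ‖g x‖ₑ * ‖inner ℂ (v' x) F‖ₑ ∂m := by
          refine (enorm_integral_le_lintegral_enorm _).trans (le_of_eq ?_)
          congr 1; ext x
          rw [enorm_mul, ← ofReal_norm (inner ℂ F (v' x)), norm_inner_symm, ofReal_norm]
      _ ≤ (∫⁻ x, ‖g x‖ₑ ^ (r/(r-1)) ∂m)^(1/(r/(r-1))) * (∫⁻ x, ‖inner ℂ (v' x) F‖ₑ ^ r ∂m)^(1/r) := by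
          apply ENNReal.lintegral_mul_le_Lp_mul_Lq m _ hg.enorm.aemeasurable
          · exact (hv'.inner stronglyMeasurable_const).enorm.aemeasurable
          · rw [Real.holderConjugate_iff]
            constructor
            · rw [lt_div_iff₀ hr1]; linarith
            · field_simp; ring
      _ ≤ _ := by
          have e1 : ∀ x, ‖g x‖ₑ ^ (r/(r-1)) = ENNReal.ofReal (‖g x‖ ^ (r/(r-1))) := by
            intro x; rw [← ofReal_norm, ENNReal.ofReal_rpow_of_nonneg (norm_nonneg _) (by positivity)]
          have e2 : ∀ x, ‖inner ℂ (v' x) F‖ₑ ^ r = ENNReal.ofReal (‖inner ℂ (v' x) F‖ ^ r) := by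
            intro x; rw [← ofReal_norm, ENNReal.ofReal_rpow_of_nonneg (norm_nonneg _) (by positivity)]
          simp_rw [e1, e2, one_div_div]
          gcongr
  rw [ENNReal.ofReal_rpow_of_nonneg hS' (by positivity), ENNReal.ofReal_rpow_of_nonneg (by positivity) (by positivity), ← ENNReal.ofReal_mul (by positivity), ← ofReal_norm, ENNReal.ofReal_le_ofReal_iff (by positivity)] at h1
  refine h1.trans (le_of_eq ?_)
  rw [mul_rpow (by positivity) (by positivity), mul_rpow (by positivity) (by positivity), mul_rpow (by positivity) (by positivity), ← rpow_mul (by positivity), ← rpow_mul hS.le, ← rpow_natCast B 2, ← rpow_mul hB0]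
  have e3 : (r-2)*(1/r) = 1 - 2/r := by field_simp
  have e4 : (r-1)*(1/r) = (r-1)/r := by ring
  have e5 : ((2:ℕ):ℝ)*(1/r) = 2/r := by push_cast; ring
  rw [e3, e4, e5]; ring

end abstractS

lemma rpow_add_zero' {P a b : ℝ} (hP : 0 ≤ P) (hb : 0 < b) (hab : 0 < a + b) :
    P^a * P^b = P^(a+b) := by
  rcases hP.eq_or_lt with h | h
  · rw [← h, zero_rpow hb.ne', zero_rpow hab.ne', mul_zero]
  · rw [rpow_add h]

lemma Zsq {H : Type*} [NormedAddCommGroup H] [InnerProductSpace ℂ H] [CompleteSpace H]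
    {T : Type*} [MeasurableSpace T]
    (ν : Measure T) (V : T → H) (hV : Integrable V ν) :
    ‖∫ t, V t ∂ν‖ₑ ^ 2 ≤ ∫⁻ t, ∫⁻ s, ‖inner ℂ (V t) (V s)‖ₑ ∂ν ∂ν := by
  set Z := ∫ t, V t ∂ν with hZ
  calc ‖Z‖ₑ ^ 2 = ‖inner ℂ Z Z‖ₑ := by
        rw [inner_self_eq_norm_sq_to_K, enorm_pow, ← ofReal_norm, ← ofReal_norm]; simp
    _ = ‖∫ t, inner ℂ Z (V t) ∂ν‖ₑ := by rw [integral_inner hV]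
    _ ≤ ∫⁻ t, ‖inner ℂ Z (V t)‖ₑ ∂ν := enorm_integral_le_lintegral_enorm _
    _ ≤ _ := by
      refine lintegral_mono fun t => ?_
      simp only
      rw [← ofReal_norm, norm_inner_symm, ofReal_norm, hZ, ← integral_inner hV]
      exact enorm_integral_le_lintegral_enorm _

lemma stri_fin {Ω H : Type*} [MeasurableSpace Ω] [NormedAddCommGroup H] [InnerProductSpace ℂ H]
    [CompleteSpace H] (m : Measure Ω) [IsFiniteMeasure m] (e : ℝ → Ω → H)
    (he : StronglyMeasurable (Function.uncurry e)) (M : ℝ) (hM : ∀ t x, ‖e t x‖ ≤ M)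
    (A B σ q r : ℝ) (hq : 2 < q) (hr : 2 < r) (hA : 0 < A) (hB0 : 0 ≤ B)
    (hqr : 1/q = σ * (1/2 - 1/r))
    (hB : ∀ t ∈ Set.Icc (0:ℝ) 1, ∀ h : H,
      ∫⁻ x, ‖inner ℂ (e t x) h‖ₑ ^ 2 ∂m ≤ ENNReal.ofReal (B * ‖h‖^2))
    (hK : ∀ t ∈ Set.Icc (0:ℝ) 1, ∀ s ∈ Set.Icc (0:ℝ) 1, t ≠ s → ∀ x y,
      ‖inner ℂ (e t x) (e s y)‖ ≤ A * |t - s|^(-σ)) (h : H) :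
    ∫⁻ t in Set.Icc (0:ℝ) 1, (∫⁻ x, ‖inner ℂ (e t x) h‖ₑ ^ r ∂m)^(q/r) ≤
      ENNReal.ofReal (((4*r/(r-2))^(1/r) * B^(2/r) * (2*A)^(1-2/r) *
        (2*(2/(1-2/q)+2)) * ‖h‖^2)^(q/2)) := by
  have hr2 : 0 < r - 2 := by linarith
  have hr1 : 0 < r - 1 := by linarith
  have hr0 : 0 < r := by linarith
  have hq0 : 0 < q := by linarith
  set ν := (volume : Measure ℝ).restrict (Set.Icc (0:ℝ) 1) with hν
  have het : ∀ t, StronglyMeasurable (e t) := fun t =>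
    he.comp_measurable (measurable_prodMk_left : Measurable (fun x => (t, x)))
  set u : ℝ → Ω → ℂ := fun t x => inner ℂ (e t x) h with hu
  have hum : StronglyMeasurable (Function.uncurry u) := by
    exact he.inner stronglyMeasurable_const
  have hut : ∀ t, Measurable (u t) := fun t => ((het t).inner stronglyMeasurable_const).measurable
  have hub : ∀ t x, ‖u t x‖ ≤ M * ‖h‖ := fun t x => (norm_inner_le_norm _ _).trans (by gcongr; exact hM t x)
  set P : ℝ → ℝ := fun t => ∫ x, ‖u t x‖^r ∂m with hP
  have hP0 : ∀ t, 0 ≤ P t := fun t => integral_nonneg fun x => by positivity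
  have hPm : Measurable P := by
    have : StronglyMeasurable (Function.uncurry fun t x => ‖u t x‖^r) :=
      (hum.measurable.norm.pow_const r).stronglyMeasurable
    exact (this.integral_prod_right').measurable
  have hurint : ∀ t, Integrable (fun x => ‖u t x‖^r) m := by
    intro t
    refine Integrable.of_bound ((hut t).norm.pow_const r).aestronglyMeasurable ((M * ‖h‖)^r) ?_
    refine Filter.Eventually.of_forall fun x => ?_
    rw [norm_of_nonneg (by positivity)]
    exact rpow_le_rpow (norm_nonneg _) (hub t x) hr0.le
  have hPl : ∀ t, ∫⁻ x, ‖u t x‖ₑ^r ∂m = ENNReal.ofReal (P t) := by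
    intro t
    rw [hP, ofReal_integral_eq_lintegral_ofReal (hurint t) (Filter.Eventually.of_forall fun x => by positivity)]
    congr 1; ext x
    rw [← ofReal_norm, ENNReal.ofReal_rpow_of_nonneg (norm_nonneg _) hr0.le]
  set f : ℝ → Ω → ℂ := fun t x => ((‖u t x‖^(r-2) : ℝ) : ℂ) * u t x with hf
  have hfm : Measurable (Function.uncurry f) := by
    have h0 : Measurable fun p : ℝ × Ω => u p.1 p.2 := hum.measurable
    have h1 : Measurable fun p : ℝ × Ω => ((‖u p.1 p.2‖^(r-2) : ℝ) : ℂ) * u p.1 p.2 := by fun_prop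
    exact h1
  have hft : ∀ t, Measurable (f t) := fun t => by
    have h0 := hut t
    have h1 : Measurable fun x => ((‖u t x‖^(r-2) : ℝ) : ℂ) * u t x := by fun_prop
    exact h1
  have hfn : ∀ t x, ‖f t x‖ = ‖u t x‖^(r-1) := by
    intro t x
    simp only [hf, norm_mul, Complex.norm_real]
    rw [norm_of_nonneg (by positivity)]
    have h1 := rpow_add_zero' (P := ‖u t x‖) (a := r-2) (b := 1) (norm_nonneg _) one_pos (by linarith)
    rw [rpow_one] at h1
    rw [h1]; congr 1; ring
  have hfb : ∀ t x, ‖f t x‖ ≤ (M*‖h‖)^(r-1) := by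
    intro t x; rw [hfn]; exact rpow_le_rpow (norm_nonneg _) (hub t x) hr1.le
  have hfp : ∀ t, ∫⁻ x, ENNReal.ofReal (‖f t x‖ ^ (r/(r-1))) ∂m ≤ ENNReal.ofReal (P t) := by
    intro t
    rw [← hPl]
    refine le_of_eq ?_
    congr 1; ext x
    rw [hfn, ← rpow_mul (norm_nonneg _), mul_div_cancel₀ _ hr1.ne', ← ofReal_norm, ENNReal.ofReal_rpow_of_nonneg (norm_nonneg _) hr0.le]
  set G : ℝ → H := fun t => ∫ x, f t x • e t x ∂m with hG
  have hGm : StronglyMeasurable G := by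
    have : StronglyMeasurable (Function.uncurry fun t x => f t x • e t x) := hfm.stronglyMeasurable.smul he
    exact this.integral_prod_right'
  set c : ℝ → ℝ := fun t => P t ^ ((q-r)/r) with hc
  set V : ℝ → H := fun t => ((c t : ℝ) : ℂ) • G t with hV
  have hc0 : ∀ t, 0 ≤ c t := fun t => rpow_nonneg (hP0 t) _
  have hVm : StronglyMeasurable V :=
    (Complex.measurable_ofReal.comp (hPm.pow_const ((q-r)/r))).stronglyMeasurable.smul hGm
  set g0 : ℝ → ℝ := fun t => P t ^ ((q-1)/r) with hg0
  have hg00 : ∀ t, 0 ≤ g0 t := fun t => rpow_nonneg (hP0 t) _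
  have hcP : ∀ t, c t * P t ^ ((r-1)/r) = g0 t := by
    intro t
    have hq1 : 0 < (q - 1)/r := by apply div_pos <;> linarith
    have e1 : (q-r)/r + (r-1)/r = (q-1)/r := by ring
    simp only [hc, hg0]
    rw [rpow_add_zero' (hP0 t) (by positivity) (by rw [e1]; exact hq1), e1]
  have hVV : ∀ t ∈ Set.Icc (0:ℝ) 1, ∀ s ∈ Set.Icc (0:ℝ) 1, ∀ A' : ℝ, 0 < A' →
      (∀ x y, ‖inner ℂ (e t x) (e s y)‖ ≤ A') → ‖inner ℂ (V t) (V s)‖ ≤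
        (4*r/(r-2))^(1/r) * B^(2/r) * (2*A')^(1-2/r) * g0 s * g0 t := by
    intro t ht s hs A' hA' hk
    have := pairb m (e s) (e t) (het s) (het t) M (hM s) (hM t) (f s) (f t) (hft s) _ (hfb s) (hft t) (hfb t)
      A' B (P s) (P t) r hr hA' hB0 (hP0 s) (hP0 t) (hB s hs) (hB t ht) hk (hfp s) (hfp t)
    simp only [hV]
    rw [inner_smul_left, inner_smul_right, norm_mul, norm_mul, Complex.conj_ofReal, Complex.norm_real, Complex.norm_real, norm_of_nonneg (hc0 t), norm_of_nonneg (hc0 s), ← hcP s, ← hcP t]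
    calc _ ≤ c t * (c s * ((4*r/(r-2))^(1/r) * B^(2/r) * (2*A')^(1-2/r) * P s^((r-1)/r) * P t^((r-1)/r))) := by
          have := hc0 t; have := hc0 s
          gcongr
      _ = _ := by ring
  -- boundedness
  have hM0 : ∀ t : ℝ, ∀ x : Ω, 0 ≤ M := fun t x => (norm_nonneg _).trans (hM t x)
  have hPb : ∃ Q : ℝ, 0 ≤ Q ∧ ∀ t, P t ≤ Q := by
    refine ⟨(|M| * ‖h‖)^r * m.real Set.univ, by positivity, fun t => ?_⟩
    calc P t ≤ ∫ x, (|M| * ‖h‖)^r ∂m := by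
          apply integral_mono (hurint t) (integrable_const _)
          intro x
          exact rpow_le_rpow (norm_nonneg _) ((hub t x).trans (by gcongr; exact le_abs_self M)) hr0.le
      _ = _ := by rw [integral_const]; simp [mul_comm]
  obtain ⟨Q, hQ0, hQ⟩ := hPb
  have hgb : ∀ t, g0 t ≤ Q^((q-1)/r) := fun t =>
    rpow_le_rpow (hP0 t) (hQ t) (by apply div_nonneg <;> linarith)
  have hVint : Integrable V ν := by
    refine Integrable.of_bound hVm.aestronglyMeasurable
      (Real.sqrt ((4*r/(r-2))^(1/r) * B^(2/r) * (2*(|M| * |M|+1))^(1-2/r) * Q^((q-1)/r) * Q^((q-1)/r))) ?_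
    filter_upwards [ae_restrict_mem measurableSet_Icc] with t ht
    apply Real.le_sqrt_of_sq_le
    have h1 := hVV t ht t ht (|M| * |M|+1) (by positivity) (by
      intro x y
      refine (norm_inner_le_norm _ _).trans ?_
      have h1 := (hM t x).trans (le_abs_self M)
      have h2 := (hM t y).trans (le_abs_self M)
      have := mul_le_mul h1 h2 (norm_nonneg _) (abs_nonneg _)
      linarith)
    rw [inner_self_eq_norm_sq_to_K, norm_pow] at h1
    simp only [Complex.coe_algebraMap, Complex.norm_real, norm_norm] at h1
    refine h1.trans ?_
    have := hgb t; have := hg00 t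
    gcongr
  set S := ∫ t, P t ^ (q/r) ∂ν with hSdef
  have hS0 : 0 ≤ S := integral_nonneg fun t => rpow_nonneg (hP0 t) _
  have hPint : Integrable (fun t => P t ^ (q/r)) ν := by
    refine Integrable.of_bound (hPm.pow_const _).aestronglyMeasurable (Q^(q/r)) ?_
    refine Filter.Eventually.of_forall fun t => ?_
    rw [norm_of_nonneg (rpow_nonneg (hP0 t) _)]
    exact rpow_le_rpow (hP0 t) (hQ t) (by positivity)
  have hSl : ∫⁻ t in Set.Icc (0:ℝ) 1, (∫⁻ x, ‖inner ℂ (e t x) h‖ₑ ^ r ∂m)^(q/r) = ENNReal.ofReal S := by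
    rw [hSdef, ofReal_integral_eq_lintegral_ofReal hPint (Filter.Eventually.of_forall fun t => rpow_nonneg (hP0 t) _)]
    congr 1; ext t
    rw [← ENNReal.ofReal_rpow_of_nonneg (hP0 t) (by positivity), ← hPl]
  rw [hSl]
  apply ENNReal.ofReal_le_ofReal
  have hα0 : 0 < 2/q := by positivity
  have hα1 : 2/q < 1 := by rw [div_lt_one hq0]; exact hq
  rcases hS0.eq_or_lt with hS0' | hSpos
  · rw [← hS0']
    have : 0 < 1 - 2/q := by linarith
    positivity
  set K := (4*r/(r-2))^(1/r) * B^(2/r) * (2*A)^(1-2/r) with hKdef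
  have hK0 : 0 ≤ K := by positivity
  -- pairing
  have hpair : inner ℂ h (∫ t, V t ∂ν) = (S : ℂ) := by
    rw [← integral_inner hVint, hSdef, ← integral_complex_ofReal]
    congr 1; ext t
    simp only [hV, hG]
    rw [inner_smul_right, inner_int m (e t) (het t) M (hM t) (f t) (hft t) _ (hfb t)]
    have : ∀ x, f t x * inner ℂ h (e t x) = ((‖u t x‖^r : ℝ) : ℂ) := by
      intro x
      have h1 : inner ℂ h (e t x) = (starRingEnd ℂ) (u t x) := by
        simp only [hu]; rw [inner_conj_symm]
      rw [h1]; simp only [hf]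
      rw [mul_assoc, Complex.mul_conj, Complex.normSq_eq_norm_sq, ← Complex.ofReal_mul, ← rpow_natCast (‖u t x‖) 2]
      rw [rpow_add_zero' (norm_nonneg _) (by norm_num) (by push_cast; linarith)]
      congr 2; push_cast; ring
    simp_rw [this]
    rw [integral_complex_ofReal, ← Complex.ofReal_mul]
    congr 1
    have h1 := rpow_add_zero' (a := (q-r)/r) (b := 1) (hP0 t) one_pos (by
      have : (q-r)/r + 1 = q/r := by field_simp; ring
      rw [this]; positivity)
    rw [rpow_one] at h1
    simp only [hc]
    change P t ^ ((q-r)/r) * P t = _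
    rw [h1]; congr 1; field_simp; ring
  have hSle : S ≤ ‖h‖ * ‖∫ t, V t ∂ν‖ := by
    have := norm_inner_le_norm (𝕜 := ℂ) h (∫ t, V t ∂ν)
    rw [hpair, Complex.norm_real, norm_of_nonneg hS0] at this
    exact this
  have hZ := Zsq ν V hVint
  set g : ℝ → ℝ := (Set.Icc (0:ℝ) 1).indicator g0 with hg
  have hgm : Measurable g := (hPm.pow_const _).indicator measurableSet_Icc
  have hgn : ∀ t, 0 ≤ g t := fun t => Set.indicator_nonneg (fun t _ => hg00 t) t
  have hls1 := hls hα0 hα1 g hgm hgn S hSpos (by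
    rw [hSdef, ofReal_integral_eq_lintegral_ofReal hPint (Filter.Eventually.of_forall fun t => rpow_nonneg (hP0 t) _), hν, ← lintegral_indicator measurableSet_Icc]
    refine le_of_eq ?_
    congr 1; ext t
    by_cases ht : t ∈ Set.Icc (0:ℝ) 1
    · simp only [hg, Set.indicator_of_mem ht, hg0]
      rw [← rpow_mul (hP0 t)]
      congr 2
      have : 2 - 2/q ≠ 0 := by linarith
      have : 2*q-2 ≠ 0 := by linarith
      have : q-1 ≠ 0 := by linarith
      field_simp
    · simp only [hg, Set.indicator_of_notMem ht]
      rw [zero_rpow]; simp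
      have : 0 < 2 - 2/q := by linarith
      positivity)
  have hZ2 : ‖∫ t, V t ∂ν‖ₑ^2 ≤ ENNReal.ofReal (K * (2*(2/(1-2/q)+2)*S^(2-2/q))) := by
    refine hZ.trans ?_
    rw [ENNReal.ofReal_mul hK0]
    refine le_trans ?_ (mul_le_mul_right hls1 _)
    rw [← lintegral_const_mul' _ _ ENNReal.ofReal_ne_top]
    refine le_trans ?_ (setLIntegral_le_lintegral (Set.Icc (0:ℝ) 1) _)
    apply setLIntegral_mono' measurableSet_Icc
    intro t ht
    rw [← lintegral_const_mul' _ _ ENNReal.ofReal_ne_top]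
    refine le_trans ?_ (setLIntegral_le_lintegral (Set.Icc (0:ℝ) 1) _)
    apply lintegral_mono_ae
    have hne : ∀ᵐ s ∂ν, s ≠ t := by
      apply ae_restrict_of_ae
      exact (Set.countable_singleton t).ae_notMem _
    filter_upwards [ae_restrict_mem measurableSet_Icc, hne] with s hs hst
    have hts : 0 < |t - s| := abs_pos.2 (sub_ne_zero.2 hst.symm)
    rw [← ENNReal.ofReal_mul hK0, ← ofReal_norm]
    apply ENNReal.ofReal_le_ofReal
    refine (hVV t ht s hs (A*|t - s|^(-σ)) (by positivity) (hK t ht s hs hst.symm)).trans (le_of_eq ?_)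
    simp only [hg, Set.indicator_of_mem ht, Set.indicator_of_mem hs, hKdef]
    rw [← mul_assoc 2 A, mul_rpow (by positivity) (by positivity), ← rpow_mul (abs_nonneg _)]
    have : -σ*(1-2/r) = -(2/q) := by
      have h1 : 2/q = 2*(1/q) := by ring
      rw [h1, hqr]; ring
    rw [this]; ring
  rw [← ofReal_norm, ← ENNReal.ofReal_pow (norm_nonneg _), ENNReal.ofReal_le_ofReal_iff (by
    have : 0 < 1 - 2/q := by linarith
    positivity)] at hZ2
  set Ch := 2*(2/(1-2/q)+2) with hCh
  have hCh0 : 0 ≤ Ch := by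
    have : 0 < 1 - 2/q := by linarith
    positivity
  have f1 : S^2 ≤ (K*Ch*‖h‖^2) * S^(2-2/q) := by
    calc S^2 ≤ (‖h‖ * ‖∫ t, V t ∂ν‖)^2 := pow_le_pow_left₀ hS0 hSle 2
      _ = ‖h‖^2 * ‖∫ t, V t ∂ν‖^2 := by ring
      _ ≤ ‖h‖^2 * (K * (Ch*S^(2-2/q))) := by gcongr
      _ = _ := by ring
  have f2 : S^(2/q) ≤ K*Ch*‖h‖^2 := by
    have : S^2 = S^(2/q) * S^(2-2/q) := by
      rw [← rpow_add hSpos, ← rpow_natCast S 2]; congr 1; push_cast; ring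
    rw [this] at f1
    exact le_of_mul_le_mul_right f1 (by positivity)
  calc S = (S^(2/q))^(q/2) := by
        rw [← rpow_mul hS0]
        have : 2/q*(q/2) = 1 := by field_simp
        rw [this, rpow_one]
    _ ≤ _ := rpow_le_rpow (by positivity) f2 (by positivity)

lemma stri {Ω H : Type*} [MeasurableSpace Ω] [NormedAddCommGroup H] [InnerProductSpace ℂ H]
    [CompleteSpace H] (m : Measure Ω) [SigmaFinite m] (e : ℝ → Ω → H)
    (he : StronglyMeasurable (Function.uncurry e)) (M : ℝ) (hM : ∀ t x, ‖e t x‖ ≤ M)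
    (A B σ q r : ℝ) (hq : 2 < q) (hr : 2 < r) (hA : 0 < A) (hB0 : 0 ≤ B)
    (hqr : 1/q = σ * (1/2 - 1/r))
    (hB : ∀ t ∈ Set.Icc (0:ℝ) 1, ∀ h : H,
      ∫⁻ x, ‖inner ℂ (e t x) h‖ₑ ^ 2 ∂m ≤ ENNReal.ofReal (B * ‖h‖^2))
    (hK : ∀ t ∈ Set.Icc (0:ℝ) 1, ∀ s ∈ Set.Icc (0:ℝ) 1, t ≠ s → ∀ x y,
      ‖inner ℂ (e t x) (e s y)‖ ≤ A * |t - s|^(-σ)) (h : H) :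
    ∫⁻ t in Set.Icc (0:ℝ) 1, (∫⁻ x, ‖inner ℂ (e t x) h‖ₑ ^ r ∂m)^(q/r) ≤
      ENNReal.ofReal (((4*r/(r-2))^(1/r) * B^(2/r) * (2*A)^(1-2/r) *
        (2*(2/(1-2/q)+2)) * ‖h‖^2)^(q/2)) := by
  have hqr0 : 0 < q/r := by apply div_pos <;> linarith
  have hmono : Monotone (spanningSets m) := monotone_spanningSets m
  have h1 : ∀ t, ∫⁻ x, ‖inner ℂ (e t x) h‖ₑ ^ r ∂m =
      ⨆ k, ∫⁻ x in spanningSets m k, ‖inner ℂ (e t x) h‖ₑ ^ r ∂m := by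
    intro t
    rw [← setLIntegral_iUnion_of_directed _ (Monotone.directed_le hmono), iUnion_spanningSets, Measure.restrict_univ]
  have hum : Measurable (fun p : ℝ × Ω => ‖inner ℂ (e p.1 p.2) h‖ₑ ^ r) := by
    have : StronglyMeasurable (fun p : ℝ × Ω => inner ℂ (e p.1 p.2) h) := he.inner stronglyMeasurable_const
    exact this.enorm.pow_const _
  have h2 : ∀ t, (∫⁻ x, ‖inner ℂ (e t x) h‖ₑ ^ r ∂m)^(q/r) =
      ⨆ k, (∫⁻ x in spanningSets m k, ‖inner ℂ (e t x) h‖ₑ ^ r ∂m)^(q/r) := by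
    intro t
    rw [h1]
    exact (ENNReal.orderIsoRpow (q/r) hqr0).map_iSup _
  simp_rw [h2]
  rw [lintegral_iSup]
  · refine iSup_le fun k => ?_
    have : IsFiniteMeasure (m.restrict (spanningSets m k)) :=
      ⟨by rw [Measure.restrict_apply_univ]; exact measure_spanningSets_lt_top m k⟩
    exact stri_fin (m.restrict (spanningSets m k)) e he M hM A B σ q r hq hr hA hB0 hqr
      (fun t ht h => (setLIntegral_le_lintegral _ _).trans (hB t ht h)) hK h
  · intro k
    exact (Measurable.lintegral_prod_right' (ν := m.restrict (spanningSets m k)) hum).pow_const _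
  · intro i k hik t
    apply ENNReal.rpow_le_rpow _ hqr0.le
    exact lintegral_mono_set (hmono hik)

lemma mulb {E : Type*} [NormedAddCommGroup E] [NormedSpace ℝ E] {f g : E → ℂ} (hf : ContDiff ℝ (⊤:ℕ∞) f)
    (hg : ContDiff ℝ (⊤:ℕ∞) g) (x : E) (N : ℕ) (A B : ℝ)
    (hA : ∀ i ≤ N, ‖iteratedFDeriv ℝ i f x‖ ≤ A) (hB : ∀ i ≤ N, ‖iteratedFDeriv ℝ i g x‖ ≤ B) :
    ∀ k ≤ N, ‖iteratedFDeriv ℝ k (fun y => f y * g y) x‖ ≤ 2^N * A * B := by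
  intro k hk
  have hA0 : 0 ≤ A := (norm_nonneg _).trans (hA 0 (by simp))
  have hB0 : 0 ≤ B := (norm_nonneg _).trans (hB 0 (by simp))
  refine (norm_iteratedFDeriv_mul_le hf hg x (n := k) (by exact_mod_cast le_top)).trans ?_
  calc _ ≤ ∑ i ∈ Finset.range (k+1), (k.choose i : ℝ) * A * B := by
        apply Finset.sum_le_sum
        intro i hi
        have hi : i ≤ k := by simpa [Nat.lt_succ_iff] using hi
        gcongr
        · exact hA i (hi.trans hk)
        · exact hB _ ((Nat.sub_le _ _).trans hk)
    _ = 2^k * A * B := by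
        rw [← Finset.sum_mul, ← Finset.sum_mul]
        congr 2
        exact_mod_cast Nat.sum_range_choose k
    _ ≤ _ := by gcongr; norm_num

lemma expderiv (i : ℕ) (x : ℝ) : ‖iteratedFDeriv ℝ i (fun x : ℝ => Complex.exp (Complex.I * x)) x‖ = 1 := by
  rw [norm_iteratedFDeriv_eq_norm_iteratedDeriv]
  have : ∀ i, iteratedDeriv i (fun x : ℝ => Complex.exp (Complex.I * x)) =
      fun x : ℝ => Complex.I^i * Complex.exp (Complex.I * x) := by
    intro i
    induction i with
    | zero => simp
    | succ i ih =>
      rw [iteratedDeriv_succ, ih]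
      ext x
      have h1 : HasDerivAt (fun x : ℝ => Complex.I * (x:ℂ)) (Complex.I * 1) x :=
        (Complex.ofRealCLM.hasDerivAt (x := x)).const_mul Complex.I
      have := (h1.cexp.const_mul (Complex.I^i)).deriv
      rw [this]; ring
  rw [this]
  simp only [norm_mul, norm_pow, Complex.norm_I, one_pow, one_mul]
  rw [mul_comm, Complex.norm_exp_ofReal_mul_I]

lemma compsc {E F : Type*} [NormedAddCommGroup E] [NormedSpace ℝ E] [NormedAddCommGroup F] [NormedSpace ℝ F]
    {f : E → F} (hf : ContDiff ℝ (⊤:ℕ∞) f) (y : E) (ε : ℝ) (k : ℕ) (v : E) :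
    iteratedFDeriv ℝ k (fun v => f (y + ε • v)) v = ε^k • iteratedFDeriv ℝ k f (y + ε • v) := by
  have h1 : ContDiff ℝ k (fun v => f (y + v)) := (hf.of_le (by exact_mod_cast le_top)).comp (by fun_prop)
  have := iteratedFDeriv_comp_const_smul (i := k) (f := fun v => f (y + v)) ε h1
  rw [this]
  simp only [iteratedFDeriv_comp_add_left]

lemma Rbound {E : Type*} [NormedAddCommGroup E] [NormedSpace ℝ E] {φ : E → ℝ}
    (hφ : ContDiff ℝ (⊤:ℕ∞) φ) (N : ℕ) (Cφ ρ : ℝ) (hC1 : 1 ≤ Cφ) (hρ : 0 < ρ)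
    (hC : ∀ k ≤ N + 2, ∀ x, ‖iteratedFDeriv ℝ k φ x‖ ≤ Cφ) (τ ε : ℝ) (hε0 : 0 < ε) (hε1 : ε ≤ 1)
    (hτ : |τ| * ε^2 = 1) (y v : E) (hv : ‖v‖ ≤ ρ) (i : ℕ) (hi1 : 1 ≤ i) (hi : i ≤ N) :
    ‖iteratedFDeriv ℝ i (fun v => τ * (φ (y + ε • v) - φ y - ε * fderiv ℝ φ y v)) v‖ ≤
      (Cφ * (1+ρ))^i := by
  have hφd : Differentiable ℝ φ := hφ.differentiable (by simp)
  have hφ' : ContDiff ℝ (⊤:ℕ∞) (fderiv ℝ φ) := hφ.fderiv_right (by exact_mod_cast le_top)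
  obtain ⟨k, rfl⟩ : ∃ k, i = k + 1 := ⟨i-1, by omega⟩
  have hD1 : 1 ≤ Cφ * (1+ρ) := by nlinarith
  refine le_trans ?_ (le_self_pow₀ hD1 (by omega))
  rw [← norm_iteratedFDeriv_fderiv]
  have hfd : fderiv ℝ (fun v => τ * (φ (y + ε • v) - φ y - ε * fderiv ℝ φ y v)) =
      fun v => (τ*ε) • (fderiv ℝ φ (y + ε • v) - fderiv ℝ φ y) := by
    ext1 v
    apply HasFDerivAt.fderiv
    have h1 : HasFDerivAt (fun v => y + ε • v) (ε • ContinuousLinearMap.id ℝ E) v :=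
      ((hasFDerivAt_id v).const_smul ε).const_add y
    have h2 := ((((hφd (y + ε • v)).hasFDerivAt.comp v h1).sub_const (φ y)).sub
      ((fderiv ℝ φ y).hasFDerivAt.const_mul ε)).const_mul τ
    refine h2.congr_fderiv ?_
    ext u; simp; ring
  rw [hfd]
  have hτε : |τ| * ε ^ 2 ≤ 1 := hτ.le
  rcases Nat.eq_zero_or_pos k with hk | hk
  · subst hk
    rw [norm_iteratedFDeriv_zero, norm_smul, norm_mul, Real.norm_eq_abs, Real.norm_of_nonneg hε0.le]
    have h1 : ‖fderiv ℝ φ (y + ε • v) - fderiv ℝ φ y‖ ≤ Cφ * ‖(y + ε • v) - y‖ := by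
      apply Convex.norm_image_sub_le_of_norm_fderiv_le (s := Set.univ) (𝕜 := ℝ)
        (fun x _ => (hφ'.differentiable (by simp)).differentiableAt) _ convex_univ (Set.mem_univ _) (Set.mem_univ _)
      intro x _
      rw [← norm_iteratedFDeriv_zero (𝕜 := ℝ) (f := fderiv ℝ (fderiv ℝ φ)), norm_iteratedFDeriv_fderiv, norm_iteratedFDeriv_fderiv]
      exact hC 2 (by omega) x
    rw [add_sub_cancel_left, norm_smul, Real.norm_of_nonneg hε0.le] at h1
    calc |τ| * ε * ‖fderiv ℝ φ (y + ε • v) - fderiv ℝ φ y‖ ≤ |τ| * ε * (Cφ * (ε * ‖v‖)) := by gcongr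
      _ = (|τ| * ε^2) * (Cφ * ‖v‖) := by ring
      _ = Cφ * ‖v‖ := by rw [hτ, one_mul]
      _ ≤ _ := by gcongr; linarith
  · have h1 : ContDiff ℝ (⊤:ℕ∞) (fun x => (τ*ε) • (fderiv ℝ φ x - fderiv ℝ φ y)) := by fun_prop
    rw [compsc h1]
    have h2 : iteratedFDeriv ℝ k (fun x => (τ*ε) • (fderiv ℝ φ x - fderiv ℝ φ y)) (y + ε • v) =
        (τ*ε) • iteratedFDeriv ℝ k (fderiv ℝ φ) (y + ε • v) := by
      rw [iteratedFDeriv_const_smul_apply' (by apply ContDiff.contDiffAt; exact (ContDiff.sub hφ' contDiff_const).of_le (by exact_mod_cast le_top))]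
      congr 1
      have := iteratedFDeriv_sub_apply (𝕜 := ℝ) (i := k) (f := fderiv ℝ φ) (g := fun _ => fderiv ℝ φ y) (x := y + ε • v)
        (hφ'.of_le (by exact_mod_cast le_top)).contDiffAt contDiff_const.contDiffAt
      rw [iteratedFDeriv_const_of_ne (by omega)] at this
      simp only [Pi.zero_apply, sub_zero] at this
      exact this
    rw [h2, norm_smul, norm_smul, norm_iteratedFDeriv_fderiv, norm_mul, norm_pow, Real.norm_eq_abs τ, Real.norm_of_nonneg hε0.le]
    have h3 := hC (k+1) (by omega) (y + ε • v)
    calc _ ≤ ε^k * (|τ| * ε * Cφ) := by gcongr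
      _ ≤ ε^1 * (|τ| * ε * Cφ) := by
        gcongr ?_ * _
        exact pow_le_pow_of_le_one hε0.le hε1 hk
      _ = (|τ| * ε^2) * Cφ := by ring
      _ = Cφ := by rw [hτ, one_mul]
      _ ≤ _ := by nlinarith

lemma Fbound {E : Type*} [NormedAddCommGroup E] [NormedSpace ℝ E] {φ : E → ℝ}
    (hφ : ContDiff ℝ (⊤:ℕ∞) φ) (N : ℕ) (Cφ ρ : ℝ) (hC1 : 1 ≤ Cφ) (hρ : 0 < ρ)
    (hC : ∀ k ≤ N + 2, ∀ x, ‖iteratedFDeriv ℝ k φ x‖ ≤ Cφ)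
    {g : E → ℂ} (hg : ContDiff ℝ (⊤:ℕ∞) g) (hgs : tsupport g ⊆ Metric.closedBall 0 ρ)
    (Cg Ca : ℝ) (hCg : ∀ k ≤ N, ∀ x, ‖iteratedFDeriv ℝ k g x‖ ≤ Cg)
    {a : E → ℂ} (ha : ContDiff ℝ (⊤:ℕ∞) a) (hCa : ∀ k ≤ N, ∀ x, ‖iteratedFDeriv ℝ k a x‖ ≤ Ca)
    (τ ε : ℝ) (hε0 : 0 < ε) (hε1 : ε ≤ 1) (hτ : |τ| * ε^2 = 1) (y : E) (v : E) (k : ℕ) (hk : k ≤ N) :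
    ‖iteratedFDeriv ℝ k (fun v => Complex.exp (Complex.I * ((τ * (φ (y + ε • v) - φ y - ε * fderiv ℝ φ y v) : ℝ) : ℂ)) *
      (a (y + ε • v) * g v)) v‖ ≤ 2^N * (N.factorial * (Cφ * (1+ρ))^N) * (2^N * Ca * Cg) := by
  have hCa0 : 0 ≤ Ca := (norm_nonneg _).trans (hCa 0 (by simp) y)
  have hCg0 : 0 ≤ Cg := (norm_nonneg _).trans (hCg 0 (by simp) y)
  have hD1 : 1 ≤ Cφ * (1+ρ) := by nlinarith
  by_cases hv : ‖v‖ ≤ ρ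
  · have hR : ContDiff ℝ (⊤:ℕ∞) (fun v => τ * (φ (y + ε • v) - φ y - ε * fderiv ℝ φ y v)) := by fun_prop
    have hE : ContDiff ℝ (⊤:ℕ∞) (fun x : ℝ => Complex.exp (Complex.I * x)) := by
      have : ContDiff ℝ (⊤:ℕ∞) (fun x : ℝ => (x:ℂ)) := Complex.ofRealCLM.contDiff
      fun_prop
    have ha' : ContDiff ℝ (⊤:ℕ∞) (fun v => a (y + ε • v)) := by fun_prop
    refine mulb (f := (fun x : ℝ => Complex.exp (Complex.I * x)) ∘ (fun v => τ * (φ (y + ε • v) - φ y - ε * fderiv ℝ φ y v)))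
      (hE.comp hR) (ha'.mul hg) v N _ _ ?_ ?_ k hk
    · intro i hi
      refine (norm_iteratedFDeriv_comp_le (n := i) (C := 1) (D := Cφ * (1+ρ)) hE hR (by exact_mod_cast le_top) v ?_ ?_).trans ?_
      · intro j _; exact (expderiv j _).le
      · intro j hj1 hj
        exact Rbound hφ N Cφ ρ hC1 hρ hC τ ε hε0 hε1 hτ y v hv j hj1 (hj.trans hi)
      · rw [mul_one]
        gcongr
    · apply mulb ha' hg
      · intro i hi
        rw [compsc ha, norm_smul, norm_pow, Real.norm_of_nonneg hε0.le]
        calc _ ≤ 1 * Ca := by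
              gcongr
              · exact pow_le_one₀ hε0.le hε1
              · exact hCa i hi _
          _ = Ca := one_mul _
      · intro i hi; exact hCg i hi v
  · have : v ∉ tsupport (fun v => Complex.exp (Complex.I * ((τ * (φ (y + ε • v) - φ y - ε * fderiv ℝ φ y v) : ℝ) : ℂ)) *
      (a (y + ε • v) * g v)) := by
      intro h
      have h1 : v ∈ tsupport g := by
        refine closure_mono ?_ h
        intro w hw
        simp only [Function.mem_support] at hw ⊢
        intro h0; apply hw; rw [h0]; simp
      have := hgs h1
      rw [mem_closedBall_zero_iff] at this
      exact hv this
    have h0 : iteratedFDeriv ℝ k (fun v => Complex.exp (Complex.I * ((τ * (φ (y + ε • v) - φ y - ε * fderiv ℝ φ y v) : ℝ) : ℂ)) *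
      (a (y + ε • v) * g v)) v = 0 := by
      by_contra hne
      exact this (support_iteratedFDeriv_subset k hne)
    rw [h0, norm_zero]; positivity

open scoped FourierTransform in
lemma ftdecay {n : ℕ} (N : ℕ) (ρ : ℝ) : ∃ C1 : ℝ, 0 ≤ C1 ∧
    ∀ (F : EuclideanSpace ℝ (Fin n) → ℂ) (C0 : ℝ), ContDiff ℝ (⊤:ℕ∞) F →
    tsupport F ⊆ Metric.closedBall 0 ρ →
    (∀ k ≤ N, ∀ v, ‖iteratedFDeriv ℝ k F v‖ ≤ C0) → ∀ w : EuclideanSpace ℝ (Fin n),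
    ‖∫ v, Complex.exp (Complex.I * (⟪w, v⟫ : ℝ)) * F v‖ * (1 + ‖w‖)^N ≤ C1 * C0 := by
  set E := EuclideanSpace ℝ (Fin n)
  set V := (volume : Measure E).real (Metric.closedBall 0 ρ) with hV
  have hV0 : 0 ≤ V := measureReal_nonneg
  set W : ℕ → ℝ := fun j => 2^j * ((j+1) * V) with hW
  refine ⟨2^N * (W 0 + (2*π)^N * W N), by positivity, ?_⟩
  intro F C0 hF hs hC w
  have hC0 : 0 ≤ C0 := (norm_nonneg _).trans (hC 0 (by simp) 0)
  have hcs : HasCompactSupport F := (isCompact_closedBall 0 ρ).of_isClosed_subset isClosed_closure hs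
  have hint : ∀ k m : ℕ, Integrable (fun v : E => ‖v‖^k * ‖iteratedFDeriv ℝ m F v‖) := by
    intro k m
    apply Continuous.integrable_of_hasCompactSupport
    · have := hF.continuous_iteratedFDeriv (m := m) (by exact_mod_cast le_top)
      fun_prop
    · exact (hcs.iteratedFDeriv (𝕜 := ℝ) m).norm.mul_left
  have hI : ∀ m ≤ N, ∫ v : E, ‖v‖^0 * ‖iteratedFDeriv ℝ m F v‖ ≤ C0 * V := by
    intro m hm
    have h1 : ∀ v ∉ Metric.closedBall (0:E) ρ, ‖v‖^0 * ‖iteratedFDeriv ℝ m F v‖ = 0 := by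
      intro v hv
      have : iteratedFDeriv ℝ m F v = 0 := by
        by_contra hne
        exact hv (hs (support_iteratedFDeriv_subset m hne))
      rw [this]; simp
    rw [← setIntegral_eq_integral_of_forall_compl_eq_zero h1]
    have := norm_setIntegral_le_of_norm_le_const (μ := volume) (s := Metric.closedBall (0:E) ρ)
      (f := fun v => ‖v‖^0 * ‖iteratedFDeriv ℝ m F v‖) (C := C0) measure_closedBall_lt_top (by
        intro v _; simpa using hC m hm v)
    exact (le_abs_self _).trans this
  have hpow : ∀ j ≤ N, ∀ ξ : E, ‖ξ‖^j * ‖𝓕 F ξ‖ ≤ W j * C0 := by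
    intro j hj ξ
    have := Real.pow_mul_norm_iteratedFDeriv_fourier_le (K := ⊤) (N := ⊤) hF (fun k m _ _ => hint k m)
      (k := 0) (n := j) le_top le_top ξ
    rw [norm_iteratedFDeriv_zero] at this
    refine this.trans ?_
    simp only [pow_zero, zero_add, Nat.cast_zero, mul_zero, one_mul, Finset.range_one, Finset.sum_product, Finset.sum_singleton]
    have h2 : ∑ x ∈ Finset.range (j+1), ∫ v : E, ‖iteratedFDeriv ℝ x F v‖ ≤ ∑ x ∈ Finset.range (j+1), C0 * V := by
      apply Finset.sum_le_sum
      intro x hx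
      have hx : x ≤ j := by simpa [Nat.lt_succ_iff] using hx
      simpa using hI x (hx.trans hj)
    calc _ ≤ 2^j * ∑ x ∈ Finset.range (j+1), C0 * V := by gcongr
      _ = _ := by simp [hW]; ring
  have hft : ∫ v, Complex.exp (Complex.I * (⟪w, v⟫ : ℝ)) * F v = 𝓕 F (-(2*π)⁻¹ • w) := by
    rw [Real.fourier_eq]
    congr 1; ext v
    rw [Circle.smul_def, Real.fourierChar_apply, smul_eq_mul]
    congr 2
    rw [inner_smul_right, real_inner_comm]
    push_cast
    have : (π:ℂ) ≠ 0 := by exact_mod_cast pi_ne_zero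
    field_simp
  rw [hft]
  set X := ‖𝓕 F (-(2*π)⁻¹ • w)‖
  have a0 : X ≤ W 0 * C0 := by
    have h0 := hpow 0 (by simp) (-(2*π)⁻¹ • w)
    rw [pow_zero, one_mul] at h0; exact h0
  have a1 : ‖w‖^N * X ≤ (2*π)^N * (W N * C0) := by
    have := hpow N le_rfl (-(2*π)⁻¹ • w)
    rw [norm_smul, norm_neg, norm_inv, Real.norm_of_nonneg (by positivity), mul_pow, inv_pow] at this
    change ((2 * π) ^ N)⁻¹ * ‖w‖ ^ N * X ≤ _ at this
    have h3 := mul_le_mul_of_nonneg_left this (show 0 ≤ (2*π)^N by positivity)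
    refine le_trans (le_of_eq ?_) h3
    field_simp
  have a2 : (1+‖w‖)^N ≤ 2^N * (1 + ‖w‖^N) := by
    have := add_pow_le (zero_le_one (α := ℝ)) (norm_nonneg w) N
    rw [one_pow] at this
    refine this.trans ?_
    gcongr
    · norm_num
    · omega
  calc X * (1+‖w‖)^N ≤ X * (2^N * (1 + ‖w‖^N)) := by gcongr
    _ = 2^N * (X + ‖w‖^N * X) := by ring
    _ ≤ 2^N * (W 0 * C0 + (2*π)^N * (W N * C0)) := by gcongr
    _ = _ := by ring

lemma avg {n : ℕ} (f g : EuclideanSpace ℝ (Fin n) → ℂ) (hf : Continuous f) (hfs : HasCompactSupport f)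
    (hg : Continuous g) (hgs : HasCompactSupport g) (hg1 : ∫ v, g v = 1) (ε : ℝ) :
    ∫ η, f η = ∫ y, ∫ v, f (y + ε • v) * g v := by
  have hfi : Integrable f := hf.integrable_of_hasCompactSupport hfs
  have hgi : Integrable g := hg.integrable_of_hasCompactSupport hgs
  have hint : Integrable (Function.uncurry fun (y v : EuclideanSpace ℝ (Fin n)) => f (y + ε • v) * g v) (volume.prod volume) := by
    rw [integrable_prod_iff' (by
      apply Continuous.aestronglyMeasurable
      simp only [Function.uncurry_def]; fun_prop)]
    constructor
    · refine Filter.Eventually.of_forall fun v => ?_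
      exact (hfi.comp_add_right (ε • v)).mul_const (g v)
    · simp only [Function.uncurry, norm_mul]
      have : ∀ v : EuclideanSpace ℝ (Fin n), ∫ y, ‖f (y + ε • v)‖ * ‖g v‖ = (∫ y, ‖f y‖) * ‖g v‖ := by
        intro v
        rw [integral_mul_const, integral_add_right_eq_self (fun y => ‖f y‖)]
      simp_rw [this]
      exact hgi.norm.const_mul _
  rw [integral_integral_swap hint]
  have : ∀ v : EuclideanSpace ℝ (Fin n), ∫ y, f (y + ε • v) * g v = (∫ y, f y) * g v := by
    intro v
    rw [integral_mul_const, integral_add_right_eq_self f]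
  simp_rw [this]
  rw [integral_const_mul, hg1, mul_one]

set_option maxHeartbeats 800000 in
lemma disp_abs {n : ℕ} (φ : EuclideanSpace ℝ (Fin n) → ℝ) (hφ : ContDiff ℝ (⊤:ℕ∞) φ)
    (hφb : ∀ k : ℕ, ∃ C : ℝ, ∀ x, ‖iteratedFDeriv ℝ k φ x‖ ≤ C)
    (K : Set (EuclideanSpace ℝ (Fin n))) (hK : IsCompact K) (L : ℝ) (hL : 0 < L)
    (hbl : ∀ y ∈ K, ∀ y' ∈ K, ‖y - y'‖ ≤ L * ‖fderiv ℝ φ y - fderiv ℝ φ y'‖)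
    (ρ : ℝ) (hρ : 0 < ρ) (Ca : ℕ → ℝ) : ∃ C : ℝ, 0 < C ∧
    ∀ a : EuclideanSpace ℝ (Fin n) → ℂ, ContDiff ℝ (⊤:ℕ∞) a →
      (∀ k x, ‖iteratedFDeriv ℝ k a x‖ ≤ Ca k) → (∀ x, a x ≠ 0 → Metric.closedBall x ρ ⊆ K) →
      ∀ (z : EuclideanSpace ℝ (Fin n)) (τ : ℝ), τ ≠ 0 →
      ‖∫ η, Complex.exp (Complex.I * ((⟪z, η⟫ + τ * φ η : ℝ) : ℂ)) * a η‖ ≤ C * |τ|^(-(n:ℝ)/2) := by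
  set N := n + 1 with hN
  -- bump
  obtain ⟨g, hgsm, hgs, hg1⟩ : ∃ g : (EuclideanSpace ℝ (Fin n)) → ℂ, ContDiff ℝ (⊤:ℕ∞) g ∧ tsupport g ⊆ Metric.closedBall 0 ρ ∧
      ∫ v, g v = 1 := by
    let B : ContDiffBump (0 : (EuclideanSpace ℝ (Fin n))) := ⟨ρ/2, ρ, by positivity, by linarith⟩
    refine ⟨fun v => ((B.normed volume v : ℝ) : ℂ), ?_, ?_, ?_⟩
    · exact Complex.ofRealCLM.contDiff.comp B.contDiff_normed
    · have : tsupport (B.normed volume) = Metric.closedBall 0 ρ := B.tsupport_normed_eq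
      rw [← this]
      apply closure_mono
      intro v hv
      simp only [Function.mem_support] at hv ⊢
      exact fun h => hv (by rw [h]; simp)
    · rw [integral_complex_ofReal, B.integral_normed]; simp
  have hgc : HasCompactSupport g := (isCompact_closedBall 0 ρ).of_isClosed_subset isClosed_closure hgs
  choose Cφ0 hCφ0 using hφb
  set Cφ := 1 + ∑ k ∈ Finset.range (N+3), |Cφ0 k| with hCφ
  have hsum : ∀ (f : ℕ → ℝ) (M k : ℕ), k ≤ M → f k ≤ ∑ k ∈ Finset.range (M+1), |f k| := by
    intro f M k hk
    exact (le_abs_self _).trans (Finset.single_le_sum (f := fun k => |f k|) (fun i _ => abs_nonneg _) (by simp; omega))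
  have hC1 : 1 ≤ Cφ := by
    have : 0 ≤ ∑ k ∈ Finset.range (N+3), |Cφ0 k| := by positivity
    linarith
  have hC : ∀ k ≤ N + 2, ∀ x, ‖iteratedFDeriv ℝ k φ x‖ ≤ Cφ := by
    intro k hk x
    have := hsum Cφ0 (N+2) k hk
    linarith [hCφ0 k x]
  have hgb : ∀ k : ℕ, ∃ C : ℝ, ∀ x, ‖iteratedFDeriv ℝ k g x‖ ≤ C := by
    intro k
    exact (hgsm.continuous_iteratedFDeriv (m := k) (by exact_mod_cast le_top)).bounded_above_of_compact_support
      (hgc.iteratedFDeriv k)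
  choose Cg0 hCg0 using hgb
  set Cg := ∑ k ∈ Finset.range (N+1), |Cg0 k| with hCg
  set CA := ∑ k ∈ Finset.range (N+1), |Ca k| with hCA
  obtain ⟨C1, hC10, hft⟩ := ftdecay (n := n) N ρ
  set C0 := 2^N * (N.factorial * (Cφ * (1+ρ))^N) * (2^N * CA * Cg) with hC0
  have hC00 : 0 ≤ C0 := by positivity
  set J0 := ∫ x : (EuclideanSpace ℝ (Fin n)), (1 + ‖x‖)^(-(N:ℝ)) with hJ0
  have hJint : Integrable (fun x : (EuclideanSpace ℝ (Fin n)) => (1 + ‖x‖)^(-(N:ℝ))) := by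
    apply integrable_one_add_norm
    simp [hN]
  have hJ00 : 0 ≤ J0 := integral_nonneg fun x => by positivity
  set Vk := (volume : Measure (EuclideanSpace ℝ (Fin n))).real K with hVk
  refine ⟨1 + |Ca 0| * Vk + C1 * C0 * ((2*L)^n * J0), by positivity, ?_⟩
  intro a ha hCa hsupp z τ hτ
  have hτ0 : 0 < |τ| := abs_pos.2 hτ
  have hasK : ∀ x, a x ≠ 0 → x ∈ K := fun x hx => hsupp x hx (Metric.mem_closedBall_self hρ.le)
  have hac : HasCompactSupport a := by
    apply HasCompactSupport.of_support_subset_isCompact hK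
    intro x hx; exact hasK x hx
  set f : (EuclideanSpace ℝ (Fin n)) → ℂ := fun η => Complex.exp (Complex.I * ((⟪z, η⟫ + τ * φ η : ℝ) : ℂ)) * a η with hf
  have hfn : ∀ η, ‖f η‖ = ‖a η‖ := by
    intro η; simp only [hf]; rw [norm_mul, mul_comm Complex.I, Complex.norm_exp_ofReal_mul_I, one_mul]
  have hfc : Continuous f := by
    have := hφ.continuous; have := ha.continuous
    simp only [hf]; fun_prop
  have hfs : HasCompactSupport f := hac.mul_left
  rcases le_or_gt 1 |τ| with h1 | h1
  · set ε := |τ|^(-(1/2):ℝ) with hε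
    have hε0 : 0 < ε := by positivity
    have hε1 : ε ≤ 1 := rpow_le_one_of_one_le_of_nonpos h1 (by norm_num)
    have hτε : |τ| * ε^2 = 1 := by
      rw [hε, ← rpow_natCast, ← rpow_mul hτ0.le]; norm_num
      rw [rpow_neg_one, mul_inv_cancel₀ hτ0.ne']
    rw [avg f g hfc hfs hgsm.continuous hgc hg1 ε]
    set grad : (EuclideanSpace ℝ (Fin n)) → (EuclideanSpace ℝ (Fin n)) := fun y => (InnerProductSpace.toDual ℝ (EuclideanSpace ℝ (Fin n))).symm (fderiv ℝ φ y) with hgrad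
    set w : (EuclideanSpace ℝ (Fin n)) → (EuclideanSpace ℝ (Fin n)) := fun y => ε • (z + τ • grad y) with hw
    have hJ : ∀ y, ‖∫ v, f (y + ε • v) * g v‖ * (1 + ‖w y‖)^N ≤ C1 * C0 := by
      intro y
      set F : (EuclideanSpace ℝ (Fin n)) → ℂ := fun v => Complex.exp (Complex.I * ((τ * (φ (y + ε • v) - φ y - ε * fderiv ℝ φ y v) : ℝ) : ℂ)) *
        (a (y + ε • v) * g v) with hF
      have hFs : ContDiff ℝ (⊤:ℕ∞) F := by
        have h3 : ContDiff ℝ (⊤:ℕ∞) (fun x : ℝ => Complex.exp (Complex.I * x)) := by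
          have : ContDiff ℝ (⊤:ℕ∞) (fun x : ℝ => (x:ℂ)) := Complex.ofRealCLM.contDiff
          fun_prop
        have h4 : ContDiff ℝ (⊤:ℕ∞) (fun v => τ * (φ (y + ε • v) - φ y - ε * fderiv ℝ φ y v)) := by fun_prop
        have h5 : ContDiff ℝ (⊤:ℕ∞) (fun v => a (y + ε • v)) := by fun_prop
        exact (h3.comp h4).mul (h5.mul hgsm)
      have hFt : tsupport F ⊆ Metric.closedBall 0 ρ := by
        refine (closure_mono ?_).trans hgs
        intro v hv
        simp only [Function.mem_support] at hv ⊢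
        exact fun h => hv (by simp only [hF]; rw [h]; simp)
      have hFb : ∀ k ≤ N, ∀ v, ‖iteratedFDeriv ℝ k F v‖ ≤ C0 := by
        intro k hk v
        exact Fbound hφ N Cφ ρ hC1 hρ hC hgsm hgs Cg CA
          (fun k hk x => (hCg0 k x).trans (hsum Cg0 N k hk)) ha
          (fun k hk x => (hCa k x).trans (hsum Ca N k hk)) τ ε hε0 hε1 hτε y v k hk
      have key := hft F C0 hFs hFt hFb (w y)
      have heq : ∫ v, f (y + ε • v) * g v = Complex.exp (Complex.I * ((⟪z, y⟫ + τ * φ y : ℝ) : ℂ)) *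
          ∫ v, Complex.exp (Complex.I * (⟪w y, v⟫ : ℝ)) * F v := by
        rw [← integral_const_mul]
        congr 1; ext v
        simp only [hf, hF]
        rw [← mul_assoc, ← mul_assoc, ← mul_assoc, ← Complex.exp_add, ← Complex.exp_add]
        congr 3
        have h6 : ⟪w y, v⟫ = ε * (⟪z, v⟫ + τ * fderiv ℝ φ y v) := by
          simp only [hw, hgrad]
          rw [real_inner_smul_left, inner_add_left, real_inner_smul_left, InnerProductSpace.toDual_symm_apply]
        rw [h6, inner_add_right, real_inner_smul_right]
        push_cast; ring
      rw [heq, norm_mul, mul_comm Complex.I, Complex.norm_exp_ofReal_mul_I, one_mul]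
      exact key
    have hJz : ∀ y, y ∉ K → ∫ v, f (y + ε • v) * g v = 0 := by
      intro y hy
      rw [← integral_zero (EuclideanSpace ℝ (Fin n)) ℂ]
      congr 1; ext v
      by_cases hgv : g v = 0
      · rw [hgv, mul_zero]
      have hv : ‖v‖ ≤ ρ := by
        have := hgs (subset_tsupport _ hgv)
        rwa [mem_closedBall_zero_iff] at this
      by_cases hav : a (y + ε • v) = 0
      · simp only [hf]; rw [hav]; simp
      exfalso; apply hy
      apply hsupp _ hav
      rw [Metric.mem_closedBall, dist_self_add_right, norm_smul, Real.norm_of_nonneg hε0.le]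
      nlinarith [norm_nonneg v]
    rcases K.eq_empty_or_nonempty with hKe | hKne
    · have : ∀ y, ∫ v, f (y + ε • v) * g v = 0 := fun y => hJz y (by rw [hKe]; simp)
      simp_rw [this]; simp; positivity
    have hgradc : Continuous grad := by
      have : Continuous (fderiv ℝ φ) := hφ.continuous_fderiv (by simp)
      exact (InnerProductSpace.toDual ℝ (EuclideanSpace ℝ (Fin n))).symm.continuous.comp this
    obtain ⟨y₀, hy₀, hmin⟩ := hK.exists_isMinOn hKne (f := fun y => ‖w y‖) (by
      have : Continuous (fun y => ‖w y‖) := by simp only [hw]; fun_prop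
      exact this.continuousOn)
    have hlow : ∀ y ∈ K, ‖(2*L*ε)⁻¹ • (y - y₀)‖ ≤ ‖w y‖ := by
      intro y hy
      have h7 : ‖w y₀‖ ≤ ‖w y‖ := hmin hy
      have h8 := hbl y hy y₀ hy₀
      have h9 : ‖w y - w y₀‖ = ε * |τ| * ‖fderiv ℝ φ y - fderiv ℝ φ y₀‖ := by
        have : w y - w y₀ = (ε * τ) • (InnerProductSpace.toDual ℝ (EuclideanSpace ℝ (Fin n))).symm (fderiv ℝ φ y - fderiv ℝ φ y₀) := by
          simp only [hw, hgrad, map_sub]; module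
        rw [this, norm_smul, LinearIsometryEquiv.norm_map, norm_mul, Real.norm_of_nonneg hε0.le, Real.norm_eq_abs]
      have h10 : ‖w y - w y₀‖ ≤ 2 * ‖w y‖ := by
        have := norm_sub_le (w y) (w y₀); linarith
      rw [norm_smul, norm_inv, Real.norm_of_nonneg (by positivity), inv_mul_le_iff₀ (by positivity)]
      calc ‖y - y₀‖ ≤ L * ‖fderiv ℝ φ y - fderiv ℝ φ y₀‖ := h8
        _ = L * ((|τ| * ε^2) * ‖fderiv ℝ φ y - fderiv ℝ φ y₀‖) := by rw [hτε, one_mul]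
        _ = L * ε * (ε * |τ| * ‖fderiv ℝ φ y - fderiv ℝ φ y₀‖) := by ring
        _ ≤ L * ε * (2 * ‖w y‖) := by rw [← h9]; gcongr
        _ = _ := by ring
    have hbd : ∀ y, ‖∫ v, f (y + ε • v) * g v‖ ≤ C1 * C0 * (1 + ‖(2*L*ε)⁻¹ • (y - y₀)‖)^(-(N:ℝ)) := by
      intro y
      by_cases hy : y ∈ K
      · rw [rpow_neg (by positivity), rpow_natCast, ← div_eq_mul_inv, le_div_iff₀ (by positivity)]
        refine le_trans ?_ (hJ y)
        gcongr
        exact hlow y hy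
      · rw [hJz y hy, norm_zero]; positivity
    have hint2 : Integrable (fun y : (EuclideanSpace ℝ (Fin n)) => C1 * C0 * (1 + ‖(2*L*ε)⁻¹ • (y - y₀)‖)^(-(N:ℝ))) := by
      apply Integrable.const_mul
      have := (hJint.comp_smul (R := (2*L*ε)⁻¹) (by positivity)).comp_sub_right y₀
      exact this
    calc _ ≤ ∫ y, ‖∫ v, f (y + ε • v) * g v‖ := norm_integral_le_integral_norm _
      _ ≤ ∫ y, C1 * C0 * (1 + ‖(2*L*ε)⁻¹ • (y - y₀)‖)^(-(N:ℝ)) :=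
          integral_mono_of_nonneg (Filter.Eventually.of_forall fun y => norm_nonneg _) hint2
            (Filter.Eventually.of_forall hbd)
      _ = C1 * C0 * ((2*L*ε)^n * J0) := by
          rw [integral_const_mul, integral_sub_right_eq_self (fun y : (EuclideanSpace ℝ (Fin n)) => (1 + ‖(2*L*ε)⁻¹ • y‖)^(-(N:ℝ)))]
          congr 1
          rw [Measure.integral_comp_smul volume (fun y : (EuclideanSpace ℝ (Fin n)) => (1 + ‖y‖)^(-(N:ℝ)))]
          simp only [finrank_euclideanSpace, Fintype.card_fin, smul_eq_mul]
          congr 1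
          rw [abs_of_nonneg (by positivity), inv_pow, inv_inv]
      _ = C1 * C0 * ((2*L)^n * J0) * |τ|^(-(n:ℝ)/2) := by
          have : ε^n = |τ|^(-(n:ℝ)/2) := by
            rw [hε, ← rpow_natCast, ← rpow_mul hτ0.le]; congr 1; ring
          rw [mul_pow, this]; ring
      _ ≤ _ := by
          gcongr
          have : 0 ≤ |Ca 0| * Vk := by positivity
          linarith
  · have h2 : 1 ≤ |τ|^(-(n:ℝ)/2) := one_le_rpow_of_pos_of_le_one_of_nonpos hτ0 h1.le (by
      have : (0:ℝ) ≤ n := by positivity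
      linarith)
    have h3 : ‖∫ η, f η‖ ≤ |Ca 0| * Vk := by
      have h4 : ∀ v ∉ K, f v = 0 := by
        intro v hv
        have : a v = 0 := by by_contra hne; exact hv (hasK v hne)
        simp only [hf]; rw [this, mul_zero]
      rw [← setIntegral_eq_integral_of_forall_compl_eq_zero h4]
      apply norm_setIntegral_le_of_norm_le_const hK.measure_lt_top
      intro v _
      rw [hfn]
      have := hCa 0 v
      rw [norm_iteratedFDeriv_zero] at this
      exact this.trans (le_abs_self _)
    calc _ ≤ |Ca 0| * Vk := h3
      _ ≤ (1 + |Ca 0| * Vk + C1 * C0 * ((2*L)^n * J0)) * 1 := by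
        have : 0 ≤ C1 * C0 * ((2*L)^n * J0) := by positivity
        linarith
      _ ≤ _ := by gcongr

lemma cutoff {n : ℕ} (a a' b b' : ℝ) (ha : 0 < a) (haa : a < a') (hbb : b < b') (hb : 0 < b) :
    ∃ χ : EuclideanSpace ℝ (Fin n) → ℝ, ContDiff ℝ (⊤:ℕ∞) χ ∧ (∀ η, a' ≤ ‖η‖ → ‖η‖ ≤ b → χ η = 1) ∧
      (∀ η, χ η ≠ 0 → a ≤ ‖η‖ ∧ ‖η‖ ≤ b') ∧ (∀ η, 0 ≤ χ η) ∧ (∀ η, χ η ≤ 1) := by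
  have h1 : 0 < a'^2 - a^2 := by nlinarith
  have h2 : 0 < b'^2 - b^2 := by nlinarith
  refine ⟨fun η => Real.smoothTransition ((‖η‖^2 - a^2)/(a'^2-a^2)) * Real.smoothTransition ((b'^2 - ‖η‖^2)/(b'^2-b^2)),
    ?_, ?_, ?_, ?_, ?_⟩
  · have hn : ContDiff ℝ (⊤:ℕ∞) (fun η : EuclideanSpace ℝ (Fin n) => ‖η‖^2) := contDiff_norm_sq ℝ
    apply ContDiff.mul
    · exact Real.smoothTransition.contDiff.comp (by fun_prop)
    · exact Real.smoothTransition.contDiff.comp (by fun_prop)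
  · intro η h3 h4
    simp only
    rw [Real.smoothTransition.one_of_one_le, Real.smoothTransition.one_of_one_le, one_mul]
    · rw [le_div_iff₀ h2]; nlinarith [norm_nonneg η]
    · rw [le_div_iff₀ h1]; nlinarith [norm_nonneg η]
  · intro η h3
    have h4 := left_ne_zero_of_mul h3
    have h5 := right_ne_zero_of_mul h3
    constructor
    · by_contra hlt
      push Not at hlt
      apply h4
      apply Real.smoothTransition.zero_of_nonpos
      apply div_nonpos_of_nonpos_of_nonneg _ h1.le
      nlinarith [norm_nonneg η]
    · by_contra hlt
      push Not at hlt
      apply h5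
      apply Real.smoothTransition.zero_of_nonpos
      apply div_nonpos_of_nonpos_of_nonneg _ h2.le
      nlinarith [norm_nonneg η]
  · intro η; exact mul_nonneg (Real.smoothTransition.nonneg _) (Real.smoothTransition.nonneg _)
  · intro η; exact mul_le_one₀ (Real.smoothTransition.le_one _) (Real.smoothTransition.nonneg _) (Real.smoothTransition.le_one _)

lemma annsm {n : ℕ} (χ f : EuclideanSpace ℝ (Fin n) → ℝ) (hχ : ContDiff ℝ (⊤:ℕ∞) χ) (a : ℝ) (ha : 0 < a)
    (h0 : ∀ η, χ η ≠ 0 → a ≤ ‖η‖) (hf : ∀ x, x ≠ 0 → ContDiffAt ℝ (⊤:ℕ∞) f x) :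
    ContDiff ℝ (⊤:ℕ∞) (fun η => χ η * f η) := by
  rw [contDiff_iff_contDiffAt]
  intro x
  by_cases hx : x = 0
  · have : (fun η => χ η * f η) =ᶠ[nhds x] fun _ => 0 := by
      have := Metric.ball_mem_nhds x ha
      filter_upwards [this] with η hη
      by_cases h : χ η = 0
      · rw [h, zero_mul]
      · have := h0 η h
        rw [hx, mem_ball_zero_iff] at hη
        linarith
    exact contDiffAt_const.congr_of_eventuallyEq this
  · exact hχ.contDiffAt.mul (hf x hx)

lemma csbd {n : ℕ} {F : Type*} [NormedAddCommGroup F] [NormedSpace ℝ F] (f : EuclideanSpace ℝ (Fin n) → F) (hf : ContDiff ℝ (⊤:ℕ∞) f) (R : ℝ)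
    (h0 : ∀ η, f η ≠ 0 → ‖η‖ ≤ R) : HasCompactSupport f ∧
    ∀ k : ℕ, ∃ C : ℝ, ∀ x, ‖iteratedFDeriv ℝ k f x‖ ≤ C := by
  have hc : HasCompactSupport f := by
    apply HasCompactSupport.of_support_subset_isCompact (isCompact_closedBall 0 R)
    intro x hx
    rw [mem_closedBall_zero_iff]; exact h0 x hx
  exact ⟨hc, fun k => (hf.continuous_iteratedFDeriv (m := k) (by exact_mod_cast le_top)).bounded_above_of_compact_support
      (hc.iteratedFDeriv k)⟩

lemma sqrtfd {n : ℕ} (y : EuclideanSpace ℝ (Fin n)) (hy : y ≠ 0) :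
    HasFDerivAt (fun η : EuclideanSpace ℝ (Fin n) => √‖η‖)
      (InnerProductSpace.toDual ℝ _ ((1/(2*√‖y‖^3)) • y)) y := by
  have hp : 0 < ‖y‖ := norm_pos_iff.2 hy
  have h1 : HasFDerivAt (fun η : EuclideanSpace ℝ (Fin n) => ‖η‖^2) (2 • innerSL ℝ y) y := (hasStrictFDerivAt_norm_sq y).hasFDerivAt
  have h2 := (h1.sqrt (by positivity)).sqrt (by positivity)
  have h3 : (fun η : EuclideanSpace ℝ (Fin n) => √√(‖η‖^2)) = fun η => √‖η‖ := by
    ext η; rw [Real.sqrt_sq (norm_nonneg _)]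
  rw [h3] at h2
  refine h2.congr_fderiv ?_
  refine ContinuousLinearMap.ext fun v => ?_
  rw [InnerProductSpace.toDual_apply_apply, real_inner_smul_left]
  have h4 : √‖y‖^2 = ‖y‖ := Real.sq_sqrt hp.le
  have h5 : √‖y‖ ≠ 0 := by positivity
  simp only [Real.sqrt_sq (norm_nonneg _)]
  simp
  nth_rewrite 2 [← h4]
  field_simp

lemma bilip {n : ℕ} (m S : ℝ) (hm : 0 < m) (y y' : EuclideanSpace ℝ (Fin n))
    (h1 : m ≤ √‖y‖) (h2 : √‖y‖ ≤ S) (h1' : m ≤ √‖y'‖) (h2' : √‖y'‖ ≤ S) :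
    ‖y - y'‖ ≤ (2*S^3 + 6*S^4/m) * ‖(1/(2*√‖y‖^3)) • y - (1/(2*√‖y'‖^3)) • y'‖ := by
  set s := √‖y‖ with hs
  set s' := √‖y'‖ with hs'
  set p := (1/(2*s^3)) • y with hp
  set p' := (1/(2*s'^3)) • y' with hp'
  have hs0 : 0 < s := hm.trans_le h1
  have hs0' : 0 < s' := hm.trans_le h1'
  have hy : y = (2*s^3) • p := by rw [hp, smul_smul]; field_simp; simp
  have hy' : y' = (2*s'^3) • p' := by rw [hp', smul_smul]; field_simp; simp
  have hn : ‖y‖ = s^2 := (Real.sq_sqrt (norm_nonneg _)).symm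
  have hn' : ‖y'‖ = s'^2 := (Real.sq_sqrt (norm_nonneg _)).symm
  have hS : 0 < S := hs0.trans_le h2
  have hP : ‖p‖ = 1/(2*s) := by
    rw [hp, norm_smul, hn, Real.norm_of_nonneg (by positivity)]; field_simp
  have hP' : ‖p'‖ = 1/(2*s') := by
    rw [hp', norm_smul, hn', Real.norm_of_nonneg (by positivity)]; field_simp
  have e1 : s - s' = 2*s*s'*(‖p'‖ - ‖p‖) := by rw [hP, hP']; field_simp
  have e2 : |s - s'| ≤ 2*S*S*‖p-p'‖ := by
    rw [e1, abs_mul, abs_of_nonneg (by positivity), norm_sub_rev]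
    have := abs_norm_sub_norm_le p' p
    gcongr
  have e3 : |s^3 - s'^3| ≤ 2*S*S*‖p-p'‖ * (3*S^2) := by
    have : s^3 - s'^3 = (s-s')*(s^2+s*s'+s'^2) := by ring
    rw [this, abs_mul]
    rw [abs_of_nonneg (show 0 ≤ s^2+s*s'+s'^2 by positivity)]
    have : s^2+s*s'+s'^2 ≤ 3*S^2 := by nlinarith
    gcongr
  have e4 : y - y' = (2*s^3) • (p - p') + (2*(s^3-s'^3)) • p' := by
    rw [hy, hy'] ; module
  have e5 : ‖p'‖ ≤ 1/(2*m) := by rw [hP']; gcongr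
  calc ‖y - y'‖ ≤ ‖(2*s^3) • (p - p')‖ + ‖(2*(s^3-s'^3)) • p'‖ := by
        nth_rewrite 1 [e4]; exact norm_add_le _ _
    _ = 2*s^3*‖p-p'‖ + 2*|s^3-s'^3| * ‖p'‖ := by
        rw [norm_smul, norm_smul, Real.norm_of_nonneg (by positivity), norm_mul, Real.norm_eq_abs, Real.norm_eq_abs, abs_two]
    _ ≤ 2*S^3*‖p-p'‖ + 2*(2*S*S*‖p-p'‖ * (3*S^2)) * (1/(2*m)) := by gcongr
    _ = _ := by field_simp; ring

lemma ampb {b : ℝ → ℝ} (hb : ContDiff ℝ (⊤ : ℕ∞) b)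
    (hbdec : ∀ N k : ℕ, ∃ C : ℝ, ∀ y : ℝ, 0 ≤ y → (1 + y) ^ N * |iteratedDeriv k b y| ≤ C)
    {n : ℕ} (ν : EuclideanSpace ℝ (Fin n) → ℝ) (hν : ContDiff ℝ (⊤:ℕ∞) ν) (c : ℝ) (hc : 0 < c)
    (hνc : ∀ x, c ≤ ν x) (hνb : ∀ k : ℕ, 1 ≤ k → ∃ C : ℝ, ∀ x, ‖iteratedFDeriv ℝ k ν x‖ ≤ C) (N : ℕ) :
    ∃ C : ℝ, ∀ s : ℝ, 0 ≤ s → ∀ k ≤ N, ∀ x, ‖iteratedFDeriv ℝ k (fun η => b (ν η * s)) x‖ ≤ C := by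
  have h1 : ∃ D : ℝ, 1 ≤ D ∧ ∀ i, 1 ≤ i → i ≤ N → ∀ x, ‖iteratedFDeriv ℝ i ν x‖ ≤ D^i := by
    choose! C hC using hνb
    refine ⟨1 + ∑ i ∈ Finset.range (N+1), |C i|, by
      have : 0 ≤ ∑ i ∈ Finset.range (N+1), |C i| := by positivity
      linarith, fun i hi hiN x => ?_⟩
    have h2 : |C i| ≤ ∑ i ∈ Finset.range (N+1), |C i| :=
      Finset.single_le_sum (f := fun i => |C i|) (fun i _ => abs_nonneg _) (by simp; omega)
    have h3 : 1 ≤ 1 + ∑ i ∈ Finset.range (N+1), |C i| := by linarith [abs_nonneg (C i)]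
    calc _ ≤ C i := hC i hi x
      _ ≤ 1 + ∑ i ∈ Finset.range (N+1), |C i| := by linarith [le_abs_self (C i)]
      _ ≤ _ := le_self_pow₀ h3 (by omega)
  obtain ⟨D, hD1, hD⟩ := h1
  have h4 : ∃ A : ℝ, ∀ s : ℝ, 0 ≤ s → ∀ k ≤ N, ∀ ρ, c ≤ ρ → ‖iteratedFDeriv ℝ k (fun ρ => b (ρ * s)) ρ‖ ≤ A := by
    choose C hC using fun k => hbdec k k
    refine ⟨∑ i ∈ Finset.range (N+1), |C i / c^i|, fun s hs k hk ρ hρ => ?_⟩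
    have h2 : |C k / c^k| ≤ ∑ i ∈ Finset.range (N+1), |C i / c^i| :=
      Finset.single_le_sum (f := fun i => |C i / c^i|) (fun i _ => abs_nonneg _) (by simp; omega)
    refine le_trans ?_ h2
    rw [norm_iteratedFDeriv_eq_norm_iteratedDeriv]
    have h5 : (fun ρ => b (ρ * s)) = fun ρ => b (s * ρ) := by ext; rw [mul_comm]
    rw [h5, iteratedDeriv_comp_const_mul (n := k) (f := b) (hb.of_le (by exact_mod_cast le_top))]
    refine le_trans ?_ (le_abs_self _)
    rw [le_div_iff₀ (by positivity)]
    have h6 := hC k (s * ρ) (mul_nonneg hs (hc.le.trans hρ))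
    refine le_trans ?_ h6
    rw [norm_mul, norm_pow, Real.norm_of_nonneg hs, Real.norm_eq_abs]
    have h7 : (s * c)^k ≤ (1 + s*ρ)^k := by
      gcongr
      nlinarith
    calc _ = (s*c)^k * |iteratedDeriv k b (s*ρ)| := by rw [mul_pow]; ring
      _ ≤ _ := by gcongr
  obtain ⟨A, hA⟩ := h4
  have hA0 : 0 ≤ A := (norm_nonneg _).trans (hA 0 le_rfl 0 (by simp) c le_rfl)
  refine ⟨N.factorial * A * D^N, fun s hs k hk x => ?_⟩
  have h8 : ContDiff ℝ (⊤:ℕ∞) (fun ρ => b (ρ * s)) := hb.comp (by fun_prop)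
  have := norm_iteratedFDeriv_comp_le (n := k) (N := (⊤:ℕ∞)) (g := fun ρ => b (ρ * s)) (f := ν) h8 hν (by exact_mod_cast le_top) x
    (C := A) (D := D) (fun i hi => hA s hs i (hi.trans hk) _ (hνc x)) (fun i hi hik => hD i hi (hik.trans hk) x)
  refine this.trans ?_
  gcongr

lemma disp_conc {b : ℝ → ℝ} (hb : ContDiff ℝ (⊤ : ℕ∞) b)
    (hbdec : ∀ N k : ℕ, ∃ C : ℝ, ∀ y : ℝ, 0 ≤ y → (1 + y) ^ N * |iteratedDeriv k b y| ≤ C)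
    (c₀ c₁ : ℝ) (hc₀ : 0 < c₀) (hc₀₁ : c₀ ≤ c₁) (n : ℕ) :
    ∃ χ : EuclideanSpace ℝ (Fin n) → ℝ, ContDiff ℝ (⊤:ℕ∞) χ ∧ HasCompactSupport χ ∧
      (∀ η, c₀ ≤ ‖η‖ → ‖η‖ ≤ c₁ → χ η = 1) ∧
      (∀ η, χ η ≠ 0 → c₀/2 ≤ ‖η‖ ∧ ‖η‖ ≤ 2*c₁) ∧ (∀ η, 0 ≤ χ η) ∧ (∀ η, χ η ≤ 1) ∧
      ∃ C : ℝ, 0 < C ∧ ∀ s₁ s₂ : ℝ, 0 ≤ s₁ → 0 ≤ s₂ → ∀ (z : EuclideanSpace ℝ (Fin n)) (τ : ℝ), τ ≠ 0 →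
      ‖∫ η, Complex.exp (Complex.I * ((⟪z, η⟫ + τ * √‖η‖ : ℝ) : ℂ)) *
        ((b (‖η‖ * s₁) * b (‖η‖ * s₂) * χ η^2 : ℝ) : ℂ)‖ ≤ C * |τ|^(-(n:ℝ)/2) := by
  have hc₁ : 0 < c₁ := hc₀.trans_le hc₀₁
  obtain ⟨χ, hχ, hχ1, hχs, hχ0, hχ2⟩ := cutoff (n := n) (c₀/2) c₀ c₁ (2*c₁) (by positivity) (by linarith) (by linarith) hc₁
  obtain ⟨Χ, hΧ, hΧ1, hΧs, hΧ0, hΧ2⟩ := cutoff (n := n) (c₀/16) (c₀/8) (4*c₁) (5*c₁) (by positivity) (by linarith) (by linarith) (by linarith)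
  refine ⟨χ, hχ, (csbd χ hχ (2*c₁) fun η h => (hχs η h).2).1, hχ1, hχs, hχ0, hχ2, ?_⟩
  -- the phase
  have hphs := annsm Χ (fun η => √‖η‖) hΧ (c₀/16) (by positivity) (fun η h => (hΧs η h).1)
    (fun x hx => (contDiffAt_norm ℝ hx).sqrt (norm_ne_zero_iff.2 hx))
  have hphb := csbd _ hphs (5*c₁) (fun η h => (hΧs η (left_ne_zero_of_mul h)).2)
  -- norm replacement
  have hn0 := annsm Χ (fun η => ‖η‖ - c₀/16) hΧ (c₀/16) (by positivity) (fun η h => (hΧs η h).1)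
    (fun x hx => (contDiffAt_norm ℝ hx).sub contDiffAt_const)
  have hnb := csbd _ hn0 (5*c₁) (fun η h => (hΧs η (left_ne_zero_of_mul h)).2)
  set ν : EuclideanSpace ℝ (Fin n) → ℝ := fun η => c₀/16 + Χ η * (‖η‖ - c₀/16) with hνd
  have hν : ContDiff ℝ (⊤:ℕ∞) ν := contDiff_const.add hn0
  have hνc : ∀ x, c₀/16 ≤ ν x := by
    intro x
    by_cases h : Χ x = 0
    · simp only [hνd]; rw [h]; simp
    · have := (hΧs x h).1
      have : 0 ≤ Χ x * (‖x‖ - c₀/16) := mul_nonneg (hΧ0 x) (by linarith)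
      simp only [hνd]; linarith
  have hνb : ∀ k : ℕ, 1 ≤ k → ∃ C : ℝ, ∀ x, ‖iteratedFDeriv ℝ k ν x‖ ≤ C := by
    intro k hk
    obtain ⟨C, hC⟩ := hnb.2 k
    refine ⟨C, fun x => ?_⟩
    have : iteratedFDeriv ℝ k ν x = iteratedFDeriv ℝ k (fun η => Χ η * (‖η‖ - c₀/16)) x := by
      simp only [hνd]
      rw [fun_iteratedFDeriv_add contDiff_const (hn0.of_le (m := (k:ℕ)) (by exact_mod_cast le_top)), iteratedFDeriv_const_of_ne (by omega)]
      simp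
    rw [this]; exact hC x
  have hνχ : ∀ η, χ η ≠ 0 → ν η = ‖η‖ := by
    intro η h
    have h1 := hχs η h
    simp only [hνd]
    rw [hΧ1 η (by linarith) (by linarith)]; ring
  have hamp := fun N => ampb hb hbdec ν hν (c₀/16) (by positivity) hνc hνb N
  choose Cb hCb using hamp
  choose Cx hCx using (csbd χ hχ (2*c₁) fun η h => (hχs η h).2).2
  set A : ℝ → EuclideanSpace ℝ (Fin n) → ℂ := fun s η => ((b (ν η * s) : ℝ) : ℂ) with hA
  have hof : ∀ (f : EuclideanSpace ℝ (Fin n) → ℝ), ContDiff ℝ (⊤:ℕ∞) f → ∀ k : ℕ, ∀ x,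
      ‖iteratedFDeriv ℝ k (fun η => (f η : ℂ)) x‖ = ‖iteratedFDeriv ℝ k f x‖ := by
    intro f hf k x
    exact Complex.ofRealLI.norm_iteratedFDeriv_comp_left (hf.contDiffAt.of_le (by exact_mod_cast le_top)) le_rfl
  have hbs : ∀ s, ContDiff ℝ (⊤:ℕ∞) (fun η => b (ν η * s)) := fun s => hb.comp (by fun_prop)
  have hofs : ∀ (f : EuclideanSpace ℝ (Fin n) → ℝ), ContDiff ℝ (⊤:ℕ∞) f → ContDiff ℝ (⊤:ℕ∞) (fun η => (f η : ℂ)) :=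
    fun f hf => Complex.ofRealCLM.contDiff.comp hf
  obtain ⟨CX, hCX⟩ : ∃ CX : ℕ → ℝ, ∀ N, ∀ i ≤ N, ∀ x, ‖iteratedFDeriv ℝ i χ x‖ ≤ CX N := by
    refine ⟨fun N => ∑ i ∈ Finset.range (N+1), |Cx i|, fun N i hi x => ?_⟩
    exact (hCx i x).trans ((le_abs_self _).trans
      (Finset.single_le_sum (f := fun i => |Cx i|) (fun i _ => abs_nonneg _) (by simp; omega)))
  set P1 : ℕ → ℝ := fun N => 2^N * Cb N * CX N with hP1
  have hb1 : ∀ s, 0 ≤ s → ∀ N, ∀ k ≤ N, ∀ x, ‖iteratedFDeriv ℝ k (fun η => ((b (ν η * s) : ℝ) : ℂ) * (χ η : ℂ)) x‖ ≤ P1 N := by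
    intro s hs N k hk x
    exact mulb (hofs _ (hbs s)) (hofs _ hχ) x N (Cb N) (CX N)
      (fun i hi => by rw [hof _ (hbs s)]; exact hCb N s hs i hi x)
      (fun i hi => by rw [hof _ hχ]; exact hCX N i hi x) k hk
  obtain ⟨C, hC0, hC⟩ := disp_abs (n := n) (fun η => Χ η * √‖η‖) hphs hphb.2
    {η | c₀/4 ≤ ‖η‖ ∧ ‖η‖ ≤ 3*c₁} (by
      apply (isCompact_closedBall (0 : EuclideanSpace ℝ (Fin n)) (3*c₁)).of_isClosed_subset
      · exact (isClosed_le continuous_const continuous_norm).inter (isClosed_le continuous_norm continuous_const)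
      · intro x hx; rw [mem_closedBall_zero_iff]; exact hx.2)
    (2*√(3*c₁)^3 + 6*√(3*c₁)^4/√(c₀/4)) (by positivity) (by
      have hfd : ∀ y : EuclideanSpace ℝ (Fin n), c₀/4 ≤ ‖y‖ → ‖y‖ ≤ 3*c₁ → fderiv ℝ (fun η => Χ η * √‖η‖) y =
          InnerProductSpace.toDual ℝ _ ((1/(2*√‖y‖^3)) • y) := by
        intro y h1 h2
        have hy : y ≠ 0 := by rw [← norm_ne_zero_iff]; intro h; linarith
        rw [← (sqrtfd y hy).fderiv]
        apply Filter.EventuallyEq.fderiv_eq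
        have hc : ContinuousAt (fun η : EuclideanSpace ℝ (Fin n) => ‖η‖) y := continuous_norm.continuousAt
        filter_upwards [hc.eventually (lt_mem_nhds (show c₀/8 < ‖y‖ by linarith)), hc.eventually (gt_mem_nhds (show ‖y‖ < 4*c₁ by linarith))] with η h3 h4
        rw [hΧ1 η h3.le h4.le, one_mul]
      rintro y ⟨h1, h2⟩ y' ⟨h1', h2'⟩
      rw [hfd y h1 h2, hfd y' h1' h2', ← map_sub, LinearIsometryEquiv.norm_map]
      exact bilip _ _ (by positivity) y y' (Real.sqrt_le_sqrt h1) (Real.sqrt_le_sqrt h2) (Real.sqrt_le_sqrt h1') (Real.sqrt_le_sqrt h2'))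
    (c₀/4) (by positivity) (fun N => 2^N * P1 N * P1 N)
  refine ⟨C, hC0, fun s₁ s₂ hs₁ hs₂ z τ hτ => ?_⟩
  have hsm : ∀ s, ContDiff ℝ (⊤:ℕ∞) (fun η => ((b (ν η * s) : ℝ) : ℂ) * (χ η : ℂ)) := fun s =>
    (hofs _ (hbs s)).mul (hofs _ hχ)
  have key := hC (fun η => (((b (ν η * s₁) : ℝ) : ℂ) * (χ η : ℂ)) * (((b (ν η * s₂) : ℝ) : ℂ) * (χ η : ℂ)))
    ((hsm s₁).mul (hsm s₂))
    (fun k x => mulb (hsm s₁) (hsm s₂) x k (P1 k) (P1 k) (fun i hi => hb1 s₁ hs₁ k i hi x)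
      (fun i hi => hb1 s₂ hs₂ k i hi x) k le_rfl)
    (by
      intro x hx y hy
      have h1 : χ x ≠ 0 := by
        intro h; apply hx; simp only [h]; simp
      have h2 := hχs x h1
      rw [Metric.mem_closedBall, dist_eq_norm] at hy
      have h3 := abs_norm_sub_norm_le y x
      rw [abs_le] at h3
      constructor <;> linarith) z τ hτ
  refine le_trans (le_of_eq ?_) key
  congr 2; ext η
  by_cases h : χ η = 0
  · simp only [h]; simp
  · have h1 := hχs η h
    rw [hνχ η h, hΧ1 η (by linarith) (by linarith), one_mul]
    push_cast; ring

set_option maxHeartbeats 800000 in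
lemma stri_conc {n : ℕ} (S : Set (EuclideanSpace ℝ (Fin n))) (hS : IsCompact S)
    (g : ℝ → ℝ → EuclideanSpace ℝ (Fin n) → ℝ)
    (hg : Continuous (fun p : ℝ × ℝ × EuclideanSpace ℝ (Fin n) => g p.1 p.2.1 p.2.2))
    (M : ℝ) (hM : ∀ t x ξ, |g t x ξ| ≤ M) (β : ℝ → ℝ) (B A σ q r : ℝ) (hq : 2 < q) (hr : 2 < r)
    (hA : 0 < A) (hB0 : 0 ≤ B) (hqr : 1/q = σ * (1/2 - 1/r))
    (hβ : ∀ t x ξ, ξ ∈ S → 0 < x → (g t x ξ)^2 ≤ β x)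
    (hβi : ∫⁻ x in Set.Ioi (0:ℝ), ENNReal.ofReal (β x) ≤ ENNReal.ofReal B)
    (hK : ∀ t ∈ Set.Icc (0:ℝ) 1, ∀ s ∈ Set.Icc (0:ℝ) 1, t ≠ s → ∀ x₁ x₂, ∀ z : EuclideanSpace ℝ (Fin n),
      ‖∫ ξ in S, Complex.exp (Complex.I * (⟪z, ξ⟫ : ℝ)) * ((g t x₁ ξ * g s x₂ ξ : ℝ) : ℂ)‖ ≤ A * |t - s|^(-σ))
    (h : EuclideanSpace ℝ (Fin n) → ℂ) (hh : MemLp h 2 (volume.restrict S)) :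
    ∫⁻ t in Set.Icc (0:ℝ) 1, (∫⁻ x : ℝ × EuclideanSpace ℝ (Fin n),
      ‖∫ ξ in S, Complex.exp (Complex.I * (⟪x.2, ξ⟫ : ℝ)) * (g t x.1 ξ : ℂ) * h ξ‖ₑ ^ r
        ∂((volume.restrict (Set.Ioi 0)).prod volume))^(q/r) ≤
    ENNReal.ofReal (((4*r/(r-2))^(1/r) * ((2*π)^n * B)^(2/r) * (2*A)^(1-2/r) * (2*(2/(1-2/q)+2)) *
      ∫ ξ in S, ‖h ξ‖^2)^(q/2)) := by
  have hM0 : 0 ≤ M := (abs_nonneg _).trans (hM 0 0 0)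
  have : IsFiniteMeasure (volume.restrict S) := ⟨by simpa using hS.measure_lt_top⟩
  set G : ℝ → ℝ × EuclideanSpace ℝ (Fin n) → EuclideanSpace ℝ (Fin n) → ℂ := fun t x ξ =>
    Complex.exp (-(Complex.I * (⟪x.2, ξ⟫ : ℝ))) * (g t x.1 ξ : ℂ) with hG
  have hGc : Continuous (fun p : (ℝ × (ℝ × EuclideanSpace ℝ (Fin n))) × EuclideanSpace ℝ (Fin n) => G p.1.1 p.1.2 p.2) := by
    have h1 : Continuous (fun p : (ℝ × (ℝ × EuclideanSpace ℝ (Fin n))) × EuclideanSpace ℝ (Fin n) => g p.1.1 p.1.2.1 p.2) :=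
      hg.comp (f := fun p : (ℝ × (ℝ × EuclideanSpace ℝ (Fin n))) × EuclideanSpace ℝ (Fin n) => (p.1.1, p.1.2.1, p.2)) (by fun_prop)
    simp only [hG]
    fun_prop
  have hGc1 : ∀ t x, Continuous (G t x) := fun t x =>
    hGc.comp (f := fun ξ => ((t, x), ξ)) (by fun_prop)
  have hGn : ∀ t x ξ, ‖G t x ξ‖ = |g t x.1 ξ| := by
    intro t x ξ
    simp only [hG]
    have : -(Complex.I * ((⟪x.2, ξ⟫ : ℝ):ℂ)) = ((-⟪x.2, ξ⟫ : ℝ) : ℂ) * Complex.I := by push_cast; ring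
    rw [norm_mul, this, Complex.norm_exp_ofReal_mul_I, one_mul, Complex.norm_real, Real.norm_eq_abs]
  have hmem : ∀ t x, MemLp (G t x) 2 (volume.restrict S) := fun t x =>
    MemLp.of_bound (hGc1 t x).aestronglyMeasurable M (Filter.Eventually.of_forall fun ξ => by rw [hGn]; exact hM _ _ _)
  set e : ℝ → ℝ × EuclideanSpace ℝ (Fin n) → Lp ℂ 2 (volume.restrict S) := fun t x => (hmem t x).toLp with he
  have hinner : ∀ t x (f : Lp ℂ 2 (volume.restrict S)), inner ℂ (e t x) f =
      ∫ ξ in S, Complex.exp (Complex.I * (⟪x.2, ξ⟫ : ℝ)) * (g t x.1 ξ : ℂ) * f ξ := by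
    intro t x f
    rw [MeasureTheory.L2.inner_def]
    apply integral_congr_ae
    filter_upwards [(hmem t x).coeFn_toLp] with ξ hξ
    simp only [he]
    rw [hξ, RCLike.inner_apply]
    simp only [hG]
    rw [map_mul, Complex.conj_ofReal, ← Complex.exp_conj]
    simp only [map_neg, map_mul, Complex.conj_I, Complex.conj_ofReal]
    rw [neg_mul, neg_neg]; ring
  have hnsq : ∀ (f : EuclideanSpace ℝ (Fin n) → ℂ) (hf : MemLp f 2 (volume.restrict S)), ‖hf.toLp‖^2 = ∫ ξ in S, ‖f ξ‖^2 := by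
    intro f hf
    have h1 : (inner ℂ hf.toLp hf.toLp : ℂ) = ((∫ ξ in S, ‖f ξ‖^2 : ℝ) : ℂ) := by
      rw [MeasureTheory.L2.inner_def, ← integral_complex_ofReal]
      apply integral_congr_ae
      filter_upwards [hf.coeFn_toLp] with ξ hξ
      rw [hξ, inner_self_eq_norm_sq_to_K]; push_cast; rfl
    have h2 := inner_self_eq_norm_sq_to_K (𝕜 := ℂ) hf.toLp
    rw [h1] at h2
    exact (Complex.ofReal_injective (h2.trans (by push_cast; rfl))).symm
  have hec : Continuous (fun p : ℝ × (ℝ × EuclideanSpace ℝ (Fin n)) => e p.1 p.2) := by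
    rw [continuous_iff_continuousAt]
    intro p₀
    rw [ContinuousAt, tendsto_iff_norm_sub_tendsto_zero]
    have h1 : Continuous (fun p : ℝ × (ℝ × EuclideanSpace ℝ (Fin n)) => ∫ ξ in S, ‖G p.1 p.2 ξ - G p₀.1 p₀.2 ξ‖^2) := by
      apply continuous_parametric_integral_of_continuous _ hS
      have := hGc1 p₀.1 p₀.2
      simp only [Function.uncurry_def]
      fun_prop
    have h2 := (h1.tendsto p₀).sqrt
    simp only [sub_self, norm_zero] at h2
    rw [show √(∫ ξ in S, (0:ℝ)^2) = 0 by simp] at h2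
    refine h2.congr fun p => ?_
    simp only [he]
    rw [← MemLp.toLp_sub, ← Real.sqrt_sq (norm_nonneg (MemLp.toLp _ _)), hnsq]
    rfl
  have hes : StronglyMeasurable (Function.uncurry e) := hec.stronglyMeasurable
  have hen : ∀ t x, ‖e t x‖ ≤ √(∫ ξ in S, M^2) := by
    intro t x
    rw [← Real.sqrt_sq (norm_nonneg (e t x))]
    apply Real.sqrt_le_sqrt
    simp only [he]
    rw [hnsq]
    apply integral_mono_of_nonneg
    · exact Filter.Eventually.of_forall fun ξ => by positivity
    · exact integrable_const _
    · refine Filter.Eventually.of_forall fun ξ => ?_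
      simp only
      rw [hGn]; have := hM t x.1 ξ; gcongr
  have key := stri ((volume.restrict (Set.Ioi (0:ℝ))).prod (volume : Measure (EuclideanSpace ℝ (Fin n)))) e hes _ hen
    A ((2*π)^n * B) σ q r hq hr hA (by positivity) hqr ?_ ?_ hh.toLp
  · rw [hnsq h hh] at key
    refine le_trans (le_of_eq ?_) key
    congr 1; ext t
    congr 1
    congr 1; ext x
    rw [hinner]
    congr 2
    apply integral_congr_ae
    filter_upwards [hh.coeFn_toLp] with ξ hξ
    rw [hξ]
  · intro t ht f
    have hfm := Lp.memLp f
    have hmeas : Measurable (fun x : ℝ × EuclideanSpace ℝ (Fin n) => ‖(inner ℂ (e t x) f : ℂ)‖ₑ^2) := by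
      have : Continuous (fun x : ℝ × EuclideanSpace ℝ (Fin n) => (inner ℂ (e t x) f : ℂ)) := by
        have : Continuous (e t) := hec.comp (f := fun x => (t, x)) (by fun_prop)
        fun_prop
      have := this.measurable
      fun_prop
    rw [lintegral_prod _ hmeas.aemeasurable]
    have hnf : ENNReal.ofReal (‖f‖^2) = ∫⁻ ξ in S, ‖f ξ‖ₑ^2 := by
      have h1 := hnsq f hfm
      rw [Lp.toLp_coeFn] at h1
      rw [h1, ofReal_integral_eq_lintegral_ofReal hfm.integrable_norm_pow' (Filter.Eventually.of_forall fun _ => by positivity)]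
      congr 1; ext ξ
      rw [ENNReal.ofReal_pow (norm_nonneg _), ofReal_norm]
    have hx : ∀ x ∈ Set.Ioi (0:ℝ), ∫⁻ y : EuclideanSpace ℝ (Fin n), ‖(inner ℂ (e t (x, y)) f : ℂ)‖ₑ^2 ≤
        ENNReal.ofReal (β x) * (ENNReal.ofReal ((2*π)^n) * ENNReal.ofReal (‖f‖^2)) := by
      intro x hx
      set F : EuclideanSpace ℝ (Fin n) → ℂ := S.indicator (fun ξ => (g t x ξ : ℂ) * f ξ) with hF
      have hgx : Continuous (g t x) := hg.comp (f := fun ξ => (t, x, ξ)) (by fun_prop)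
      have hm1 : MemLp (fun ξ => (g t x ξ : ℂ) * f ξ) 2 (volume.restrict S) := by
        refine MemLp.of_le_mul (c := M) hfm ?_ ?_
        · exact ((Complex.continuous_ofReal.comp hgx).aestronglyMeasurable).mul hfm.1
        · refine Filter.Eventually.of_forall fun ξ => ?_
          rw [norm_mul, Complex.norm_real, Real.norm_eq_abs]
          have := hM t x ξ; gcongr
      have hF2 : MemLp F 2 volume := (memLp_indicator_iff_restrict hS.measurableSet).2 hm1
      have hF1 : Integrable F volume := by
        rw [integrable_indicator_iff hS.measurableSet]
        exact hm1.integrable (by norm_num)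
      have hp := planch F hF1 hF2
      have h2 : ∀ y : EuclideanSpace ℝ (Fin n), (inner ℂ (e t (x, y)) f : ℂ) = ∫ ξ, Complex.exp (Complex.I * (⟪y, ξ⟫ : ℝ)) * F ξ := by
        intro y
        rw [hinner, ← integral_indicator hS.measurableSet]
        congr 1; ext ξ
        by_cases hξ : ξ ∈ S
        · simp only [hF, Set.indicator_of_mem hξ]; ring
        · simp only [hF, Set.indicator_of_notMem hξ, mul_zero]
      simp_rw [h2]
      rw [hp]
      have h3 : ∫⁻ ξ, ‖F ξ‖ₑ^2 ≤ ENNReal.ofReal (β x) * ∫⁻ ξ in S, ‖f ξ‖ₑ^2 := by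
        rw [← lintegral_const_mul' _ _ ENNReal.ofReal_ne_top, ← lintegral_indicator hS.measurableSet]
        apply lintegral_mono
        intro ξ
        by_cases hξ : ξ ∈ S
        · simp only [hF, Set.indicator_of_mem hξ]
          rw [enorm_mul, mul_pow]
          gcongr
          rw [← ofReal_norm, ← ENNReal.ofReal_pow (norm_nonneg _), Complex.norm_real, Real.norm_eq_abs, sq_abs]
          exact ENNReal.ofReal_le_ofReal (hβ t x ξ hξ hx)
        · simp only [hF, Set.indicator_of_notMem hξ]; simp
      rw [hnf]
      calc _ ≤ ENNReal.ofReal ((2*π)^n) * (ENNReal.ofReal (β x) * ∫⁻ ξ in S, ‖f ξ‖ₑ^2) := by gcongr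
        _ = _ := by ring
    calc _ ≤ ∫⁻ x in Set.Ioi (0:ℝ), ENNReal.ofReal (β x) * (ENNReal.ofReal ((2*π)^n) * ENNReal.ofReal (‖f‖^2)) :=
          setLIntegral_mono' measurableSet_Ioi hx
      _ = (∫⁻ x in Set.Ioi (0:ℝ), ENNReal.ofReal (β x)) * (ENNReal.ofReal ((2*π)^n) * ENNReal.ofReal (‖f‖^2)) :=
          lintegral_mul_const' _ _ (ENNReal.mul_ne_top ENNReal.ofReal_ne_top ENNReal.ofReal_ne_top)
      _ ≤ ENNReal.ofReal B * (ENNReal.ofReal ((2*π)^n) * ENNReal.ofReal (‖f‖^2)) := by gcongr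
      _ = _ := by
          rw [← ENNReal.ofReal_mul (by positivity), ← ENNReal.ofReal_mul hB0]; congr 1; ring
  · intro t ht s hs hts x y
    have h1 := hK t ht s hs hts x.1 y.1 (x.2 - y.2)
    refine le_trans (le_of_eq ?_) h1
    rw [hinner]
    congr 1
    apply integral_congr_ae
    filter_upwards [(hmem s y).coeFn_toLp] with ξ hξ
    simp only [he]
    rw [hξ]
    simp only [hG]
    have h2 : Complex.exp (Complex.I * ((⟪x.2 - y.2, ξ⟫ : ℝ) : ℂ)) = Complex.exp (Complex.I * ((⟪x.2, ξ⟫ : ℝ) : ℂ)) * Complex.exp (-(Complex.I * ((⟪y.2, ξ⟫ : ℝ) : ℂ))) := by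
      rw [← Complex.exp_add, inner_sub_left]; congr 1; push_cast; ring
    rw [h2]; push_cast; ring

lemma tail_int (k : ℝ) (hk : 0 < k) :
    ∫⁻ x in Set.Ioi (0:ℝ), ENNReal.ofReal (1/(1+k*x)^2) ≤ ENNReal.ofReal (1/k) := by
  have hd : ∀ x ∈ Set.Ici (0:ℝ), HasDerivAt (fun x => -(1/(k*(1+k*x)))) (1/(1+k*x)^2) x := by
    intro x hx
    have hx : 0 ≤ x := hx
    have h1 : HasDerivAt (fun x : ℝ => k*(1+k*x)) (k*(k*1)) x :=
      ((((hasDerivAt_id x).const_mul k).const_add 1)).const_mul k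
    have h2 := (h1.inv (by positivity)).neg
    have h3 : (fun x : ℝ => -(1/(k*(1+k*x)))) = -(fun x : ℝ => k*(1+k*x))⁻¹ := by
      ext; simp
    rw [h3]
    refine h2.congr_deriv ?_
    have : 1 + k*x ≠ 0 := by positivity
    field_simp
  have hpos : ∀ x ∈ Set.Ioi (0:ℝ), 0 ≤ 1/(1+k*x)^2 := fun x _ => by positivity
  have ht : Filter.Tendsto (fun x => -(1/(k*(1+k*x)))) Filter.atTop (nhds 0) := by
    have h1 : Filter.Tendsto (fun x : ℝ => k*(1+k*x)) Filter.atTop Filter.atTop := by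
      apply Filter.Tendsto.const_mul_atTop hk
      apply Filter.tendsto_atTop_add_const_left
      exact Filter.tendsto_id.const_mul_atTop hk
    have := (tendsto_inv_atTop_zero.comp h1).neg
    simpa [Function.comp_def] using this
  have hi := integrableOn_Ioi_deriv_of_nonneg' hd hpos ht
  have hv := integral_Ioi_of_hasDerivAt_of_nonneg' hd hpos ht
  rw [← ofReal_integral_eq_lintegral_ofReal hi ((ae_restrict_iff' measurableSet_Ioi).2 (Filter.Eventually.of_forall hpos)), hv]
  simp

lemma cosexp (a c : ℝ) : ((Real.cos a * Real.cos c : ℝ) : ℂ) = (1/4 : ℂ) * (Complex.exp (Complex.I * ((a - c : ℝ) : ℂ)) +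
   Complex.exp (Complex.I * ((-(a - c) : ℝ) : ℂ)) + Complex.exp (Complex.I * ((a + c : ℝ) : ℂ)) + Complex.exp (Complex.I * ((-(a + c) : ℝ) : ℂ))) := by
  push_cast
  rw [Complex.cos, Complex.cos]
  have e1 : Complex.exp (Complex.I * ((a:ℂ) - c)) = Complex.exp (a * Complex.I) * Complex.exp (-c * Complex.I) := by
    rw [← Complex.exp_add]; congr 1; ring
  have e2 : Complex.exp (Complex.I * (-((a:ℂ) - c))) = Complex.exp (-a * Complex.I) * Complex.exp (c * Complex.I) := by
    rw [← Complex.exp_add]; congr 1; ring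
  have e3 : Complex.exp (Complex.I * ((a:ℂ) + c)) = Complex.exp (a * Complex.I) * Complex.exp (c * Complex.I) := by
    rw [← Complex.exp_add]; congr 1; ring
  have e4 : Complex.exp (Complex.I * (-((a:ℂ) + c))) = Complex.exp (-a * Complex.I) * Complex.exp (-c * Complex.I) := by
    rw [← Complex.exp_add]; congr 1; ring
  rw [e1, e2, e3, e4]; ring

lemma kerb {n : ℕ} {b : ℝ → ℝ} (hb : Continuous b) (χ : EuclideanSpace ℝ (Fin n) → ℝ) (hχ : Continuous χ)
    (hχc : HasCompactSupport χ) (Cd : ℝ) (hCd0 : 0 < Cd)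
    (hCd : ∀ s₁ s₂ : ℝ, 0 ≤ s₁ → 0 ≤ s₂ → ∀ (z : EuclideanSpace ℝ (Fin n)) (τ : ℝ), τ ≠ 0 →
      ‖∫ η, Complex.exp (Complex.I * ((⟪z, η⟫ + τ * √‖η‖ : ℝ) : ℂ)) *
        ((b (‖η‖ * s₁) * b (‖η‖ * s₂) * χ η^2 : ℝ) : ℂ)‖ ≤ Cd * |τ|^(-(n:ℝ)/2))
    (μ l : ℝ) (hμ : 0 < μ) (hl : 0 < l) (t s : ℝ) (ht : 0 ≤ t) (hs : 0 ≤ s) (hts : t ≠ s) (x₁ x₂ : ℝ)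
    (z : EuclideanSpace ℝ (Fin n)) :
    ‖∫ ξ, Complex.exp (Complex.I * (⟪z, ξ⟫ : ℝ)) *
      (((b (‖ξ‖ * |x₁|) * Real.cos (t * √μ * √‖ξ‖) * χ (l⁻¹ • ξ)) *
        (b (‖ξ‖ * |x₂|) * Real.cos (s * √μ * √‖ξ‖) * χ (l⁻¹ • ξ)) : ℝ) : ℂ)‖
      ≤ Cd * μ^(-(n:ℝ)/4) * l^(3*(n:ℝ)/4) * |t - s|^(-((n:ℝ)/2)) := by
  set f : EuclideanSpace ℝ (Fin n) → ℂ := fun ξ => Complex.exp (Complex.I * (⟪z, ξ⟫ : ℝ)) *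
      (((b (‖ξ‖ * |x₁|) * Real.cos (t * √μ * √‖ξ‖) * χ (l⁻¹ • ξ)) *
        (b (‖ξ‖ * |x₂|) * Real.cos (s * √μ * √‖ξ‖) * χ (l⁻¹ • ξ)) : ℝ) : ℂ) with hf
  have h1 := Measure.integral_comp_smul (volume : Measure (EuclideanSpace ℝ (Fin n))) f l
  rw [finrank_euclideanSpace, Fintype.card_fin, abs_of_nonneg (by positivity)] at h1
  have h2 : ∫ ξ, f ξ = (l^n : ℝ) • ∫ η, f (l • η) := by
    rw [h1, smul_smul, mul_inv_cancel₀ (by positivity), one_smul]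
  set w := √(μ * l) with hw
  have hw0 : 0 < w := by positivity
  set J : ℝ → EuclideanSpace ℝ (Fin n) → ℂ := fun τ η => Complex.exp (Complex.I * ((⟪l • z, η⟫ + τ * √‖η‖ : ℝ) : ℂ)) *
        ((b (‖η‖ * (l * |x₁|)) * b (‖η‖ * (l * |x₂|)) * χ η^2 : ℝ) : ℂ) with hJ
  have hJi : ∀ τ, Integrable (J τ) := by
    intro τ
    apply Continuous.integrable_of_hasCompactSupport
    · simp only [hJ]; fun_prop
    · apply HasCompactSupport.mul_left
      apply HasCompactSupport.intro hχc
      intro η hη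
      rw [image_eq_zero_of_notMem_tsupport hη]; simp
  have h3 : ∀ η, f (l • η) = (1/4:ℂ) * (J (w * (t - s)) η + J (-(w * (t - s))) η + J (w * (t + s)) η + J (-(w * (t + s))) η) := by
    intro η
    simp only [hf, hJ]
    have e1 : ‖l • η‖ = l * ‖η‖ := by rw [norm_smul, Real.norm_of_nonneg hl.le]
    have e2 : ∀ t, t * √μ * √(l * ‖η‖) = w * t * √‖η‖ := by
      intro t
      rw [hw, Real.sqrt_mul hl.le, Real.sqrt_mul hμ.le]; ring
    rw [e1, e2, e2, smul_smul, inv_mul_cancel₀ hl.ne', one_smul, inner_smul_right, inner_smul_left]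
    have e3 := cosexp (w * t * √‖η‖) (w * s * √‖η‖)
    have e4 : ∀ τ : ℝ, Complex.exp (Complex.I * ((l * ⟪z, η⟫ + τ * √‖η‖ : ℝ) : ℂ)) =
        Complex.exp (Complex.I * ((l * ⟪z, η⟫ : ℝ) : ℂ)) * Complex.exp (Complex.I * ((τ * √‖η‖ : ℝ) : ℂ)) := by
      intro τ; rw [← Complex.exp_add]; congr 1; push_cast; ring
    simp only [conj_trivial]
    rw [e4, e4, e4, e4]
    have e5 : w * t * √‖η‖ - w * s * √‖η‖ = w * (t - s) * √‖η‖ := by ring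
    have e6 : w * t * √‖η‖ + w * s * √‖η‖ = w * (t + s) * √‖η‖ := by ring
    rw [e5, e6, ← neg_mul, ← neg_mul] at e3
    have e7 : ((l * ‖η‖ * |x₁|) : ℝ) = ‖η‖ * (l * |x₁|) := by ring
    have e8 : ((l * ‖η‖ * |x₂|) : ℝ) = ‖η‖ * (l * |x₂|) := by ring
    rw [e7, e8]
    have e9 : ∀ B1 B2 c1 c2 X : ℝ, ((B1 * c1 * X * (B2 * c2 * X) : ℝ) : ℂ) = ((c1 * c2 : ℝ) : ℂ) * ((B1 * B2 * X^2 : ℝ) : ℂ) := by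
      intro B1 B2 c1 c2 X; push_cast; ring
    rw [e9, e3]; ring
  have hts0 : 0 < |t - s| := abs_pos.2 (sub_ne_zero.2 hts)
  have hbd : ∀ τ, w * |t - s| ≤ |τ| → ‖∫ η, J τ η‖ ≤ Cd * (w * |t-s|)^(-(n:ℝ)/2) := by
    intro τ hτ
    have hp : 0 < w * |t - s| := by positivity
    have hτ0 : τ ≠ 0 := abs_pos.1 (hp.trans_le hτ)
    refine (hCd (l*|x₁|) (l*|x₂|) (by positivity) (by positivity) (l • z) τ hτ0).trans ?_
    gcongr ?_ * ?_
    apply Real.rpow_le_rpow_of_nonpos hp hτ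
    have : (0:ℝ) ≤ n := by positivity
    linarith
  have hts2 : |t - s| ≤ |t + s| := by
    rw [abs_of_nonneg (add_nonneg ht hs), abs_le]; constructor <;> linarith
  have b1 := hbd (w * (t - s)) (by rw [abs_mul, abs_of_pos hw0])
  have b2 := hbd (-(w * (t - s))) (by rw [abs_neg, abs_mul, abs_of_pos hw0])
  have b3 := hbd (w * (t + s)) (by rw [abs_mul, abs_of_pos hw0]; gcongr)
  have b4 := hbd (-(w * (t + s))) (by rw [abs_neg, abs_mul, abs_of_pos hw0]; gcongr)
  rw [h2]
  simp_rw [h3]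
  have hsp : ∀ a b c d : ℝ, ∫ η, (J a η + J b η + J c η + J d η) =
      (∫ η, J a η) + (∫ η, J b η) + (∫ η, J c η) + (∫ η, J d η) := by
    intro a b c d
    have i1 : Integrable (fun η => J a η + J b η) := (hJi a).add (hJi b)
    have i2 : Integrable (fun η => J a η + J b η + J c η) := i1.add (hJi c)
    rw [integral_add i2 (hJi d), integral_add i1 (hJi c), integral_add (hJi a) (hJi b)]
  rw [integral_const_mul, hsp, norm_smul, norm_mul, Real.norm_of_nonneg (by positivity)]
  have h5 : ‖(1/4:ℂ)‖ = 1/4 := by simp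
  rw [h5]
  have h6 : ‖((∫ η, J (w * (t - s)) η) + (∫ η, J (-(w * (t - s))) η) + (∫ η, J (w * (t + s)) η) + (∫ η, J (-(w * (t + s))) η))‖
      ≤ 4 * (Cd * (w * |t-s|)^(-(n:ℝ)/2)) := by
    refine (norm_add_le _ _).trans ?_
    refine (add_le_add_left (norm_add_le _ _) _).trans ?_
    have := norm_add_le (∫ η, J (w * (t - s)) η) (∫ η, J (-(w * (t - s))) η)
    linarith
  calc _ ≤ l^n * (1/4 * (4 * (Cd * (w * |t-s|)^(-(n:ℝ)/2)))) := by gcongr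
    _ = _ := by
      rw [Real.mul_rpow hw0.le (abs_nonneg _), hw, Real.sqrt_eq_rpow, ← Real.rpow_mul (by positivity), Real.mul_rpow hμ.le hl.le]
      have e1 : l^(3*(n:ℝ)/4) = l^n * l^(1/2 * (-(n:ℝ)/2)) := by
        rw [← Real.rpow_natCast, ← Real.rpow_add hl]; congr 1; ring
      rw [e1]
      have e2 : (1/2 * (-(n:ℝ)/2)) = -(n:ℝ)/4 := by ring
      have e3 : -(n:ℝ)/2 = -((n:ℝ)/2) := by ring
      rw [e2, e3]; ring

lemma upper {b : ℝ → ℝ} (hb : ContDiff ℝ (⊤ : ℕ∞) b)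
    (hbdec : ∀ N k : ℕ, ∃ C : ℝ, ∀ y : ℝ, 0 ≤ y → (1 + y) ^ N * |iteratedDeriv k b y| ≤ C)
    (c₀ c₁ : ℝ) (hc₀ : 0 < c₀) (hc₀₁ : c₀ ≤ c₁) (n : ℕ) (μ : ℝ) (hμ : 0 < μ) (q r : ℝ) (hq : 2 < q) (hr : 2 < r)
    (hqr : 1/q = ((n:ℝ)/2) * (1/2 - 1/r)) :
    ∃ C : ℝ, 0 ≤ C ∧ ∀ l : ℝ, 0 < l → ∀ h : EuclideanSpace ℝ (Fin n) → ℂ, Continuous h →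
      (∀ ξ, h ξ ≠ 0 → c₀ * l ≤ ‖ξ‖ ∧ ‖ξ‖ ≤ c₁ * l) →
    ∫⁻ t in Set.Icc (0:ℝ) 1, (∫⁻ x : ℝ × EuclideanSpace ℝ (Fin n),
      ‖∫ ξ, Complex.exp (Complex.I * (⟪x.2, ξ⟫ : ℝ)) * (b (‖ξ‖ * x.1) : ℂ) * (Real.cos (t * √μ * √‖ξ‖) : ℂ) * h ξ‖ₑ ^ r
        ∂((volume.restrict (Set.Ioi 0)).prod volume))^(q/r) ≤
    ENNReal.ofReal ((C * l^(-(2/r) + 3*(n:ℝ)/4*(1-2/r)) * ∫ ξ, ‖h ξ‖^2)^(q/2)) := by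
  obtain ⟨χ, hχ, hχc, hχ1, hχs, hχ0, hχ2, Cd, hCd0, hCd⟩ := disp_conc hb hbdec c₀ c₁ hc₀ hc₀₁ n
  obtain ⟨C1, hC1⟩ := hbdec 1 0
  simp only [pow_one, iteratedDeriv_zero] at hC1
  have hc₁ : 0 < c₁ := hc₀.trans_le hc₀₁
  have hC10 : 0 ≤ C1 := le_trans (by positivity) (hC1 0 le_rfl)
  have hq' : 0 < 1 - 2/q := by rw [sub_pos, div_lt_one (by linarith)]; exact hq
  have hr' : 0 < r - 2 := by linarith
  refine ⟨(4*r/(r-2))^(1/r) * ((2*π)^n * (2*C1^2/c₀))^(2/r) * (2*(Cd * μ^(-(n:ℝ)/4)))^(1-2/r) * (2*(2/(1-2/q)+2)), by positivity, ?_⟩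
  intro l hl h hh hsupp
  have hbc := hb.continuous
  have hχcont := hχ.continuous
  set S := Metric.closedBall (0 : EuclideanSpace ℝ (Fin n)) (2*c₁*l) with hS
  have hSc : IsCompact S := isCompact_closedBall _ _
  have hnl : ∀ ξ : EuclideanSpace ℝ (Fin n), ‖l⁻¹ • ξ‖ = ‖ξ‖ / l := by
    intro ξ; rw [norm_smul, norm_inv, Real.norm_of_nonneg hl.le]; field_simp
  have hχS : ∀ ξ, χ (l⁻¹ • ξ) ≠ 0 → c₀/2*l ≤ ‖ξ‖ ∧ ξ ∈ S := by
    intro ξ hξ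
    have := hχs _ hξ
    rw [hnl, le_div_iff₀ hl, div_le_iff₀ hl] at this
    refine ⟨this.1, ?_⟩
    rw [hS, mem_closedBall_zero_iff]; exact this.2
  set g : ℝ → ℝ → EuclideanSpace ℝ (Fin n) → ℝ := fun t x ξ => b (‖ξ‖ * |x|) * Real.cos (t * √μ * √‖ξ‖) * χ (l⁻¹ • ξ) with hg
  have hbb : ∀ y, 0 ≤ y → |b y| ≤ C1 / (1 + y) := by
    intro y hy
    rw [le_div_iff₀ (by positivity)]; linarith [hC1 y hy]
  have hgb : ∀ t x ξ, |g t x ξ| ≤ |b (‖ξ‖*|x|)| * χ (l⁻¹ • ξ) := by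
    intro t x ξ
    simp only [hg]
    rw [abs_mul, abs_mul, abs_of_nonneg (hχ0 _)]
    have := Real.abs_cos_le_one (t * √μ * √‖ξ‖)
    gcongr
    · exact hχ0 _
    · exact mul_le_of_le_one_right (abs_nonneg _) this
  have key := stri_conc S hSc g (by simp only [hg]; fun_prop) C1 (by
      intro t x ξ
      refine (hgb t x ξ).trans ?_
      calc _ ≤ |b (‖ξ‖*|x|)| * 1 := by gcongr; exact hχ2 _
        _ ≤ C1 / (1 + ‖ξ‖*|x|) := by rw [mul_one]; exact hbb _ (by positivity)
        _ ≤ C1 := div_le_self hC10 (by linarith [show 0 ≤ ‖ξ‖*|x| by positivity]))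
    (fun x => C1^2 * (1/(1 + (c₀/2*l)*x)^2)) (2*C1^2/c₀ * l⁻¹) (Cd * μ^(-(n:ℝ)/4) * l^(3*(n:ℝ)/4)) ((n:ℝ)/2) q r hq hr
    (by positivity) (by positivity) hqr (by
      intro t x ξ hξ hx
      rw [← sq_abs]
      by_cases hz : χ (l⁻¹ • ξ) = 0
      · simp only [hg]; rw [hz]; simp; positivity
      have h1 := (hχS ξ hz).1
      have h2 : |g t x ξ| ≤ C1 / (1 + (c₀/2*l)*x) := by
        refine (hgb t x ξ).trans ?_
        calc _ ≤ |b (‖ξ‖*|x|)| * 1 := by gcongr; exact hχ2 _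
          _ ≤ C1 / (1 + ‖ξ‖*|x|) := by rw [mul_one]; exact hbb _ (by positivity)
          _ ≤ _ := by rw [abs_of_pos hx]; gcongr
      calc _ ≤ (C1 / (1 + (c₀/2*l)*x))^2 := by gcongr
        _ = _ := by rw [div_pow]; ring)
    (by
      have h1 : ∀ x : ℝ, ENNReal.ofReal (C1^2 * (1/(1 + (c₀/2*l)*x)^2)) = ENNReal.ofReal (C1^2) * ENNReal.ofReal (1/(1 + (c₀/2*l)*x)^2) :=
        fun x => ENNReal.ofReal_mul (by positivity)
      simp_rw [h1]
      rw [lintegral_const_mul' _ _ ENNReal.ofReal_ne_top]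
      calc _ ≤ ENNReal.ofReal (C1^2) * ENNReal.ofReal (1/(c₀/2*l)) := by
            gcongr; exact tail_int _ (by positivity)
        _ = _ := by rw [← ENNReal.ofReal_mul (by positivity)]; congr 1; field_simp)
    (by
      intro t ht s hs hts x₁ x₂ z
      have h1 := kerb hbc χ hχcont hχc Cd hCd0 hCd μ l hμ hl t s ht.1 hs.1 hts x₁ x₂ z
      refine le_trans (le_of_eq ?_) h1
      rw [setIntegral_eq_integral_of_forall_compl_eq_zero]
      intro ξ hξ
      have : χ (l⁻¹ • ξ) = 0 := by
        by_contra hne; exact hξ (hχS ξ hne).2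
      simp only [hg]; rw [this]; simp)
    h (by
      obtain ⟨M, hM⟩ := hSc.exists_bound_of_continuousOn hh.continuousOn
      have : IsFiniteMeasure (volume.restrict S) := ⟨by simpa using hSc.measure_lt_top⟩
      exact MemLp.of_bound hh.aestronglyMeasurable M ((ae_restrict_iff' hSc.measurableSet).2 (Filter.Eventually.of_forall hM)))
  have hhS : ∀ ξ, ξ ∉ S → h ξ = 0 := by
    intro ξ hξ
    by_contra hne
    apply hξ
    rw [hS, mem_closedBall_zero_iff]
    have := (hsupp ξ hne).2
    nlinarith [mul_pos hc₁ hl]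
  have hm : ((volume : Measure ℝ).restrict (Set.Ioi 0)).prod (volume : Measure (EuclideanSpace ℝ (Fin n))) =
      (volume.prod volume).restrict (Set.Ioi (0:ℝ) ×ˢ Set.univ) := by
    rw [← Measure.prod_restrict, Measure.restrict_univ]
  have hL : ∀ t : ℝ, (∫⁻ x : ℝ × EuclideanSpace ℝ (Fin n),
      ‖∫ ξ, Complex.exp (Complex.I * (⟪x.2, ξ⟫ : ℝ)) * (b (‖ξ‖ * x.1) : ℂ) * (Real.cos (t * √μ * √‖ξ‖) : ℂ) * h ξ‖ₑ ^ r
        ∂((volume.restrict (Set.Ioi 0)).prod volume)) = ∫⁻ x : ℝ × EuclideanSpace ℝ (Fin n),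
      ‖∫ ξ in S, Complex.exp (Complex.I * (⟪x.2, ξ⟫ : ℝ)) * (g t x.1 ξ : ℂ) * h ξ‖ₑ ^ r
        ∂((volume.restrict (Set.Ioi 0)).prod volume) := by
    intro t
    rw [hm]
    apply setLIntegral_congr_fun (measurableSet_Ioi.prod MeasurableSet.univ)
    rintro ⟨x, y⟩ ⟨hx, -⟩
    have hx : 0 < x := hx
    simp only
    congr 2
    rw [setIntegral_eq_integral_of_forall_compl_eq_zero (fun ξ hξ => by rw [hhS ξ hξ, mul_zero])]
    congr 1; ext ξ
    by_cases hz : h ξ = 0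
    · rw [hz]; simp
    have h1 := hsupp ξ hz
    simp only [hg]
    rw [hχ1 (l⁻¹ • ξ) (by rw [hnl, le_div_iff₀ hl]; exact h1.1) (by rw [hnl, div_le_iff₀ hl]; exact h1.2), abs_of_pos hx]
    push_cast; ring
  simp_rw [hL]
  refine key.trans (le_of_eq ?_)
  congr 2
  rw [setIntegral_eq_integral_of_forall_compl_eq_zero (fun ξ hξ => by rw [hhS ξ hξ]; simp)]
  congr 1
  have e1 : ((2*π)^n * (2*C1^2/c₀ * l⁻¹))^(2/r) = ((2*π)^n * (2*C1^2/c₀))^(2/r) * l^(-(2/r)) := by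
    rw [← mul_assoc, Real.mul_rpow (by positivity) (by positivity), Real.inv_rpow hl.le, Real.rpow_neg hl.le]
  have e2 : (2*(Cd * μ^(-(n:ℝ)/4) * l^(3*(n:ℝ)/4)))^(1-2/r) = (2*(Cd * μ^(-(n:ℝ)/4)))^(1-2/r) * l^(3*(n:ℝ)/4*(1-2/r)) := by
    rw [← mul_assoc, Real.mul_rpow (by positivity) (by positivity), Real.rpow_mul hl.le]
  rw [e1, e2, Real.rpow_add hl]; ring

lemma planchR {n : ℕ} (f : EuclideanSpace ℝ (Fin n) → ℂ) (hf : Continuous f) (hfc : HasCompactSupport f) :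
    Integrable (fun y : EuclideanSpace ℝ (Fin n) => ‖∫ ξ, Complex.exp (Complex.I * (⟪y, ξ⟫ : ℝ)) * f ξ‖^2) ∧
    ∫ y : EuclideanSpace ℝ (Fin n), ‖∫ ξ, Complex.exp (Complex.I * (⟪y, ξ⟫ : ℝ)) * f ξ‖^2 = (2*π)^n * ∫ ξ, ‖f ξ‖^2 := by
  have h1 : Integrable f := hf.integrable_of_hasCompactSupport hfc
  have h2 : MemLp f 2 volume := hf.memLp_of_hasCompactSupport hfc
  have hp := planch f h1 h2
  have h3 : Integrable (fun ξ => ‖f ξ‖^2) := (memLp_two_iff_integrable_sq_norm h2.1).1 h2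
  have hc : Continuous (fun y : EuclideanSpace ℝ (Fin n) => ∫ ξ, Complex.exp (Complex.I * (⟪y, ξ⟫ : ℝ)) * f ξ) := by
    apply continuous_of_dominated (bound := fun ξ => ‖f ξ‖)
    · intro y; apply Continuous.aestronglyMeasurable; fun_prop
    · intro y; refine Filter.Eventually.of_forall fun ξ => ?_
      rw [norm_mul, mul_comm Complex.I, Complex.norm_exp_ofReal_mul_I, one_mul]
    · exact h1.norm
    · refine Filter.Eventually.of_forall fun ξ => ?_
      fun_prop
  have e1 : ∀ z : ℂ, ENNReal.ofReal (‖z‖^2) = ‖z‖ₑ^2 := by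
    intro z; rw [ENNReal.ofReal_pow (norm_nonneg _), ofReal_norm]
  have h4 : ENNReal.ofReal (∫ ξ, ‖f ξ‖^2) = ∫⁻ ξ, ‖f ξ‖ₑ^2 := by
    rw [ofReal_integral_eq_lintegral_ofReal h3 (Filter.Eventually.of_forall fun _ => by positivity)]
    simp_rw [e1]
  rw [← h4, ← ENNReal.ofReal_mul (by positivity)] at hp
  have h5 : Integrable (fun y : EuclideanSpace ℝ (Fin n) => ‖∫ ξ, Complex.exp (Complex.I * (⟪y, ξ⟫ : ℝ)) * f ξ‖^2) := by
    refine ⟨(hc.norm.pow 2).aestronglyMeasurable, ?_⟩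
    rw [hasFiniteIntegral_iff_ofReal (Filter.Eventually.of_forall fun _ => by positivity)]
    simp_rw [e1]
    rw [hp]; exact ENNReal.ofReal_lt_top
  refine ⟨h5, ?_⟩
  rw [integral_eq_lintegral_of_nonneg_ae (Filter.Eventually.of_forall fun _ => by positivity) h5.1]
  simp_rw [e1]
  rw [hp, ENNReal.toReal_ofReal]
  have : 0 ≤ ∫ ξ, ‖f ξ‖^2 := integral_nonneg fun _ => by positivity
  positivity

lemma fd_y {n : ℕ} (k : EuclideanSpace ℝ (Fin n) → ℂ) (hk : Continuous k) (hkc : HasCompactSupport k)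
    (y : EuclideanSpace ℝ (Fin n)) (i : Fin n) :
    fderiv ℝ (fun y : EuclideanSpace ℝ (Fin n) => ∫ ξ, Complex.exp (Complex.I * (⟪y, ξ⟫ : ℝ)) * k ξ) y (EuclideanSpace.single i 1) =
      ∫ ξ : EuclideanSpace ℝ (Fin n), Complex.exp (Complex.I * (⟪y, ξ⟫ : ℝ)) * (Complex.I * (ξ i : ℂ) * k ξ) := by
  set F' : EuclideanSpace ℝ (Fin n) → EuclideanSpace ℝ (Fin n) → (EuclideanSpace ℝ (Fin n) →L[ℝ] ℂ) := fun y ξ =>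
    (innerSL ℝ ξ).smulRight (Complex.I * Complex.exp (Complex.I * (⟪y, ξ⟫ : ℝ)) * k ξ) with hF'
  have hFc : ∀ y, Continuous (F' y) := by
    intro y
    have h1 : Continuous (fun ξ : EuclideanSpace ℝ (Fin n) => (Complex.I * Complex.exp (Complex.I * (⟪y, ξ⟫ : ℝ)) * k ξ)) := by fun_prop
    have h2 : Continuous (fun ξ : EuclideanSpace ℝ (Fin n) => innerSL ℝ ξ) := (innerSL ℝ).continuous
    simp only [hF']
    exact (ContinuousLinearMap.smulRightL ℝ (EuclideanSpace ℝ (Fin n)) ℂ).continuous₂.comp (h2.prodMk h1)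
  have hFn : ∀ y ξ, ‖F' y ξ‖ = ‖ξ‖ * ‖k ξ‖ := by
    intro y ξ
    simp only [hF']
    rw [ContinuousLinearMap.norm_smulRight_apply, innerSL_apply_norm, norm_mul, norm_mul, mul_comm Complex.I ((⟪y, ξ⟫:ℝ):ℂ), Complex.norm_exp_ofReal_mul_I]
    simp
  have hbi : Integrable (fun ξ : EuclideanSpace ℝ (Fin n) => ‖ξ‖ * ‖k ξ‖) := by
    apply Continuous.integrable_of_hasCompactSupport
    · fun_prop
    · exact hkc.norm.mul_left
  have hder := hasFDerivAt_integral_of_dominated_of_fderiv_le (μ := volume) (F := fun (y ξ : EuclideanSpace ℝ (Fin n)) => Complex.exp (Complex.I * (⟪y, ξ⟫ : ℝ)) * k ξ)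
    (F' := F') (x₀ := y) (s := Set.univ) (bound := fun ξ => ‖ξ‖ * ‖k ξ‖) Filter.univ_mem
    (Filter.Eventually.of_forall fun y => by apply Continuous.aestronglyMeasurable; fun_prop)
    (by
      apply Continuous.integrable_of_hasCompactSupport
      · fun_prop
      · exact hkc.mul_left)
    (hFc y).aestronglyMeasurable
    (Filter.Eventually.of_forall fun ξ y _ => (hFn y ξ).le) hbi
    (Filter.Eventually.of_forall fun ξ y _ => by
      have h1 : HasFDerivAt (fun y : EuclideanSpace ℝ (Fin n) => ⟪y, ξ⟫) (innerSL ℝ ξ) y := by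
        have : (fun y : EuclideanSpace ℝ (Fin n) => ⟪y, ξ⟫) = fun y => innerSL ℝ ξ y := by
          ext y; rw [innerSL_apply_apply, real_inner_comm]
        rw [this]
        exact (innerSL ℝ ξ).hasFDerivAt
      have h2 : HasDerivAt (fun x : ℝ => Complex.exp (Complex.I * x) * k ξ) (Complex.exp (Complex.I * (⟪y, ξ⟫:ℝ)) * (Complex.I * 1) * k ξ) ⟪y, ξ⟫ := by
        have := (((Complex.ofRealCLM.hasDerivAt (x := ⟪y, ξ⟫)).const_mul Complex.I).cexp).mul_const (k ξ)
        simpa using this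
      have h3 := h2.hasFDerivAt.comp y h1
      refine h3.congr_fderiv ?_
      refine ContinuousLinearMap.ext fun v => ?_
      simp only [hF', ContinuousLinearMap.smulRight_apply, innerSL_apply_apply]
      rw [ContinuousLinearMap.comp_apply, ContinuousLinearMap.toSpanSingleton_apply, innerSL_apply_apply]
      congr 1; ring)
  rw [hder.fderiv, ContinuousLinearMap.integral_apply]
  · congr 1; ext ξ
    simp only [hF', ContinuousLinearMap.smulRight_apply, innerSL_apply_apply]
    rw [EuclideanSpace.inner_single_right]
    simp
    ring
  · exact hbi.mono' (hFc y).aestronglyMeasurable (Filter.Eventually.of_forall fun ξ => (hFn y ξ).le)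

lemma d_x {n : ℕ} {b : ℝ → ℝ} (hb : ContDiff ℝ (⊤ : ℕ∞) b) (C : ℝ) (hC : ∀ y, 0 ≤ y → |deriv b y| ≤ C)
    (h : EuclideanSpace ℝ (Fin n) → ℂ) (hh : Continuous h) (hhc : HasCompactSupport h)
    (y : EuclideanSpace ℝ (Fin n)) (x : ℝ) (hx : 0 < x) :
    deriv (fun s : ℝ => ∫ ξ, Complex.exp (Complex.I * (⟪y, ξ⟫ : ℝ)) * ((b (‖ξ‖ * s) : ℂ) * h ξ)) x =
      ∫ ξ, Complex.exp (Complex.I * (⟪y, ξ⟫ : ℝ)) * ((‖ξ‖ * deriv b (‖ξ‖ * x) : ℝ) * h ξ) := by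
  have hbc := hb.continuous
  have hbd : Continuous (deriv b) := hb.continuous_deriv (by simp)
  have hder := hasDerivAt_integral_of_dominated_loc_of_deriv_le (μ := volume)
    (F := fun (s : ℝ) (ξ : EuclideanSpace ℝ (Fin n)) => Complex.exp (Complex.I * (⟪y, ξ⟫ : ℝ)) * ((b (‖ξ‖ * s) : ℂ) * h ξ))
    (F' := fun (s : ℝ) (ξ : EuclideanSpace ℝ (Fin n)) => Complex.exp (Complex.I * (⟪y, ξ⟫ : ℝ)) * ((‖ξ‖ * deriv b (‖ξ‖ * s) : ℝ) * h ξ))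
    (x₀ := x) (s := Set.Ioi 0) (bound := fun ξ => (‖ξ‖ * C) * ‖h ξ‖) (Ioi_mem_nhds hx)
    (Filter.Eventually.of_forall fun y => by apply Continuous.aestronglyMeasurable; fun_prop)
    (by
      apply Continuous.integrable_of_hasCompactSupport
      · fun_prop
      · exact hhc.mul_left.mul_left)
    (by apply Continuous.aestronglyMeasurable; fun_prop)
    (Filter.Eventually.of_forall fun ξ s hs => by
      have hs : 0 < s := hs
      rw [norm_mul, norm_mul, mul_comm Complex.I, Complex.norm_exp_ofReal_mul_I, one_mul, Complex.norm_real, norm_mul, norm_norm]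
      gcongr
      exact hC _ (by positivity))
    (by
      apply Continuous.integrable_of_hasCompactSupport
      · fun_prop
      · exact hhc.norm.mul_left)
    (Filter.Eventually.of_forall fun ξ s hs => by
      apply HasDerivAt.const_mul
      apply HasDerivAt.mul_const
      apply HasDerivAt.ofReal_comp
      have h1 : HasDerivAt b (deriv b (‖ξ‖ * s)) (‖ξ‖ * s) := (hb.differentiable (by simp) _).hasDerivAt
      have h2 : HasDerivAt (fun s : ℝ => ‖ξ‖ * s) (‖ξ‖ * 1) s := (hasDerivAt_id s).const_mul _
      have := h1.comp s h2
      rw [mul_one, mul_comm] at this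
      exact this)
  exact hder.2.deriv

lemma rpow_dec_int (p k : ℝ) (hp : 0 < p) (hk : 0 < k) (M : ℕ) (hM : p + 1 < M) :
    IntegrableOn (fun x : ℝ => x^p * (1/(1+k*x)^M)) (Set.Ioi 0) := by
  have hcont : ContinuousOn (fun x : ℝ => x^p * (1/(1+k*x)^M)) (Set.Ici 0) := by
    apply ContinuousOn.mul
    · exact (Real.continuous_rpow_const hp.le).continuousOn
    · apply ContinuousOn.div continuousOn_const (by fun_prop)
      intro x hx
      have hx : 0 ≤ x := hx
      positivity
  rw [← Set.Ioc_union_Ioi_eq_Ioi (zero_le_one (α := ℝ))]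
  apply IntegrableOn.union
  · exact ((hcont.mono Set.Icc_subset_Ici_self).integrableOn_Icc).mono_set Set.Ioc_subset_Icc_self
  · have h1 : IntegrableOn (fun x : ℝ => (1/k^M) * x^(p-M)) (Set.Ioi 1) :=
      (integrableOn_Ioi_rpow_of_lt (by linarith) one_pos).const_mul _
    refine h1.mono' ?_ ?_
    · have hs : Set.Ioi (1:ℝ) ⊆ Set.Ici 0 := Set.Ioi_subset_Ici zero_le_one
      exact (hcont.mono hs).aestronglyMeasurable measurableSet_Ioi
    · refine (ae_restrict_iff' measurableSet_Ioi).2 (Filter.Eventually.of_forall fun x hx => ?_)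
      have hx : 1 < x := hx
      have hx0 : 0 < x := by linarith
      rw [Real.norm_of_nonneg (by positivity), Real.rpow_sub hx0, Real.rpow_natCast]
      calc _ ≤ x^p * (1/(k*x)^M) := by gcongr; linarith
        _ = _ := by rw [mul_pow]; field_simp

lemma energy_low {b : ℝ → ℝ} (hb : ContDiff ℝ (⊤ : ℕ∞) b) (hb0 : 0 < b 0)
    (hbdec : ∀ N k : ℕ, ∃ C : ℝ, ∀ y : ℝ, 0 ≤ y → (1 + y) ^ N * |iteratedDeriv k b y| ≤ C)
    (c₀ c₁ : ℝ) (hc₀ : 0 < c₀) (hc₀₁ : c₀ ≤ c₁) (n : ℕ) (κ : ℝ) (hκ : 0 < κ) :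
    ∃ c : ℝ, 0 < c ∧ ∀ l : ℝ, 0 < l → ∀ h : EuclideanSpace ℝ (Fin n) → ℂ, Continuous h →
      (∀ ξ, h ξ ≠ 0 → c₀ * l ≤ ‖ξ‖ ∧ ‖ξ‖ ≤ c₁ * l) →
      ∀ u : ℝ → EuclideanSpace ℝ (Fin n) → ℂ,
      (u = fun x y => ∫ ξ, Complex.exp (Complex.I * (⟪y, ξ⟫ : ℝ)) * ((b (‖ξ‖ * x) : ℂ) * h ξ)) →
      c * l^(1 - 1/κ) * ∫ ξ, ‖h ξ‖^2 ≤ ∫ x in Set.Ioi (0:ℝ), ∫ y : EuclideanSpace ℝ (Fin n), x^(1/κ-1) * (κ * x *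
        ((∑ i : Fin n, ‖fderiv ℝ (fun y => u x y) y (EuclideanSpace.single i 1)‖ ^ 2)
          + ‖deriv (fun s => u s y) x‖ ^ 2)) := by
  have hbc := hb.continuous
  have hbd : Continuous (deriv b) := hb.continuous_deriv (by simp)
  have hc₁ : 0 < c₁ := hc₀.trans_le hc₀₁
  obtain ⟨δ, hδ, hbδ⟩ : ∃ δ : ℝ, 0 < δ ∧ ∀ y, 0 ≤ y → y ≤ δ → b 0 / 2 ≤ b y := by
    have h1 := hbc.continuousAt (x := 0) |>.eventually (lt_mem_nhds (show b 0 / 2 < b 0 by linarith))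
    obtain ⟨ε, hε, h2⟩ := Metric.eventually_nhds_iff.1 h1
    refine ⟨ε/2, by positivity, fun y hy hy2 => (h2 ?_).le⟩
    rw [dist_zero_right, Real.norm_of_nonneg hy]; linarith
  set p := 1/κ with hp
  have hp0 : 0 < p := by positivity
  obtain ⟨M, hM⟩ := exists_nat_gt (p + 1)
  obtain ⟨C0, hC0⟩ := hbdec M 0
  obtain ⟨C1, hC1⟩ := hbdec M 1
  simp only [iteratedDeriv_zero, iteratedDeriv_one] at hC0 hC1
  have hC0n : 0 ≤ C0 := le_trans (by positivity) (hC0 0 le_rfl)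
  have hC1n : 0 ≤ C1 := le_trans (by positivity) (hC1 0 le_rfl)
  have hsq : ∀ (v C : ℝ) (y : ℝ), 0 ≤ y → (1+y)^M * |v| ≤ C → v^2 ≤ C^2 * (1/(1+y)^M) := by
    intro v C y hy h
    have h1 : 1 ≤ (1+y)^M := one_le_pow₀ (by linarith)
    have h0 : 0 ≤ C := le_trans (by positivity) h
    rw [mul_one_div, le_div_iff₀ (by positivity)]
    calc v^2 * (1+y)^M ≤ v^2 * ((1+y)^M * (1+y)^M) := by
          gcongr; exact le_mul_of_one_le_left (by positivity) h1
      _ = ((1+y)^M * |v|)^2 := by rw [mul_pow, sq_abs]; ring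
      _ ≤ C^2 := by gcongr
  have hdb : ∀ y, 0 ≤ y → |deriv b y| ≤ C1 := by
    intro y hy
    have h1 : 1 ≤ (1+y)^M := one_le_pow₀ (by linarith)
    refine le_trans ?_ (hC1 y hy)
    exact le_mul_of_one_le_left (abs_nonneg _) h1
  refine ⟨κ * (2*π)^n * (c₀^2 * (b 0/2)^2) * ((δ/c₁)^(p+1) / (p+1)), by positivity, ?_⟩
  intro l hl h hh hsupp u hu
  have hhc : HasCompactSupport h := by
    apply HasCompactSupport.of_support_subset_isCompact (isCompact_closedBall 0 (c₁*l))
    intro ξ hξ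
    rw [mem_closedBall_zero_iff]; exact (hsupp ξ hξ).2
  set W : ℝ → ℝ := fun x => ∫ ξ, ‖ξ‖^2 * (b (‖ξ‖*x)^2 + deriv b (‖ξ‖*x)^2) * ‖h ξ‖^2 with hW
  have hcs : ∀ f : EuclideanSpace ℝ (Fin n) → ℝ, HasCompactSupport (fun ξ => f ξ * ‖h ξ‖^2) := by
    intro f
    apply HasCompactSupport.intro hhc
    intro ξ hξ
    rw [image_eq_zero_of_notMem_tsupport hξ]; simp
  have hci : ∀ f : EuclideanSpace ℝ (Fin n) → ℝ, Continuous f → Integrable (fun ξ => f ξ * ‖h ξ‖^2) := by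
    intro f hf
    exact Continuous.integrable_of_hasCompactSupport (by fun_prop) (hcs f)
  -- inner integral
  have hin : ∀ x ∈ Set.Ioi (0:ℝ), ∫ y : EuclideanSpace ℝ (Fin n), x^(p-1) * (κ * x *
        ((∑ i : Fin n, ‖fderiv ℝ (fun y => u x y) y (EuclideanSpace.single i 1)‖ ^ 2)
          + ‖deriv (fun s => u s y) x‖ ^ 2)) = κ * (2*π)^n * (x^p * W x) := by
    intro x hx
    have hx : 0 < x := hx
    rw [integral_const_mul, integral_const_mul]
    have f1 : ∀ (y : EuclideanSpace ℝ (Fin n)) (i : Fin n), fderiv ℝ (fun y => u x y) y (EuclideanSpace.single i 1) =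
        ∫ ξ : EuclideanSpace ℝ (Fin n), Complex.exp (Complex.I * (⟪y, ξ⟫ : ℝ)) * (Complex.I * (ξ i : ℂ) * ((b (‖ξ‖ * x) : ℂ) * h ξ)) := by
      intro y i
      rw [hu]
      exact fd_y (fun ξ => (b (‖ξ‖ * x) : ℂ) * h ξ) (by fun_prop) hhc.mul_left y i
    have f2 : ∀ y : EuclideanSpace ℝ (Fin n), deriv (fun s => u s y) x =
        ∫ ξ, Complex.exp (Complex.I * (⟪y, ξ⟫ : ℝ)) * ((‖ξ‖ * deriv b (‖ξ‖ * x) : ℝ) * h ξ) := by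
      intro y
      rw [hu]
      exact d_x hb C1 hdb h hh hhc y x hx
    simp_rw [f1, f2]
    have g1 := fun i : Fin n => planchR (fun ξ : EuclideanSpace ℝ (Fin n) => (Complex.I * (ξ i : ℂ) * ((b (‖ξ‖ * x) : ℂ) * h ξ)))
      (by fun_prop) (hhc.mul_left.mul_left)
    have g2 := planchR (fun ξ : EuclideanSpace ℝ (Fin n) => (((‖ξ‖ * deriv b (‖ξ‖ * x) : ℝ) : ℂ) * h ξ)) (by fun_prop) hhc.mul_left
    rw [integral_add (integrable_finsetSum _ fun i _ => (g1 i).1) g2.1, integral_finsetSum _ (fun i _ => (g1 i).1), g2.2]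
    simp_rw [fun i => (g1 i).2]
    rw [← Finset.mul_sum, ← mul_add]
    have n1 : ∀ (i : Fin n) (ξ : EuclideanSpace ℝ (Fin n)), ‖Complex.I * (ξ i : ℂ) * ((b (‖ξ‖ * x) : ℂ) * h ξ)‖^2 = ((ξ i)^2 * b (‖ξ‖*x)^2) * ‖h ξ‖^2 := by
      intro i ξ
      simp only [norm_mul, Complex.norm_I, Complex.norm_real, Real.norm_eq_abs, mul_pow, sq_abs]; ring
    have n2 : ∀ (ξ : EuclideanSpace ℝ (Fin n)), ‖((‖ξ‖ * deriv b (‖ξ‖ * x) : ℝ) : ℂ) * h ξ‖^2 = (‖ξ‖^2 * deriv b (‖ξ‖*x)^2) * ‖h ξ‖^2 := by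
      intro ξ
      rw [norm_mul, Complex.norm_real, Real.norm_eq_abs, mul_pow, sq_abs, mul_pow]
    simp_rw [n1, n2]
    have i1 : ∀ i : Fin n, Integrable (fun ξ : EuclideanSpace ℝ (Fin n) => ((ξ i)^2 * b (‖ξ‖*x)^2) * ‖h ξ‖^2) :=
      fun i => hci _ (by fun_prop)
    rw [← integral_finsetSum _ (fun i _ => i1 i), ← integral_add (integrable_finsetSum _ fun i _ => i1 i) (hci _ (by fun_prop))]
    have e1 : ∀ ξ : EuclideanSpace ℝ (Fin n), ∑ i, ((ξ i)^2 * b (‖ξ‖*x)^2) * ‖h ξ‖^2 + (‖ξ‖^2 * deriv b (‖ξ‖*x)^2) * ‖h ξ‖^2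
        = ‖ξ‖^2 * (b (‖ξ‖*x)^2 + deriv b (‖ξ‖*x)^2) * ‖h ξ‖^2 := by
      intro ξ
      rw [← Finset.sum_mul, ← Finset.sum_mul, ← EuclideanSpace.real_norm_sq_eq]; ring
    simp_rw [e1]
    have e2 : x^p = x^(p-1) * x := by
      rw [← Real.rpow_add_one hx.ne']; congr 1; ring
    rw [e2]; simp only [hW]; ring
  rw [setIntegral_congr_fun measurableSet_Ioi hin]
  have hWm : Continuous W := by
    have h1 : ∀ x, W x = ∫ ξ in Metric.closedBall 0 (c₁*l), ‖ξ‖^2 * (b (‖ξ‖*x)^2 + deriv b (‖ξ‖*x)^2) * ‖h ξ‖^2 := by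
      intro x
      rw [setIntegral_eq_integral_of_forall_compl_eq_zero]
      intro ξ hξ
      have : h ξ = 0 := by
        by_contra hne
        exact hξ (by rw [mem_closedBall_zero_iff]; exact (hsupp ξ hne).2)
      rw [this]; simp
    rw [show W = fun x => _ from funext h1]
    apply continuous_parametric_integral_of_continuous _ (isCompact_closedBall _ _)
    simp only [Function.uncurry_def]
    fun_prop
  have hWb : ∀ x, 0 < x → W x ≤ (C0^2 + C1^2) * (1/(1+(c₀*l)*x)^M) * ∫ ξ, ‖ξ‖^2 * ‖h ξ‖^2 := by
    intro x hx
    simp only [hW]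
    rw [← integral_const_mul]
    apply integral_mono (hci _ (by fun_prop)) ((hci _ (by fun_prop)).const_mul _)
    intro ξ
    simp only
    by_cases hz : h ξ = 0
    · rw [hz]; simp
    have h1 := (hsupp ξ hz).1
    have hy : 0 ≤ ‖ξ‖ * x := by positivity
    have h2 := hsq _ _ _ hy (hC0 _ hy)
    have h3 := hsq _ _ _ hy (hC1 _ hy)
    have h4 : 1/(1+‖ξ‖*x)^M ≤ 1/(1+(c₀*l)*x)^M := by gcongr
    have h5 : b (‖ξ‖*x)^2 + deriv b (‖ξ‖*x)^2 ≤ (C0^2 + C1^2) * (1/(1+(c₀*l)*x)^M) := by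
      calc _ ≤ (C0^2 + C1^2) * (1/(1+‖ξ‖*x)^M) := by linarith
        _ ≤ _ := by gcongr
    calc _ = (b (‖ξ‖*x)^2 + deriv b (‖ξ‖*x)^2) * (‖ξ‖^2 * ‖h ξ‖^2) := by ring
      _ ≤ _ := by gcongr
  have hW0 : ∀ x, 0 ≤ W x := fun x => integral_nonneg fun ξ => by simp only [Pi.zero_apply]; positivity
  have hint : IntegrableOn (fun x => κ * (2*π)^n * (x^p * W x)) (Set.Ioi 0) := by
    apply Integrable.const_mul
    have h1 := (rpow_dec_int p (c₀*l) hp0 (by positivity) M hM).const_mul ((C0^2 + C1^2) * ∫ ξ, ‖ξ‖^2 * ‖h ξ‖^2)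
    refine h1.mono' ?_ ?_
    · exact ((Real.continuous_rpow_const hp0.le).mul hWm).aestronglyMeasurable
    · refine (ae_restrict_iff' measurableSet_Ioi).2 (Filter.Eventually.of_forall fun x hx => ?_)
      have hx : 0 < x := hx
      rw [Real.norm_of_nonneg (mul_nonneg (by positivity) (hW0 x))]
      calc _ ≤ x^p * ((C0^2 + C1^2) * (1/(1+(c₀*l)*x)^M) * ∫ ξ, ‖ξ‖^2 * ‖h ξ‖^2) := by
            gcongr; exact hWb x hx
        _ = _ := by ring
  set a := δ/(c₁*l) with ha
  have ha0 : 0 < a := by positivity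
  have hlow : ∀ x ∈ Set.Ioc 0 a, (c₀*l)^2 * (b 0/2)^2 * (∫ ξ, ‖h ξ‖^2) ≤ W x := by
    rintro x ⟨hx, hxa⟩
    simp only [hW]
    rw [← integral_const_mul]
    have hi := hci (fun _ => (c₀*l)^2 * (b 0/2)^2) (by fun_prop)
    apply integral_mono hi (hci _ (by fun_prop))
    intro ξ
    simp only
    by_cases hz : h ξ = 0
    · rw [hz]; simp
    have h1 := hsupp ξ hz
    have h2 : b 0/2 ≤ b (‖ξ‖*x) := by
      apply hbδ _ (by positivity)
      rw [ha, le_div_iff₀ (by positivity)] at hxa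
      nlinarith [h1.2]
    gcongr
    · exact h1.1
    · have : (b 0/2)^2 ≤ b (‖ξ‖*x)^2 := by gcongr
      nlinarith [sq_nonneg (deriv b (‖ξ‖*x))]
  have hJ : ∫ x in Set.Ioc 0 a, x^p = a^(p+1)/(p+1) := by
    rw [← intervalIntegral.integral_of_le ha0.le, integral_rpow (Or.inl (by linarith)), Real.zero_rpow (by positivity), sub_zero]
  calc _ = ∫ x in Set.Ioc 0 a, (κ * (2*π)^n * ((c₀*l)^2 * (b 0/2)^2 * (∫ ξ, ‖h ξ‖^2))) * x^p := by
        rw [integral_const_mul, hJ, ha]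
        have e1 : δ/(c₁*l) = δ/c₁ * l⁻¹ := by field_simp
        rw [e1, Real.mul_rpow (by positivity) (by positivity), Real.inv_rpow hl.le]
        have e2 : l^(1-p) = l^2 * (l^(p+1))⁻¹ := by
          rw [← Real.rpow_neg hl.le, ← Real.rpow_natCast, ← Real.rpow_add hl]; congr 1; push_cast; ring
        rw [e2]; ring
    _ ≤ ∫ x in Set.Ioc 0 a, κ * (2*π)^n * (x^p * W x) := by
        apply setIntegral_mono_on
        · apply Integrable.const_mul
          exact (((Real.continuous_rpow_const hp0.le).continuousOn).integrableOn_Icc).mono_set Set.Ioc_subset_Icc_self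
        · exact hint.mono_set Set.Ioc_subset_Ioi_self
        · exact measurableSet_Ioc
        · intro x hx
          have hx0 : 0 < x := hx.1
          have := hlow x hx
          calc _ = κ * (2*π)^n * (x^p * ((c₀*l)^2 * (b 0/2)^2 * (∫ ξ, ‖h ξ‖^2))) := by ring
            _ ≤ _ := by gcongr
    _ ≤ _ := by
        apply setIntegral_mono_set hint
        · refine (ae_restrict_iff' measurableSet_Ioi).2 (Filter.Eventually.of_forall fun x hx => ?_)
          have hx : 0 < x := hx
          exact mul_nonneg (by positivity) (mul_nonneg (by positivity) (hW0 x))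
        · exact Filter.Eventually.of_forall Set.Ioc_subset_Ioi_self

lemma fhat_cont {n : ℕ} (φ : EuclideanSpace ℝ (Fin n) → ℂ) (hφ : Continuous φ) (hi : Integrable φ) :
    Continuous (fhat φ) := by
  unfold fhat
  apply continuous_of_dominated (bound := fun ξ => ‖φ ξ‖)
  · intro y; apply Continuous.aestronglyMeasurable; fun_prop
  · intro y; refine Filter.Eventually.of_forall fun ξ => ?_
    rw [norm_mul, show -Complex.I * ((⟪ξ, y⟫:ℝ):ℂ) = ((-⟪ξ, y⟫ : ℝ) : ℂ) * Complex.I by push_cast; ring,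
      Complex.norm_exp_ofReal_mul_I, one_mul]
  · exact hi.norm
  · refine Filter.Eventually.of_forall fun ξ => ?_
    fun_prop

lemma ofReal_int_le {α : Type*} [MeasurableSpace α] (m : Measure α) (f : α → ℝ) (hf : ∀ x, 0 ≤ f x) :
    ENNReal.ofReal (∫ x, f x ∂m) ≤ ∫⁻ x, ENNReal.ofReal (f x) ∂m := by
  have h := enorm_integral_le_lintegral_enorm (μ := m) f
  rw [Real.enorm_of_nonneg (integral_nonneg hf)] at h
  refine h.trans (le_of_eq (lintegral_congr fun x => Real.enorm_of_nonneg (hf x)))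

lemma final_comb {d : ℕ} {κ C c q r l : ℝ} (hκ : 0 < κ) (hC0 : 0 ≤ C) (hc : 0 < c) (hq0 : 0 < q) (hr0 : 0 < r)
    (hl : 0 < l) (hn : ((d - 1 : ℕ) : ℝ) = (d:ℝ) - 1)
    (G : ℝ → ℝ → EuclideanSpace ℝ (Fin (d-1)) → ℂ)
    (hcont : ∀ t, Continuous (fun p : ℝ × EuclideanSpace ℝ (Fin (d-1)) => G t p.1 p.2))
    (h : EuclideanSpace ℝ (Fin (d-1)) → ℂ) (En : ℝ)
    (hen : c * l^(1 - 1/κ) * ∫ ξ, ‖h ξ‖^2 ≤ En)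
    (hup : ∫⁻ t in Set.Icc (0:ℝ) 1, (∫⁻ x : ℝ × EuclideanSpace ℝ (Fin (d-1)), ‖G t x.1 x.2‖ₑ^r
        ∂((volume.restrict (Set.Ioi 0)).prod volume))^(q/r) ≤
      ENNReal.ofReal ((C * l^(-(2/r) + 3*((d-1 : ℕ):ℝ)/4*(1-2/r)) * ∫ ξ, ‖h ξ‖^2)^(q/2))) :
    (∫ t in Set.Icc (0 : ℝ) 1,
            ((∫ xd in Set.Ioi (0 : ℝ), ∫ x' : EuclideanSpace ℝ (Fin (d - 1)),
              ‖G t xd x'‖ ^ r) ^ (1 / r)) ^ q) ^ (1 / q)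
          ≤ (√(C/c) + 1) * l ^ ((3 * (d : ℝ) + 1) / 4 * (1 / 2 - 1 / r) + 1 / (2 * κ) - 1) * √En := by
  have hI0 : 0 ≤ ∫ ξ, ‖h ξ‖^2 := integral_nonneg fun _ => by positivity
  obtain ⟨I, hI⟩ : ∃ I, I = ∫ ξ, ‖h ξ‖^2 := ⟨_, rfl⟩
  rw [← hI] at hen hup hI0
  have hX0 : 0 ≤ C * l^(-(2/r) + 3*((d-1 : ℕ):ℝ)/4*(1-2/r)) * I := by positivity
  have hF0 : ∀ t, 0 ≤ ∫ xd in Set.Ioi (0 : ℝ), ∫ x' : EuclideanSpace ℝ (Fin (d - 1)), ‖G t xd x'‖ ^ r := fun t =>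
    integral_nonneg fun _ => integral_nonneg fun _ => by positivity
  have hF : ∀ t, ENNReal.ofReal (∫ xd in Set.Ioi (0 : ℝ), ∫ x' : EuclideanSpace ℝ (Fin (d - 1)), ‖G t xd x'‖ ^ r) ≤
      ∫⁻ x : ℝ × EuclideanSpace ℝ (Fin (d-1)), ‖G t x.1 x.2‖ₑ^r ∂((volume.restrict (Set.Ioi 0)).prod volume) := by
    intro t
    rw [lintegral_prod _ (by
      apply Measurable.aemeasurable
      exact ((hcont t).measurable.enorm).pow_const r)]
    refine (ofReal_int_le _ _ fun x => integral_nonneg fun _ => by positivity).trans ?_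
    refine lintegral_mono fun x => ?_
    refine (ofReal_int_le _ _ fun x => by positivity).trans ?_
    refine lintegral_mono fun y => ?_
    rw [← ENNReal.ofReal_rpow_of_nonneg (norm_nonneg _) hr0.le, ofReal_norm]
  have h1 : ENNReal.ofReal (∫ t in Set.Icc (0 : ℝ) 1,
            ((∫ xd in Set.Ioi (0 : ℝ), ∫ x' : EuclideanSpace ℝ (Fin (d - 1)),
              ‖G t xd x'‖ ^ r) ^ (1 / r)) ^ q) ≤
      ENNReal.ofReal ((C * l^(-(2/r) + 3*((d-1 : ℕ):ℝ)/4*(1-2/r)) * I)^(q/2)) := by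
    refine (ofReal_int_le _ _ fun t => Real.rpow_nonneg (Real.rpow_nonneg (hF0 t) _) _).trans (le_trans ?_ hup)
    refine lintegral_mono fun t => ?_
    rw [← Real.rpow_mul (hF0 t), show 1/r*q = q/r by ring, ← ENNReal.ofReal_rpow_of_nonneg (hF0 t) (by positivity)]
    exact ENNReal.rpow_le_rpow (hF t) (by positivity)
  rw [ENNReal.ofReal_le_ofReal_iff (Real.rpow_nonneg hX0 _)] at h1
  have hJ0 : 0 ≤ ∫ t in Set.Icc (0 : ℝ) 1,
            ((∫ xd in Set.Ioi (0 : ℝ), ∫ x' : EuclideanSpace ℝ (Fin (d - 1)),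
              ‖G t xd x'‖ ^ r) ^ (1 / r)) ^ q :=
    integral_nonneg fun t => Real.rpow_nonneg (Real.rpow_nonneg (hF0 t) _) _
  have h2 := Real.rpow_le_rpow hJ0 h1 (by positivity : 0 ≤ 1/q)
  refine h2.trans ?_
  rw [← Real.rpow_mul hX0, show q/2*(1/q) = 1/2 by field_simp, ← Real.sqrt_eq_rpow]
  have hp : 0 < l^(1 - 1/κ) := by positivity
  have hI1 : I ≤ En / (c * l^(1-1/κ)) := by
    rw [le_div_iff₀ (by positivity)]; linarith
  have hEn : 0 ≤ En := le_trans (by positivity) hen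
  calc √(C * l^(-(2/r) + 3*((d-1 : ℕ):ℝ)/4*(1-2/r)) * I)
      ≤ √(C * l^(-(2/r) + 3*((d-1 : ℕ):ℝ)/4*(1-2/r)) * (En / (c * l^(1-1/κ)))) := by
        apply Real.sqrt_le_sqrt; gcongr
    _ = √((C/c) * (l ^ ((3 * (d : ℝ) + 1) / 4 * (1 / 2 - 1 / r) + 1 / (2 * κ) - 1))^2 * En) := by
        congr 1
        rw [← Real.rpow_natCast (l ^ _) 2, ← Real.rpow_mul hl.le]
        have : l^(-(2/r) + 3*((d-1 : ℕ):ℝ)/4*(1-2/r)) = l ^ (((3 * (d : ℝ) + 1) / 4 * (1 / 2 - 1 / r) + 1 / (2 * κ) - 1) * (2:ℕ)) * l^(1-1/κ) := by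
          rw [← Real.rpow_add hl, hn]
          congr 1
          push_cast
          field_simp
          ring
        rw [this]
        field_simp
    _ = √(C/c) * l ^ ((3 * (d : ℝ) + 1) / 4 * (1 / 2 - 1 / r) + 1 / (2 * κ) - 1) * √En := by
        rw [Real.sqrt_mul (by positivity), Real.sqrt_mul (by positivity), Real.sqrt_sq (by positivity)]
    _ ≤ _ := by gcongr; linarith

/-- Strichartz estimates for whispering gallery modes,
`‖u‖_{L^q([0,1];L^r(Ω))} ≲ (2^{2j})^{((3d+1)/4)(1/2−1/r)+1/(2κ)−1}‖(0,∇ₓu₀)‖_ℋ`. -/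
theorem stmt15 {d : ℕ} (hd : 2 ≤ d) (κ μ : ℝ) (hκ : 0 < κ) (hμ : 0 < μ)
    (b : ℝ → ℝ) (hb : ContDiff ℝ (⊤ : ℕ∞) b) (hb0 : 0 < b 0)
    (hODE : ∀ y : ℝ, 0 < y →
      κ * y * deriv (deriv b) y + deriv b y + (μ - κ * y) * b y = 0)
    (hbdec : ∀ N k : ℕ, ∃ C : ℝ, ∀ y : ℝ, 0 ≤ y →
      (1 + y) ^ N * |iteratedDeriv k b y| ≤ C)
    (c₀ c₁ : ℝ) (hc₀ : 0 < c₀) (hc₀₁ : c₀ ≤ c₁)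
    (ψ : EuclideanSpace ℝ (Fin (d - 1)) → ℝ)
    (hψ : ContDiff ℝ (⊤ : ℕ∞) ψ) (hψc : HasCompactSupport ψ)
    (hsupp : tsupport ψ ⊆
      {η : EuclideanSpace ℝ (Fin (d - 1)) | c₀ ≤ ‖η‖ ∧ ‖η‖ ≤ c₁})
    (q r : ℝ) (hq : 2 < q) (hr : 2 ≤ r)
    (hqr : 1 / q = (((d : ℝ) - 1) / 2) * (1 / 2 - 1 / r)) :
    ∃ C : ℝ, 0 < C ∧
      ∀ j : ℕ, ∀ φ₀ : SchwartzMap (EuclideanSpace ℝ (Fin (d - 1))) ℂ,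
        (∫ t in Set.Icc (0 : ℝ) 1,
            ((∫ xd in Set.Ioi (0 : ℝ), ∫ x' : EuclideanSpace ℝ (Fin (d - 1)),
              ‖gw d μ b ψ j (fun x => φ₀ x) t xd x'‖ ^ r) ^ (1 / r)) ^ q) ^ (1 / q)
          ≤ C * ((2 : ℝ) ^ (2 * j)) ^
                ((3 * (d : ℝ) + 1) / 4 * (1 / 2 - 1 / r) + 1 / (2 * κ) - 1) *
              Real.sqrt (∫ xd in Set.Ioi (0 : ℝ),
                ∫ x' : EuclideanSpace ℝ (Fin (d - 1)),
                  xd ^ (1 / κ - 1) * (κ * xd *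
                    gradSq d (gw d μ b ψ j (fun x => φ₀ x) 0) xd x')) := by
  have hn : ((d - 1 : ℕ) : ℝ) = (d:ℝ) - 1 := by
    rw [Nat.cast_sub (by omega)]; simp
  have hr2 : 2 < r := by
    rcases hr.lt_or_eq with h | h
    · exact h
    · exfalso
      rw [← h] at hqr
      norm_num at hqr
      linarith
  have hq0 : 0 < q := by linarith
  have hr0 : 0 < r := by linarith
  have hbc := hb.continuous
  obtain ⟨C, hC0, hC⟩ := upper hb hbdec c₀ c₁ hc₀ hc₀₁ (d-1) μ hμ q r hq hr2 (by rw [hn]; exact hqr)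
  obtain ⟨c, hc, hce⟩ := energy_low hb hb0 hbdec c₀ c₁ hc₀ hc₀₁ (d-1) κ hκ
  refine ⟨√(C/c) + 1, by positivity, fun j φ₀ => ?_⟩
  have hl : 0 < (2:ℝ)^(2*j) := by positivity
  obtain ⟨h, hh⟩ : ∃ h : EuclideanSpace ℝ (Fin (d-1)) → ℂ, h = fun ξ => (((2 * π) ^ ((1 : ℤ) - (d : ℤ)) : ℝ) : ℂ) *
    ((ψ (((2 : ℝ) ^ (2 * j))⁻¹ • ξ) : ℂ) * fhat (fun x => φ₀ x) ξ) := ⟨_, rfl⟩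
  have hgw : ∀ t x y, gw d μ b ψ j (fun x => φ₀ x) t x y = ∫ ξ, Complex.exp (Complex.I * (⟪y, ξ⟫ : ℝ)) * (b (‖ξ‖ * x) : ℂ) *
        (Real.cos (t * Real.sqrt μ * Real.sqrt ‖ξ‖) : ℂ) * h ξ := by
    intro t x y
    rw [gw, ← integral_const_mul]
    congr 1
    funext ξ
    rw [hh]; ring
  generalize (2:ℝ)^(2*j) = l at *
  have hfc : Continuous (fhat (fun x => φ₀ x)) := fhat_cont _ φ₀.continuous φ₀.integrable
  have hhc : Continuous h := by
    have := hψ.continuous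
    rw [hh]; fun_prop
  have hhs : ∀ ξ, h ξ ≠ 0 → c₀ * l ≤ ‖ξ‖ ∧ ‖ξ‖ ≤ c₁ * l := by
    intro ξ hξ
    have h1 : ψ (l⁻¹ • ξ) ≠ 0 := by
      intro h0; apply hξ; rw [hh]; simp [h0]
    have h2 := hsupp (subset_tsupport _ h1)
    have h3 : ‖l⁻¹ • ξ‖ = ‖ξ‖ / l := by
      rw [norm_smul, norm_inv, Real.norm_of_nonneg hl.le]; field_simp
    have h4 : c₀ ≤ ‖l⁻¹ • ξ‖ ∧ ‖l⁻¹ • ξ‖ ≤ c₁ := h2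
    rw [h3, le_div_iff₀ hl, div_le_iff₀ hl] at h4
    exact h4
  have hen := hce l hl h hhc hhs (gw d μ b ψ j (fun x => φ₀ x) 0) (by
    funext x y
    rw [hgw]
    congr 1
    funext ξ
    simp
    ring)
  have hup := hC l hl h hhc hhs
  have hcont : ∀ t, Continuous (fun p : ℝ × EuclideanSpace ℝ (Fin (d-1)) => gw d μ b ψ j (fun x => φ₀ x) t p.1 p.2) := by
    intro t
    have h1 : ∀ p : ℝ × EuclideanSpace ℝ (Fin (d-1)), gw d μ b ψ j (fun x => φ₀ x) t p.1 p.2 =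
        ∫ ξ in Metric.closedBall 0 (c₁*l), Complex.exp (Complex.I * (⟪p.2, ξ⟫ : ℝ)) * (b (‖ξ‖ * p.1) : ℂ) *
        (Real.cos (t * Real.sqrt μ * Real.sqrt ‖ξ‖) : ℂ) * h ξ := by
      intro p
      rw [hgw, setIntegral_eq_integral_of_forall_compl_eq_zero]
      intro ξ hξ
      have : h ξ = 0 := by
        by_contra hne
        exact hξ (by rw [mem_closedBall_zero_iff]; exact (hhs ξ hne).2)
      rw [this]; simp
    rw [funext h1]
    apply continuous_parametric_integral_of_continuous _ (isCompact_closedBall _ _)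
    simp only [Function.uncurry_def]
    fun_prop
  simp only [← hgw] at hup
  simp only [gradSq]
  generalize gw d μ b ψ j (fun x => φ₀ x) = G at *
  exact final_comb hκ hC0 hc hq0 hr0 hl hn G hcont h _ hen hup

end
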